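/- Let Γ be a loopless 3-edge connected metric graph with canonical model (G₀, l₀). Then the following are equivalent: (A) |V(G₀)| ∈ {2,3}, or Γ is trigonal (there exists a non-degenerate harmonic morphism of degree 3 from a tropical modification of Γ to a metric tree); (B) Γ is divisorially trigonal. Moreover, in case (A) with |V(G₀)| > 3, the tropical modification may be taken to be Γ itself, i.e. Γ is strictly trigonal. -/

import Mathlib

open scoped Classical

/-!
Combinatorial models of metric graphs: a finite (multi-)graph together with a
positive length for each edge.  A metric graph is determined by such a model;
its canonical model is the (unique) model with all valences at least `3`.
-/

structure MetricGraphModel : Type 1 where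
  V : Type
  E : Type
  fV : Fintype V
  fE : Fintype E
  dV : DecidableEq V
  dE : DecidableEq E
  src : E → V
  tgt : E → V
  len : E → ℝ
  len_pos : ∀ e, 0 < len e

attribute [instance] MetricGraphModel.fV MetricGraphModel.fE
attribute [instance] MetricGraphModel.dV MetricGraphModel.dE

namespace MetricGraphModel

/-- An edge is incident to a vertex. -/
def Incident (Γ : MetricGraphModel) (e : Γ.E) (v : Γ.V) : Prop :=
  Γ.src e = v ∨ Γ.tgt e = v

/-- Incidence multiplicity (a loop counts twice). -/
def incid (Γ : MetricGraphModel) (e : Γ.E) (v : Γ.V) : ℕ :=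
  (if Γ.src e = v then 1 else 0) + (if Γ.tgt e = v then 1 else 0)

/-- The valence of a vertex. -/
def valence (Γ : MetricGraphModel) (v : Γ.V) : ℕ := ∑ e : Γ.E, Γ.incid e v

def dSrc (Γ : MetricGraphModel) (x : Γ.E × Bool) : Γ.V :=
  if x.2 then Γ.src x.1 else Γ.tgt x.1

def dTgt (Γ : MetricGraphModel) (x : Γ.E × Bool) : Γ.V :=
  if x.2 then Γ.tgt x.1 else Γ.src x.1

/-- Walks, given as lists of oriented edges. -/
def IsWalk (Γ : MetricGraphModel) : List (Γ.E × Bool) → Γ.V → Γ.V → Prop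
  | [], u, v => u = v
  | x :: xs, u, v => Γ.dSrc x = u ∧ IsWalk Γ xs (Γ.dTgt x) v

def Connected (Γ : MetricGraphModel) : Prop :=
  Nonempty Γ.V ∧ ∀ u v : Γ.V, ∃ L, IsWalk Γ L u v

/-- Removing any set of at most `2` edges leaves the graph connected. -/
def ThreeEdgeConnected (Γ : MetricGraphModel) : Prop :=
  ∀ S : Finset Γ.E, S.card ≤ 2 → ∀ u v : Γ.V,
    ∃ L, IsWalk Γ L u v ∧ ∀ x ∈ L, x.1 ∉ S

def Loopless (Γ : MetricGraphModel) : Prop := ∀ e : Γ.E, Γ.src e ≠ Γ.tgt e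

/-- A canonical model: connected, with all valences at least `3`. -/
def IsCanonical (Γ : MetricGraphModel) : Prop :=
  Γ.Connected ∧ ∀ v : Γ.V, 3 ≤ Γ.valence v

/-- A (model of a) metric tree. -/
def IsTreeModel (Γ : MetricGraphModel) : Prop :=
  Γ.Connected ∧ Fintype.card Γ.E + 1 = Fintype.card Γ.V

/-- Points of the associated metric graph: vertices together with interior
points of edges (parametrised by their distance from the source). -/
abbrev Pt (Γ : MetricGraphModel) : Type :=
  Γ.V ⊕ Σ e : Γ.E, {t : ℝ // 0 < t ∧ t < Γ.len e}

end MetricGraphModel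

open MetricGraphModel

/-- The (canonical) loopless model: insert a vertex at the midpoint of every loop. -/
noncomputable def looplessModel (Γ : MetricGraphModel) : MetricGraphModel where
  V := Γ.V ⊕ {e : Γ.E // Γ.src e = Γ.tgt e}
  E := {e : Γ.E // Γ.src e ≠ Γ.tgt e} ⊕ ({e : Γ.E // Γ.src e = Γ.tgt e} × Bool)
  fV := inferInstance
  fE := inferInstance
  dV := inferInstance
  dE := inferInstance
  src := fun x => match x with
    | Sum.inl e => Sum.inl (Γ.src e.1)
    | Sum.inr p => Sum.inl (Γ.src p.1.1)
  tgt := fun x => match x with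
    | Sum.inl e => Sum.inl (Γ.tgt e.1)
    | Sum.inr p => Sum.inr p.1
  len := fun x => match x with
    | Sum.inl e => Γ.len e.1
    | Sum.inr p => Γ.len p.1.1 / 2
  len_pos := by
    rintro (e | p)
    · exact Γ.len_pos e.1
    · have h := Γ.len_pos p.1.1
      show 0 < Γ.len p.1.1 / 2
      linarith

/-- The metric subgraph obtained by removing all loops. -/
noncomputable def deloop (Γ : MetricGraphModel) : MetricGraphModel where
  V := Γ.V
  E := {e : Γ.E // Γ.src e ≠ Γ.tgt e}
  fV := inferInstance
  fE := inferInstance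
  dV := inferInstance
  dE := inferInstance
  src := fun e => Γ.src e.1
  tgt := fun e => Γ.tgt e.1
  len := fun e => Γ.len e.1
  len_pos := fun e => Γ.len_pos e.1

namespace MetricGraphModel

/-! ### Divisors and rational functions -/

abbrev Divisor (Γ : MetricGraphModel) : Type := Γ.Pt → ℤ

noncomputable def divDegree {Γ : MetricGraphModel} (D : Divisor Γ) : ℤ := finsum D

def DivEffective {Γ : MetricGraphModel} (D : Divisor Γ) : Prop := ∀ p, 0 ≤ D p

def DivFinSupp {Γ : MetricGraphModel} (D : Divisor Γ) : Prop :=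
  (Function.support D).Finite

noncomputable def unitDiv (Γ : MetricGraphModel) (p : Γ.Pt) : Divisor Γ :=
  fun q => if q = p then 1 else 0

/-- `f` is continuous piecewise linear with integer slopes on `[0, L]`. -/
def PLInt (f : ℝ → ℝ) (L : ℝ) : Prop :=
  ∃ n : ℕ, ∃ t : Fin (n + 1) → ℝ, t 0 = 0 ∧ t (Fin.last n) = L ∧ StrictMono t ∧
    ∀ i : Fin n, ∃ m : ℤ, ∀ s ∈ Set.Icc (t i.castSucc) (t i.succ),
      f s = f (t i.castSucc) + (m : ℝ) * (s - t i.castSucc)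

/-- The (integer) outgoing slope of `f` to the right of `t0`. -/
noncomputable def slopeR (f : ℝ → ℝ) (t0 : ℝ) : ℤ :=
  if h : ∃ m : ℤ, ∃ ε : ℝ, 0 < ε ∧ ∀ s ∈ Set.Icc t0 (t0 + ε),
      f s = f t0 + (m : ℝ) * (s - t0)
  then h.choose else 0

/-- The (integer) outgoing slope of `f` to the left of `t0`. -/
noncomputable def slopeL (f : ℝ → ℝ) (t0 : ℝ) : ℤ :=
  if h : ∃ m : ℤ, ∃ ε : ℝ, 0 < ε ∧ ∀ s ∈ Set.Icc (t0 - ε) t0,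
      f s = f t0 + (m : ℝ) * (t0 - s)
  then h.choose else 0

/-- A rational function: continuous, piecewise linear with integer slopes. -/
structure RationalFunction (Γ : MetricGraphModel) where
  vVal : Γ.V → ℝ
  eFun : Γ.E → ℝ → ℝ
  pl : ∀ e, PLInt (eFun e) (Γ.len e)
  srcVal : ∀ e, eFun e 0 = vVal (Γ.src e)
  tgtVal : ∀ e, eFun e (Γ.len e) = vVal (Γ.tgt e)

/-- The principal divisor of a rational function: the sum of the outgoing
slopes at every point. -/
noncomputable def ratDiv {Γ : MetricGraphModel} (f : RationalFunction Γ) : Divisor Γ :=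
  fun p => match p with
  | Sum.inl v => ∑ e : Γ.E,
      ((if Γ.src e = v then slopeR (f.eFun e) 0 else 0) +
       (if Γ.tgt e = v then slopeL (f.eFun e) (Γ.len e) else 0))
  | Sum.inr q => slopeR (f.eFun q.1) q.2.1 + slopeL (f.eFun q.1) q.2.1

/-- Evaluation of a rational function at a point of the metric graph. -/
def ratEval {Γ : MetricGraphModel} (f : RationalFunction Γ) : Γ.Pt → ℝ
  | Sum.inl v => f.vVal v
  | Sum.inr q => f.eFun q.1 q.2.1

/-- Linear equivalence of divisors. -/
def LinEquiv (Γ : MetricGraphModel) (D D' : Divisor Γ) : Prop :=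
  ∃ f : RationalFunction Γ, ∀ p, D p = D' p + ratDiv f p

/-- The Baker–Norine rank of `D` is at least `k`. -/
def RankGE (Γ : MetricGraphModel) (D : Divisor Γ) (k : ℕ) : Prop :=
  ∀ A : Divisor Γ, DivEffective A → DivFinSupp A → divDegree A = (k : ℤ) →
    ∃ B : Divisor Γ, DivEffective B ∧ DivFinSupp B ∧
      LinEquiv Γ (fun p => D p - A p) B

/-- `W¹₃(Γ) ≠ ∅`: some divisor of degree `3` has rank at least `1`. -/
def DivisoriallyTrigonal (Γ : MetricGraphModel) : Prop :=
  ∃ D : Divisor Γ, DivFinSupp D ∧ divDegree D = 3 ∧ RankGE Γ D 1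

end MetricGraphModel

/-! ### Harmonic morphisms of metric graphs -/

/-- An indexed morphism of metric graph models.  An edge is either mapped onto
an edge (with an integer stretching index `mu`) or contracted to a vertex. -/
structure MGMorphism (Γ Δ : MetricGraphModel) where
  vMap : Γ.V → Δ.V
  eMap : Γ.E → Δ.E ⊕ Δ.V
  mu : Γ.E → ℕ
  mu_zero : ∀ e, mu e = 0 ↔ ∃ v', eMap e = Sum.inr v'
  contract_ok : ∀ e v', eMap e = Sum.inr v' →
    vMap (Γ.src e) = v' ∧ vMap (Γ.tgt e) = v'
  edge_ok : ∀ e e', eMap e = Sum.inl e' →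
    ((vMap (Γ.src e) = Δ.src e' ∧ vMap (Γ.tgt e) = Δ.tgt e') ∨
     (vMap (Γ.src e) = Δ.tgt e' ∧ vMap (Γ.tgt e) = Δ.src e'))
  len_ok : ∀ e e', eMap e = Sum.inl e' → (mu e : ℝ) * Γ.len e = Δ.len e'

namespace MGMorphism

variable {Γ Δ : MetricGraphModel}

/-- The local sum `m_φ(v)` computed along a fixed edge `e'` at `φ(v)`. -/
noncomputable def locDeg (φ : MGMorphism Γ Δ) (v : Γ.V) (e' : Δ.E) : ℕ :=
  ∑ e : Γ.E, if φ.eMap e = Sum.inl e' then φ.mu e * Γ.incid e v else 0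

def Harmonic (φ : MGMorphism Γ Δ) : Prop :=
  ∀ (v : Γ.V) (e₁ e₂ : Δ.E),
    Δ.Incident e₁ (φ.vMap v) → Δ.Incident e₂ (φ.vMap v) →
      locDeg φ v e₁ = locDeg φ v e₂

def Nondegenerate (φ : MGMorphism Γ Δ) : Prop :=
  ∀ v : Γ.V, ∃ e' : Δ.E, Δ.Incident e' (φ.vMap v) ∧ 1 ≤ locDeg φ v e'

def HasDegree (φ : MGMorphism Γ Δ) (d : ℕ) : Prop :=
  ∀ e' : Δ.E, (∑ e : Γ.E, if φ.eMap e = Sum.inl e' then φ.mu e else 0) = d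

/-- The horizontal multiplicity `m_φ(v)` at a vertex. -/
noncomputable def mVal (φ : MGMorphism Γ Δ) (v : Γ.V) : ℕ :=
  (Finset.univ.filter fun e' : Δ.E => Δ.Incident e' (φ.vMap v)).sup (locDeg φ v)

end MGMorphism

/-! ### Isomorphisms, subdivisions and tropical modifications -/

def sameEndsMap (Γ Δ : MetricGraphModel) (f : Γ.V → Δ.V) (e : Γ.E) (e' : Δ.E) : Prop :=
  (f (Γ.src e) = Δ.src e' ∧ f (Γ.tgt e) = Δ.tgt e') ∨
  (f (Γ.src e) = Δ.tgt e' ∧ f (Γ.tgt e) = Δ.src e')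

structure MGMIso (Γ Δ : MetricGraphModel) where
  vEquiv : Γ.V ≃ Δ.V
  eEquiv : Γ.E ≃ Δ.E
  ends : ∀ e, sameEndsMap Γ Δ (fun v => vEquiv v) e (eEquiv e)
  len_eq : ∀ e, Δ.len (eEquiv e) = Γ.len e

/-- Deletion of a leaf (a valence-one vertex together with its edge). -/
def LeafDeletion (Δ Δ' : MetricGraphModel) : Prop :=
  ∃ (v₀ : Δ.V) (e₀ : Δ.E), Δ.valence v₀ = 1 ∧ Δ.Incident e₀ v₀ ∧
    ∃ (fv : Δ'.V ≃ {v : Δ.V // v ≠ v₀}) (fe : Δ'.E ≃ {e : Δ.E // e ≠ e₀}),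
      (∀ e : Δ'.E, sameEndsMap Δ' Δ (fun v => (fv v).1) e (fe e).1) ∧
      ∀ e : Δ'.E, Δ.len (fe e).1 = Δ'.len e

/-- Suppression of a valence-two vertex, merging its two edges and adding
their lengths. -/
def SeriesReduction (Δ Δ' : MetricGraphModel) : Prop :=
  ∃ (v₀ : Δ.V) (e₁ e₂ : Δ.E) (u₁ u₂ : Δ.V),
    e₁ ≠ e₂ ∧ Δ.valence v₀ = 2 ∧ u₁ ≠ v₀ ∧ u₂ ≠ v₀ ∧
    ({Δ.src e₁, Δ.tgt e₁} : Set Δ.V) = {v₀, u₁} ∧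
    ({Δ.src e₂, Δ.tgt e₂} : Set Δ.V) = {v₀, u₂} ∧
    ∃ (fv : Δ'.V ≃ {v : Δ.V // v ≠ v₀}) (ebar : Δ'.E)
      (fe : {e : Δ'.E // e ≠ ebar} ≃ {e : Δ.E // e ≠ e₁ ∧ e ≠ e₂}),
      Δ'.len ebar = Δ.len e₁ + Δ.len e₂ ∧
      ({(fv (Δ'.src ebar)).1, (fv (Δ'.tgt ebar)).1} : Set Δ.V) = {u₁, u₂} ∧
      (∀ e : {e : Δ'.E // e ≠ ebar},
        sameEndsMap Δ' Δ (fun v => (fv v).1) e.1 (fe e).1) ∧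
      ∀ e : {e : Δ'.E // e ≠ ebar}, Δ.len (fe e).1 = Δ'.len e.1

def ReductionStep (Δ Δ' : MetricGraphModel) : Prop :=
  LeafDeletion Δ Δ' ∨ SeriesReduction Δ Δ' ∨ Nonempty (MGMIso Δ Δ')

/-- `Δ` reduces to `Γ` by deleting leaves and suppressing valence-two
vertices.  When `Γ` is a canonical model, this says exactly that the metric
graph of `Δ` is a tropical modification of the metric graph of `Γ`. -/
def Reduces (Δ Γ : MetricGraphModel) : Prop :=
  Relation.ReflTransGen ReductionStep Δ Γ

def IsTropicalModificationOf (Δ Γ : MetricGraphModel) : Prop := Reduces Δ Γ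

def ModelStep (Δ Δ' : MetricGraphModel) : Prop :=
  SeriesReduction Δ Δ' ∨ Nonempty (MGMIso Δ Δ')

/-- `Δ` and `Γ` are models of the same metric graph (no trees added). -/
def SameMetricGraph (Δ Γ : MetricGraphModel) : Prop :=
  Relation.ReflTransGen ModelStep Δ Γ

/-- `Γ` is trigonal: a tropical modification of `Γ` admits a non-degenerate
harmonic morphism of degree `3` onto a metric tree. -/
def Trigonal (Γ : MetricGraphModel) : Prop :=
  ∃ Δ T : MetricGraphModel, IsTropicalModificationOf Δ Γ ∧ T.IsTreeModel ∧
    ∃ φ : MGMorphism Δ T,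
      MGMorphism.Harmonic φ ∧ MGMorphism.Nondegenerate φ ∧ MGMorphism.HasDegree φ 3

/-- `Γ` is strictly trigonal: `Γ` itself (i.e. some model of the same metric
graph) admits a non-degenerate harmonic morphism of degree `3` onto a metric
tree. -/
def StrictlyTrigonal (Γ : MetricGraphModel) : Prop :=
  ∃ Δ T : MetricGraphModel, SameMetricGraph Δ Γ ∧ T.IsTreeModel ∧
    ∃ φ : MGMorphism Δ T,
      MGMorphism.Harmonic φ ∧ MGMorphism.Nondegenerate φ ∧ MGMorphism.HasDegree φ 3

/-! ### Embeddings up to subdivision (for tropical modifications of morphisms) -/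

structure SubEmbed (G Δ : MetricGraphModel) where
  v : G.V → Δ.V
  inj : Function.Injective v
  path : G.E → List (Δ.E × Bool)
  ne : ∀ e, path e ≠ []
  walk : ∀ e, MetricGraphModel.IsWalk Δ (path e) (v (G.src e)) (v (G.tgt e))
  len_sum : ∀ e, ((path e).map fun x => Δ.len x.1).sum = G.len e

/-! ### Pullback of points along a harmonic morphism -/

/-- `φ` maps the point `p` of `Γ` to the point `t` of `Δ`. -/
def MapsToPt {Γ Δ : MetricGraphModel} (φ : MGMorphism Γ Δ) : Γ.Pt → Δ.Pt → Prop
  | Sum.inl v, Sum.inl t => φ.vMap v = t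
  | Sum.inl _, Sum.inr _ => False
  | Sum.inr q, Sum.inl t => φ.eMap q.1 = Sum.inr t
  | Sum.inr q, Sum.inr r =>
      φ.eMap q.1 = Sum.inl r.1 ∧
      ((φ.vMap (Γ.src q.1) = Δ.src r.1 ∧ (r.2.1 : ℝ) = (φ.mu q.1 : ℝ) * (q.2.1 : ℝ)) ∨
       (φ.vMap (Γ.src q.1) = Δ.tgt r.1 ∧
         (r.2.1 : ℝ) = Δ.len r.1 - (φ.mu q.1 : ℝ) * (q.2.1 : ℝ)))

/-- Horizontal multiplicity of a point. -/
noncomputable def hmult {Γ Δ : MetricGraphModel} (φ : MGMorphism Γ Δ) : Γ.Pt → ℕ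
  | Sum.inl v => MGMorphism.mVal φ v
  | Sum.inr q => φ.mu q.1

/-- The pullback divisor `φ*(t)` of a point `t`. -/
noncomputable def pullbackDiv {Γ Δ : MetricGraphModel} (φ : MGMorphism Γ Δ)
    (t : Δ.Pt) : MetricGraphModel.Divisor Γ :=
  fun p => if MapsToPt φ p t then (hmult φ p : ℤ) else 0

/-! ### Points on edges, admissible representatives, consecutive divisors -/

open MetricGraphModel

/-- `p` is an interior point of the edge `e`. -/
def interiorOf (Γ : MetricGraphModel) (e : Γ.E) (p : Γ.Pt) : Prop :=
  ∃ q : {t : ℝ // 0 < t ∧ t < Γ.len e}, p = Sum.inr ⟨e, q⟩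

def SameEdgeInterior (Γ : MetricGraphModel) (p q : Γ.Pt) : Prop :=
  ∃ e : Γ.E, interiorOf Γ e p ∧ interiorOf Γ e q

/-- `Dx` is the admissible representative of `D` with respect to the vertex
`x`: it is linearly equivalent to `D`, of the form `x + x₁ + x₂`, and `x₁, x₂`
do not both lie in the interior of one edge. -/
def AdmissibleRep (Γ : MetricGraphModel) (D : Divisor Γ) (x : Γ.V)
    (Dx : Divisor Γ) : Prop :=
  LinEquiv Γ D Dx ∧
  ∃ p q : Γ.Pt,
    Dx = (fun z => unitDiv Γ (Sum.inl x) z + unitDiv Γ p z + unitDiv Γ q z) ∧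
    ¬ SameEdgeInterior Γ p q

/-- `p` lies on the (closed) edge `e` at distance `s` from its source. -/
def LiesOn (Γ : MetricGraphModel) (e : Γ.E) (p : Γ.Pt) (s : ℝ) : Prop :=
  (p = Sum.inl (Γ.src e) ∧ s = 0) ∨ (p = Sum.inl (Γ.tgt e) ∧ s = Γ.len e) ∨
  (∃ h : 0 < s ∧ s < Γ.len e, p = Sum.inr ⟨e, ⟨s, h⟩⟩)

/-- Vertices of the refinement `G_D`: vertices of `G₀` together with all
support points of admissible representatives of `D`. -/
def SpecialPt (Γ : MetricGraphModel) (D : Divisor Γ) (p : Γ.Pt) : Prop :=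
  (∃ v : Γ.V, p = Sum.inl v) ∨
  ∃ (x : Γ.V) (Dx : Divisor Γ), AdmissibleRep Γ D x Dx ∧ Dx p ≠ 0

/-- An edge of the refinement `G_D` joining the supports of `Dx` and `Dy`:
a segment of an edge of `Γ` between a point of `Supp Dx` and a point of
`Supp Dy` containing no vertex of `G_D` in its interior. -/
def ConnSeg (Γ : MetricGraphModel) (D Dx Dy : Divisor Γ) (e : Γ.E) (s t : ℝ) : Prop :=
  s < t ∧ ∃ p q : Γ.Pt, LiesOn Γ e p s ∧ LiesOn Γ e q t ∧
    ((Dx p ≠ 0 ∧ Dy q ≠ 0) ∨ (Dy p ≠ 0 ∧ Dx q ≠ 0)) ∧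
    ∀ r, s < r → r < t → ∀ z, LiesOn Γ e z r → ¬ SpecialPt Γ D z

/-- Two admissible representatives are consecutive. -/
def Consecutive (Γ : MetricGraphModel) (D Dx Dy : Divisor Γ) : Prop :=
  Dx ≠ Dy ∧ ∃ e s t, ConnSeg Γ D Dx Dy e s t

/-- The open segment of `e` between parameters `s` and `t`, as a set of points. -/
def segSet (Γ : MetricGraphModel) (e : Γ.E) (s t : ℝ) : Set Γ.Pt :=
  {z | ∃ r, s < r ∧ r < t ∧ LiesOn Γ e z r}

/-- Two points can be joined inside one edge avoiding the removed set `R`. -/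
def AvoidAdj (Γ : MetricGraphModel) (R : Set Γ.Pt) (p q : Γ.Pt) : Prop :=
  ∃ (e : Γ.E) (s t : ℝ), s ≤ t ∧
    ((LiesOn Γ e p s ∧ LiesOn Γ e q t) ∨ (LiesOn Γ e q s ∧ LiesOn Γ e p t)) ∧
    ∀ r, s < r → r < t → ∀ z, LiesOn Γ e z r → z ∉ R

/-- The complement of `R` in the metric graph is connected. -/
def ComplementConnected (Γ : MetricGraphModel) (R : Set Γ.Pt) : Prop :=
  ∀ p q : Γ.Pt, p ∉ R → q ∉ R →
    Relation.ReflTransGen (fun a b => a ∉ R ∧ b ∉ R ∧ AvoidAdj Γ R a b) p q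

/-! ### Minimizing/maximizing sets of a rational function -/

def minSet {Γ : MetricGraphModel} (f : RationalFunction Γ) : Set Γ.Pt :=
  {p | ∀ q, ratEval f p ≤ ratEval f q}

def maxSet {Γ : MetricGraphModel} (f : RationalFunction Γ) : Set Γ.Pt :=
  {p | ∀ q, ratEval f q ≤ ratEval f p}

/-- `p` is a boundary point of `A`: it belongs to `A` and there are points of
the complement arbitrarily close to it along some edge. -/
def InBoundary (Γ : MetricGraphModel) (A : Set Γ.Pt) (p : Γ.Pt) : Prop :=
  p ∈ A ∧ ∃ (e : Γ.E) (s : ℝ), LiesOn Γ e p s ∧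
    ∀ ε : ℝ, 0 < ε → ∃ r z, |r - s| < ε ∧ LiesOn Γ e z r ∧ z ∉ A

/-- There is an edge leaving `A` at `p`, in the direction of `e` at parameter
`s` (increasing if `b = true`, decreasing if `b = false`). -/
def ExitsAt (Γ : MetricGraphModel) (A : Set Γ.Pt) (p : Γ.Pt) (e : Γ.E)
    (s : ℝ) (b : Bool) : Prop :=
  LiesOn Γ e p s ∧
  (b = true → ∃ ε : ℝ, 0 < ε ∧ s + ε ≤ Γ.len e ∧
    ∀ r, s < r → r < s + ε → ∀ z, LiesOn Γ e z r → z ∉ A) ∧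
  (b = false → ∃ ε : ℝ, 0 < ε ∧ 0 ≤ s - ε ∧
    ∀ r, s - ε < r → r < s → ∀ z, LiesOn Γ e z r → z ∉ A)
/-! ## Part 1: one-sided slopes and a local description of `PLInt` -/

namespace Trig

/-- `f` is linear with outgoing slope `m` immediately to the right of `t`. -/
def HasR (f : ℝ → ℝ) (t : ℝ) (m : ℤ) : Prop :=
  ∃ ε : ℝ, 0 < ε ∧ ∀ s ∈ Set.Icc t (t + ε), f s = f t + (m : ℝ) * (s - t)

/-- `f` is linear with outgoing slope `m` immediately to the left of `t`. -/
def HasL (f : ℝ → ℝ) (t : ℝ) (m : ℤ) : Prop :=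
  ∃ ε : ℝ, 0 < ε ∧ ∀ s ∈ Set.Icc (t - ε) t, f s = f t + (m : ℝ) * (t - s)

lemma HasR.unique {f : ℝ → ℝ} {t : ℝ} {m n : ℤ} (h : HasR f t m) (h' : HasR f t n) : m = n := by
  obtain ⟨ε, hε, h⟩ := h
  obtain ⟨δ, hδ, h'⟩ := h'
  have hp : 0 < min ε δ := lt_min hε hδ
  have h1 := h (t + min ε δ) ⟨by linarith, by linarith [min_le_left ε δ]⟩
  have h2 := h' (t + min ε δ) ⟨by linarith, by linarith [min_le_right ε δ]⟩
  have h3 : ((m : ℝ) - n) * min ε δ = 0 := by linarith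
  rcases mul_eq_zero.mp h3 with h4 | h4
  · exact_mod_cast sub_eq_zero.mp h4
  · linarith

lemma HasL.unique {f : ℝ → ℝ} {t : ℝ} {m n : ℤ} (h : HasL f t m) (h' : HasL f t n) : m = n := by
  obtain ⟨ε, hε, h⟩ := h
  obtain ⟨δ, hδ, h'⟩ := h'
  have hp : 0 < min ε δ := lt_min hε hδ
  have h1 := h (t - min ε δ) ⟨by linarith [min_le_left ε δ], by linarith⟩
  have h2 := h' (t - min ε δ) ⟨by linarith [min_le_right ε δ], by linarith⟩
  have h3 : ((m : ℝ) - n) * min ε δ = 0 := by linarith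
  rcases mul_eq_zero.mp h3 with h4 | h4
  · exact_mod_cast sub_eq_zero.mp h4
  · linarith

lemma slopeR_eq {f : ℝ → ℝ} {t : ℝ} {m : ℤ} (h : HasR f t m) : slopeR f t = m := by
  have h0 : ∃ m : ℤ, HasR f t m := ⟨m, h⟩
  have : slopeR f t = h0.choose := by
    unfold slopeR
    exact dif_pos h0
  rw [this]
  exact h0.choose_spec.unique h

lemma slopeL_eq {f : ℝ → ℝ} {t : ℝ} {m : ℤ} (h : HasL f t m) : slopeL f t = m := by
  have h0 : ∃ m : ℤ, HasL f t m := ⟨m, h⟩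
  have : slopeL f t = h0.choose := by
    unfold slopeL
    exact dif_pos h0
  rw [this]
  exact h0.choose_spec.unique h

lemma HasR.congr {f g : ℝ → ℝ} {t b : ℝ} {m : ℤ} (h : HasR f t m) (hb : t < b)
    (hfg : ∀ s, t ≤ s → s ≤ b → g s = f s) : HasR g t m := by
  obtain ⟨ε, hε, h⟩ := h
  refine ⟨min ε (b - t), lt_min hε (by linarith), fun s hs => ?_⟩
  have h1 := min_le_left ε (b - t)
  have h2 := min_le_right ε (b - t)
  rw [hfg s hs.1 (by linarith [hs.2]), hfg t le_rfl hb.le]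
  exact h s ⟨hs.1, by linarith [hs.2]⟩

lemma HasL.congr {f g : ℝ → ℝ} {t a : ℝ} {m : ℤ} (h : HasL f t m) (ha : a < t)
    (hfg : ∀ s, a ≤ s → s ≤ t → g s = f s) : HasL g t m := by
  obtain ⟨ε, hε, h⟩ := h
  refine ⟨min ε (t - a), lt_min hε (by linarith), fun s hs => ?_⟩
  have h1 := min_le_left ε (t - a)
  have h2 := min_le_right ε (t - a)
  rw [hfg s (by linarith [hs.1]) hs.2, hfg t ha.le le_rfl]
  exact h s ⟨by linarith [hs.1], hs.2⟩

lemma HasR.add {f g : ℝ → ℝ} {t : ℝ} {m n : ℤ} (h : HasR f t m) (h' : HasR g t n) :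
    HasR (fun s => f s + g s) t (m + n) := by
  obtain ⟨ε, hε, h⟩ := h
  obtain ⟨δ, hδ, h'⟩ := h'
  refine ⟨min ε δ, lt_min hε hδ, fun s hs => ?_⟩
  have h1 := h s ⟨hs.1, by linarith [hs.2, min_le_left ε δ]⟩
  have h2 := h' s ⟨hs.1, by linarith [hs.2, min_le_right ε δ]⟩
  push_cast
  simp only [h1, h2]
  ring

lemma HasL.add {f g : ℝ → ℝ} {t : ℝ} {m n : ℤ} (h : HasL f t m) (h' : HasL g t n) :
    HasL (fun s => f s + g s) t (m + n) := by
  obtain ⟨ε, hε, h⟩ := h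
  obtain ⟨δ, hδ, h'⟩ := h'
  refine ⟨min ε δ, lt_min hε hδ, fun s hs => ?_⟩
  have h1 := h s ⟨by linarith [hs.1, min_le_left ε δ], hs.2⟩
  have h2 := h' s ⟨by linarith [hs.1, min_le_right ε δ], hs.2⟩
  push_cast
  simp only [h1, h2]
  ring

lemma HasR.neg {f : ℝ → ℝ} {t : ℝ} {m : ℤ} (h : HasR f t m) :
    HasR (fun s => - f s) t (-m) := by
  obtain ⟨ε, hε, h⟩ := h
  refine ⟨ε, hε, fun s hs => ?_⟩
  push_cast
  simp only [h s hs]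
  ring

lemma HasL.neg {f : ℝ → ℝ} {t : ℝ} {m : ℤ} (h : HasL f t m) :
    HasL (fun s => - f s) t (-m) := by
  obtain ⟨ε, hε, h⟩ := h
  refine ⟨ε, hε, fun s hs => ?_⟩
  push_cast
  simp only [h s hs]
  ring

lemma HasR.shift {f : ℝ → ℝ} {a t : ℝ} {m : ℤ} :
    HasR (fun s => f (a + s)) t m ↔ HasR f (a + t) m := by
  constructor
  · rintro ⟨ε, hε, h⟩
    refine ⟨ε, hε, fun s hs => ?_⟩
    have := h (s - a) ⟨by linarith [hs.1], by linarith [hs.2]⟩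
    simp only [add_sub_cancel] at this
    rw [this]; ring
  · rintro ⟨ε, hε, h⟩
    refine ⟨ε, hε, fun s hs => ?_⟩
    have := h (a + s) ⟨by linarith [hs.1], by linarith [hs.2]⟩
    simp only [this]; ring

lemma HasL.shift {f : ℝ → ℝ} {a t : ℝ} {m : ℤ} :
    HasL (fun s => f (a + s)) t m ↔ HasL f (a + t) m := by
  constructor
  · rintro ⟨ε, hε, h⟩
    refine ⟨ε, hε, fun s hs => ?_⟩
    have := h (s - a) ⟨by linarith [hs.1], by linarith [hs.2]⟩
    simp only [add_sub_cancel] at this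
    rw [this]; ring
  · rintro ⟨ε, hε, h⟩
    refine ⟨ε, hε, fun s hs => ?_⟩
    have := h (a + s) ⟨by linarith [hs.1], by linarith [hs.2]⟩
    simp only [this]; ring

lemma HasL.flip {f : ℝ → ℝ} {a t : ℝ} {m : ℤ} (h : HasL f (a - t) m) :
    HasR (fun s => f (a - s)) t m := by
  obtain ⟨ε, hε, h⟩ := h
  refine ⟨ε, hε, fun s hs => ?_⟩
  have := h (a - s) ⟨by linarith [hs.2], by linarith [hs.1]⟩
  simp only [this]; ring

lemma HasR.flip {f : ℝ → ℝ} {a t : ℝ} {m : ℤ} (h : HasR f (a - t) m) :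
    HasL (fun s => f (a - s)) t m := by
  obtain ⟨ε, hε, h⟩ := h
  refine ⟨ε, hε, fun s hs => ?_⟩
  have := h (a - s) ⟨by linarith [hs.2], by linarith [hs.1]⟩
  simp only [this]; ring

lemma hasR_linear (a : ℝ) (m : ℤ) (t : ℝ) : HasR (fun s => a + (m : ℝ) * s) t m :=
  ⟨1, one_pos, fun s _ => by ring⟩

lemma hasL_linear (a : ℝ) (m : ℤ) (t : ℝ) : HasL (fun s => a + (m : ℝ) * s) t (-m) :=
  ⟨1, one_pos, fun s _ => by push_cast; ring⟩

lemma hasR_const (a : ℝ) (t : ℝ) : HasR (fun _ => a) t 0 :=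
  ⟨1, one_pos, fun s _ => by push_cast; ring⟩

lemma hasL_const (a : ℝ) (t : ℝ) : HasL (fun _ => a) t 0 :=
  ⟨1, one_pos, fun s _ => by push_cast; ring⟩

/-- Linear functions stay on one side of a level for a short time. -/
lemma hasR_max {f : ℝ → ℝ} {t : ℝ} {m : ℤ} (c : ℝ) (h : HasR f t m) :
    HasR (fun s => max (f s) c) t (if c < f t then m else if f t < c then 0 else max m 0) := by
  obtain ⟨ε, hε, h⟩ := h
  have key : ∀ d : ℝ, 0 < d → ∃ η : ℝ, 0 < η ∧ η ≤ ε ∧ ∀ s ∈ Set.Icc t (t + η),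
      |(m : ℝ) * (s - t)| < d := by
    intro d hd
    have hm : 0 < |(m : ℝ)| + 1 := by positivity
    refine ⟨min ε (d / (|(m : ℝ)| + 1)), lt_min hε (by positivity), min_le_left _ _, ?_⟩
    intro s hs
    have h0 : 0 ≤ s - t := by linarith [hs.1]
    have h1 : s - t ≤ d / (|(m : ℝ)| + 1) := by
      linarith [hs.2, min_le_right ε (d / (|(m : ℝ)| + 1))]
    rw [le_div_iff₀ hm] at h1
    rw [abs_mul, abs_of_nonneg h0]
    rcases h0.eq_or_lt with h2 | h2
    · rw [← h2]; simpa using hd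
    · nlinarith
  split_ifs with h1 h2
  · obtain ⟨η, hη, hle, hk⟩ := key (f t - c) (by linarith)
    refine ⟨η, hη, fun s hs => ?_⟩
    have h3 := h s ⟨hs.1, by linarith [hs.2]⟩
    have h4 := abs_lt.mp (hk s hs)
    simp only
    rw [max_eq_left (by linarith), max_eq_left (by linarith), h3]
  · obtain ⟨η, hη, hle, hk⟩ := key (c - f t) (by linarith)
    refine ⟨η, hη, fun s hs => ?_⟩
    have h3 := h s ⟨hs.1, by linarith [hs.2]⟩
    have h4 := abs_lt.mp (hk s hs)
    simp only
    rw [max_eq_right (by linarith), max_eq_right (by linarith)]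
    simp
  · have h3 : f t = c := le_antisymm (not_lt.mp h1) (not_lt.mp h2)
    refine ⟨ε, hε, fun s hs => ?_⟩
    have h4 := h s hs
    have h5 : 0 ≤ s - t := by linarith [hs.1]
    simp only
    rw [h4, h3]
    push_cast
    rw [max_self]
    rcases le_total (m : ℝ) 0 with h6 | h6
    · rw [max_eq_right h6, max_eq_right (by nlinarith)]; ring
    · rw [max_eq_left h6, max_eq_left (by nlinarith)]

lemma hasL_max {f : ℝ → ℝ} {t : ℝ} {m : ℤ} (c : ℝ) (h : HasL f t m) :
    HasL (fun s => max (f s) c) t (if c < f t then m else if f t < c then 0 else max m 0) := by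
  have h1 : HasR (fun s => f (0 - s)) (-t) m := HasL.flip (by simpa using h)
  have h2 := hasR_max c h1
  have h3 : HasL (fun s => max (f (0 - (0 - s))) c) t _ :=
    HasR.flip (f := fun s => max (f (0 - s)) c) (a := 0) (t := t) (by simpa using h2)
  simpa using h3

/-- The ramp function. -/
lemma hasR_ramp (a t : ℝ) : HasR (fun s => max (s - a) 0) t (if a ≤ t then 1 else 0) := by
  have h := hasR_max 0 (hasR_linear (-a) 1 t)
  have e1 : (fun s => max (s - a) 0) = fun s => max (-a + ((1 : ℤ) : ℝ) * s) 0 := by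
    funext s; congr 1; push_cast; ring
  rw [e1]
  convert h using 1
  push_cast
  split_ifs <;> first | rfl | (exfalso; linarith)

lemma hasL_ramp (a t : ℝ) : HasL (fun s => max (s - a) 0) t (if a < t then -1 else 0) := by
  have h := hasL_max 0 (hasL_linear (-a) 1 t)
  have e1 : (fun s => max (s - a) 0) = fun s => max (-a + ((1 : ℤ) : ℝ) * s) 0 := by
    funext s; congr 1; push_cast; ring
  rw [e1]
  convert h using 1
  push_cast
  split_ifs <;> first | rfl | (exfalso; linarith)

/-- Induction over a real interval. -/
lemma real_ind (P : ℝ → Prop) {a b : ℝ} (hab : a ≤ b) (h0 : P a)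
    (step : ∀ x, a ≤ x → x < b → P x → ∃ y, x < y ∧ y ≤ b ∧ ∀ z, x < z → z ≤ y → P z)
    (lim : ∀ x, a < x → x ≤ b → (∀ y, a ≤ y → y < x → P y) → P x) :
    ∀ x, a ≤ x → x ≤ b → P x := by
  set S : Set ℝ := {x | a ≤ x ∧ x ≤ b ∧ ∀ y, a ≤ y → y ≤ x → P y} with hS
  have haS : a ∈ S := ⟨le_rfl, hab, fun y h1 h2 => by rwa [le_antisymm h2 h1]⟩
  have hbdd : BddAbove S := ⟨b, fun x hx => hx.2.1⟩
  set c := sSup S with hc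
  have hac : a ≤ c := le_csSup hbdd haS
  have hcb : c ≤ b := csSup_le ⟨a, haS⟩ fun x hx => hx.2.1
  have hlt : ∀ y, a ≤ y → y < c → P y := by
    intro y hy hyc
    obtain ⟨x, hx, hyx⟩ := exists_lt_of_lt_csSup ⟨a, haS⟩ hyc
    exact hx.2.2 y hy hyx.le
  have hPc : P c := by
    rcases hac.eq_or_lt with h | h
    · rwa [← h]
    · exact lim c h hcb hlt
  have hle : ∀ y, a ≤ y → y ≤ c → P y := by
    intro y hy hyc
    rcases hyc.eq_or_lt with h | h
    · rwa [h]
    · exact hlt y hy h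
  have hcb' : c = b := by
    by_contra hne
    obtain ⟨y, hy1, hy2, hy3⟩ := step c hac (lt_of_le_of_ne hcb hne) hPc
    have : y ∈ S := ⟨by linarith, hy2, fun z hz1 hz2 => by
      rcases le_or_gt z c with h | h
      · exact hle z hz1 h
      · exact hy3 z h hz2⟩
    linarith [le_csSup hbdd this]
  intro x h1 h2
  exact hle x h1 (by rw [hcb']; exact h2)

lemma partition_find : ∀ (n : ℕ) (t : Fin (n + 1) → ℝ) (x : ℝ), t 0 ≤ x → x < t (Fin.last n) →
    ∃ i : Fin n, t i.castSucc ≤ x ∧ x < t i.succ := by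
  intro n
  induction n with
  | zero => intro t x h1 h2; simp at h2; linarith
  | succ n ih =>
    intro t x h1 h2
    rcases lt_or_ge x (t (Fin.last n).castSucc) with h | h
    · obtain ⟨i, hi1, hi2⟩ := ih (fun j => t j.castSucc) x h1 h
      exact ⟨i.castSucc, hi1, hi2⟩
    · exact ⟨Fin.last n, h, h2⟩

lemma partition_find' : ∀ (n : ℕ) (t : Fin (n + 1) → ℝ) (x : ℝ), t 0 < x → x ≤ t (Fin.last n) →
    ∃ i : Fin n, t i.castSucc < x ∧ x ≤ t i.succ := by
  intro n
  induction n with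
  | zero => intro t x h1 h2; simp at h2; linarith
  | succ n ih =>
    intro t x h1 h2
    rcases le_or_gt x (t (Fin.last n).castSucc) with h | h
    · obtain ⟨i, hi1, hi2⟩ := ih (fun j => t j.castSucc) x h1 h
      exact ⟨i.castSucc, hi1, hi2⟩
    · exact ⟨Fin.last n, h, h2⟩

lemma PLInt.hasR {f : ℝ → ℝ} {L : ℝ} (h : PLInt f L) {x : ℝ} (h0 : 0 ≤ x) (hL : x < L) :
    ∃ m, HasR f x m := by
  obtain ⟨n, t, ht0, htL, hmono, hlin⟩ := h
  obtain ⟨i, hi1, hi2⟩ := partition_find n t x (by rwa [ht0]) (by rwa [htL])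
  obtain ⟨m, hm⟩ := hlin i
  refine ⟨m, t i.succ - x, by linarith, fun s hs => ?_⟩
  rw [hm s ⟨by linarith [hs.1], by linarith [hs.2]⟩, hm x ⟨hi1, hi2.le⟩]
  ring

lemma PLInt.hasL {f : ℝ → ℝ} {L : ℝ} (h : PLInt f L) {x : ℝ} (h0 : 0 < x) (hL : x ≤ L) :
    ∃ m, HasL f x m := by
  obtain ⟨n, t, ht0, htL, hmono, hlin⟩ := h
  obtain ⟨i, hi1, hi2⟩ := partition_find' n t x (by rwa [ht0]) (by rwa [htL])
  obtain ⟨m, hm⟩ := hlin i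
  refine ⟨-m, x - t i.castSucc, by linarith, fun s hs => ?_⟩
  rw [hm s ⟨by linarith [hs.1], by linarith [hs.2]⟩, hm x ⟨hi1.le, hi2⟩]
  push_cast
  ring

lemma PLInt.extend {f : ℝ → ℝ} {L L' : ℝ} (h : PLInt f L) (hL : L < L') (m : ℤ)
    (hm : ∀ s ∈ Set.Icc L L', f s = f L + (m : ℝ) * (s - L)) : PLInt f L' := by
  obtain ⟨n, t, ht0, htL, hmono, hlin⟩ := h
  refine ⟨n + 1, Fin.snoc t L', ?_, by simp, ?_, ?_⟩
  · have : (0 : Fin (n + 1 + 1)) = Fin.castSucc (0 : Fin (n + 1)) := rfl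
    rw [this, Fin.snoc_castSucc, ht0]
  · rw [Fin.strictMono_iff_lt_succ]
    intro i
    refine Fin.lastCases ?_ (fun j => ?_) i
    · rw [Fin.snoc_castSucc, Fin.succ_last, Fin.snoc_last, htL]
      exact hL
    · rw [Fin.snoc_castSucc, Fin.succ_castSucc, Fin.snoc_castSucc]
      exact hmono Fin.castSucc_lt_succ
  · intro i
    refine Fin.lastCases ?_ (fun j => ?_) i
    · rw [Fin.snoc_castSucc, Fin.succ_last, Fin.snoc_last, htL]
      exact ⟨m, hm⟩
    · rw [Fin.snoc_castSucc, Fin.succ_castSucc, Fin.snoc_castSucc]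
      exact hlin j

/-- Local criterion for `PLInt`. -/
lemma plInt_of_local {f : ℝ → ℝ} {L : ℝ} (hL : 0 < L)
    (hr : ∀ x, 0 ≤ x → x < L → ∃ m, HasR f x m)
    (hl : ∀ x, 0 < x → x ≤ L → ∃ m, HasL f x m) : PLInt f L := by
  refine real_ind (fun x => PLInt f x) hL.le ?_ ?_ ?_ L hL.le le_rfl
  · exact ⟨0, fun _ => 0, rfl, rfl, fun i j hij => by fin_cases i; fin_cases j; simp at hij,
      fun i => i.elim0⟩
  · intro x h0 h1 hP
    obtain ⟨m, ε, hε, hm⟩ := hr x h0 h1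
    refine ⟨min (x + ε) L, lt_min (by linarith) h1, min_le_right _ _, fun z hz1 hz2 => ?_⟩
    refine PLInt.extend hP hz1 m fun s hs => hm s ⟨hs.1, ?_⟩
    linarith [hs.2, min_le_left (x + ε) L]
  · intro x h0 h1 hP
    obtain ⟨m, ε, hε, hm⟩ := hl x h0 h1
    have hy : max 0 (x - ε) < x := max_lt h0 (by linarith)
    have hy' := le_max_right 0 (x - ε)
    refine PLInt.extend (hP (max 0 (x - ε)) (le_max_left _ _) hy) hy (-m) fun s hs => ?_
    rw [hm s ⟨by linarith [hs.1], hs.2⟩, hm (max 0 (x - ε)) ⟨hy', hy.le⟩]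
    push_cast
    ring

/-- A function without interior bends is linear. -/
lemma linear_of_no_bend {f : ℝ → ℝ} {L : ℝ} (hL : 0 < L) (h : PLInt f L)
    (hz : ∀ x, 0 < x → x < L → slopeR f x + slopeL f x = 0) :
    ∀ s, 0 ≤ s → s ≤ L → f s = f 0 + (slopeR f 0 : ℝ) * s := by
  obtain ⟨m, hm⟩ := PLInt.hasR h le_rfl hL
  rw [slopeR_eq hm]
  have key : ∀ x, 0 ≤ x → x ≤ L → ∀ s, 0 ≤ s → s ≤ x → f s = f 0 + (m : ℝ) * s := by
    refine real_ind (fun x => ∀ s, 0 ≤ s → s ≤ x → f s = f 0 + (m : ℝ) * s) hL.le ?_ ?_ ?_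
    · intro s h1 h2
      rw [le_antisymm h2 h1]; simp
    · intro x h0 h1 hP
      have hr : HasR f x m := by
        rcases h0.eq_or_lt with h2 | h2
        · rwa [← h2]
        · obtain ⟨a, ha⟩ := PLInt.hasR h h0 h1
          obtain ⟨b, hb⟩ := PLInt.hasL h h2 h1.le
          have h3 := hz x h2 h1
          rw [slopeR_eq ha, slopeL_eq hb] at h3
          have h4 : HasL f x (-m) := (hasL_linear (f 0) m x).congr h2 (fun s hs1 hs2 => hP s hs1 hs2)
          have h5 := hb.unique h4
          have h6 : a = m := by omega
          rwa [← h6]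
      obtain ⟨ε, hε, hm'⟩ := hr
      refine ⟨min (x + ε) L, lt_min (by linarith) h1, min_le_right _ _, fun z hz1 hz2 s hs1 hs2 => ?_⟩
      rcases le_or_gt s x with h2 | h2
      · exact hP s hs1 h2
      · rw [hm' s ⟨h2.le, by linarith [min_le_left (x + ε) L]⟩, hP x h0 le_rfl]
        ring
    · intro x h0 h1 hP
      obtain ⟨k, ε, hε, hk⟩ := PLInt.hasL h h0 h1
      have hy : max 0 (x - ε) < x := max_lt h0 (by linarith)
      have hy0 := le_max_left 0 (x - ε)
      have hy' := le_max_right 0 (x - ε)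
      set y := max 0 (x - ε)
      have e1 := hk y ⟨hy', hy.le⟩
      have e2 := hk ((y + x) / 2) ⟨by linarith, by linarith⟩
      rw [hP y hy0 hy y hy0 le_rfl] at e1
      rw [hP ((y + x) / 2) (by linarith) (by linarith) _ (by linarith) le_rfl] at e2
      have e3 : ((m : ℝ) + k) * (x - y) = 0 := by linarith
      have e4 : (m : ℝ) + k = 0 := by
        rcases mul_eq_zero.mp e3 with h4 | h4
        · exact h4
        · linarith
      intro s hs1 hs2
      rcases hs2.eq_or_lt with h2 | h2
      · rw [h2]
        have : (k : ℝ) = -m := by linarith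
        rw [this] at e1
        linarith
      · exact hP s hs1 h2 s hs1 le_rfl
  exact key L hL.le le_rfl

end Trig
/-! ## Part 2: rational functions and linear equivalence -/

namespace Trig

variable {Γ : MetricGraphModel}

lemma rf_hasR (F : RationalFunction Γ) (e : Γ.E) {t : ℝ} (h0 : 0 ≤ t) (h1 : t < Γ.len e) :
    HasR (F.eFun e) t (slopeR (F.eFun e) t) := by
  obtain ⟨m, hm⟩ := PLInt.hasR (F.pl e) h0 h1
  rwa [slopeR_eq hm]

lemma rf_hasL (F : RationalFunction Γ) (e : Γ.E) {t : ℝ} (h0 : 0 < t) (h1 : t ≤ Γ.len e) :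
    HasL (F.eFun e) t (slopeL (F.eFun e) t) := by
  obtain ⟨m, hm⟩ := PLInt.hasL (F.pl e) h0 h1
  rwa [slopeL_eq hm]

lemma ratDiv_inl (F : RationalFunction Γ) (v : Γ.V) : ratDiv F (Sum.inl v) =
    ∑ e : Γ.E, ((if Γ.src e = v then slopeR (F.eFun e) 0 else 0) +
       (if Γ.tgt e = v then slopeL (F.eFun e) (Γ.len e) else 0)) := rfl

lemma ratDiv_inr (F : RationalFunction Γ) (q : Σ e : Γ.E, {t : ℝ // 0 < t ∧ t < Γ.len e}) :
    ratDiv F (Sum.inr q) = slopeR (F.eFun q.1) q.2.1 + slopeL (F.eFun q.1) q.2.1 := rfl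

/-- Sum of two rational functions. -/
def addF (F G : RationalFunction Γ) : RationalFunction Γ where
  vVal v := F.vVal v + G.vVal v
  eFun e s := F.eFun e s + G.eFun e s
  pl e := plInt_of_local (Γ.len_pos e)
    (fun _ h0 h1 => ⟨_, (rf_hasR F e h0 h1).add (rf_hasR G e h0 h1)⟩)
    (fun _ h0 h1 => ⟨_, (rf_hasL F e h0 h1).add (rf_hasL G e h0 h1)⟩)
  srcVal e := by rw [F.srcVal, G.srcVal]
  tgtVal e := by rw [F.tgtVal, G.tgtVal]

/-- Negative of a rational function. -/
def negF (F : RationalFunction Γ) : RationalFunction Γ where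
  vVal v := - F.vVal v
  eFun e s := - F.eFun e s
  pl e := plInt_of_local (Γ.len_pos e)
    (fun _ h0 h1 => ⟨_, (rf_hasR F e h0 h1).neg⟩)
    (fun _ h0 h1 => ⟨_, (rf_hasL F e h0 h1).neg⟩)
  srcVal e := by rw [F.srcVal]
  tgtVal e := by rw [F.tgtVal]

/-- Maximum of a rational function with a constant. -/
noncomputable def maxF (F : RationalFunction Γ) (c : ℝ) : RationalFunction Γ where
  vVal v := max (F.vVal v) c
  eFun e s := max (F.eFun e s) c
  pl e := plInt_of_local (Γ.len_pos e)
    (fun _ h0 h1 => ⟨_, hasR_max c (rf_hasR F e h0 h1)⟩)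
    (fun _ h0 h1 => ⟨_, hasL_max c (rf_hasL F e h0 h1)⟩)
  srcVal e := by rw [F.srcVal]
  tgtVal e := by rw [F.tgtVal]

/-- The zero function. -/
def zeroF (Γ : MetricGraphModel) : RationalFunction Γ where
  vVal _ := 0
  eFun _ _ := 0
  pl e := plInt_of_local (Γ.len_pos e)
    (fun _ _ _ => ⟨_, hasR_const 0 _⟩) (fun _ _ _ => ⟨_, hasL_const 0 _⟩)
  srcVal _ := rfl
  tgtVal _ := rfl

lemma ratDiv_add (F G : RationalFunction Γ) (p : Γ.Pt) :
    ratDiv (addF F G) p = ratDiv F p + ratDiv G p := by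
  rcases p with v | ⟨e, t, h0, h1⟩
  · simp only [ratDiv_inl, ← Finset.sum_add_distrib]
    refine Finset.sum_congr rfl fun e _ => ?_
    have h1 : slopeR ((addF F G).eFun e) 0 = _ :=
      slopeR_eq ((rf_hasR F e le_rfl (Γ.len_pos e)).add (rf_hasR G e le_rfl (Γ.len_pos e)))
    have h2 : slopeL ((addF F G).eFun e) (Γ.len e) = _ :=
      slopeL_eq ((rf_hasL F e (Γ.len_pos e) le_rfl).add (rf_hasL G e (Γ.len_pos e) le_rfl))
    rw [h1, h2]
    split_ifs <;> ring
  · simp only [ratDiv_inr]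
    have e1 : slopeR ((addF F G).eFun e) t = _ :=
      slopeR_eq ((rf_hasR F e h0.le h1).add (rf_hasR G e h0.le h1))
    have e2 : slopeL ((addF F G).eFun e) t = _ :=
      slopeL_eq ((rf_hasL F e h0 h1.le).add (rf_hasL G e h0 h1.le))
    rw [e1, e2]
    ring

lemma ratDiv_neg (F : RationalFunction Γ) (p : Γ.Pt) :
    ratDiv (negF F) p = - ratDiv F p := by
  rcases p with v | ⟨e, t, h0, h1⟩
  · simp only [ratDiv_inl, ← Finset.sum_neg_distrib]
    refine Finset.sum_congr rfl fun e _ => ?_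
    have h1 : slopeR ((negF F).eFun e) 0 = _ :=
      slopeR_eq ((rf_hasR F e le_rfl (Γ.len_pos e)).neg)
    have h2 : slopeL ((negF F).eFun e) (Γ.len e) = _ :=
      slopeL_eq ((rf_hasL F e (Γ.len_pos e) le_rfl).neg)
    rw [h1, h2]
    split_ifs <;> ring
  · simp only [ratDiv_inr]
    have e1 : slopeR ((negF F).eFun e) t = _ := slopeR_eq (rf_hasR F e h0.le h1).neg
    have e2 : slopeL ((negF F).eFun e) t = _ := slopeL_eq (rf_hasL F e h0 h1.le).neg
    rw [e1, e2]
    ring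

lemma ratDiv_zero (p : Γ.Pt) : ratDiv (zeroF Γ) p = 0 := by
  rcases p with v | ⟨e, t, h0, h1⟩
  · rw [ratDiv_inl]
    refine Finset.sum_eq_zero fun e _ => ?_
    have h1 : slopeR ((zeroF Γ).eFun e) 0 = 0 := slopeR_eq (hasR_const 0 _)
    have h2 : slopeL ((zeroF Γ).eFun e) (Γ.len e) = 0 := slopeL_eq (hasL_const 0 _)
    rw [h1, h2]; simp
  · rw [ratDiv_inr]
    have e1 : slopeR ((zeroF Γ).eFun e) t = 0 := slopeR_eq (hasR_const 0 _)
    have e2 : slopeL ((zeroF Γ).eFun e) t = 0 := slopeL_eq (hasL_const 0 _)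
    rw [e1, e2]; simp

lemma LinEquiv.refl (D : Divisor Γ) : LinEquiv Γ D D :=
  ⟨zeroF Γ, fun p => by rw [ratDiv_zero]; ring⟩

lemma LinEquiv.symm {D D' : Divisor Γ} (h : LinEquiv Γ D D') : LinEquiv Γ D' D := by
  obtain ⟨f, hf⟩ := h
  exact ⟨negF f, fun p => by rw [ratDiv_neg, hf p]; ring⟩

lemma LinEquiv.trans {D D' D'' : Divisor Γ} (h : LinEquiv Γ D D') (h' : LinEquiv Γ D' D'') :
    LinEquiv Γ D D'' := by
  obtain ⟨f, hf⟩ := h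
  obtain ⟨g, hg⟩ := h'
  exact ⟨addF f g, fun p => by rw [ratDiv_add, hf p, hg p]; ring⟩

/-- Translating both sides of a linear equivalence. -/
lemma LinEquiv.add_right {D D' : Divisor Γ} (h : LinEquiv Γ D D') (A : Divisor Γ) :
    LinEquiv Γ (fun p => D p + A p) (fun p => D' p + A p) := by
  obtain ⟨f, hf⟩ := h
  exact ⟨f, fun p => by simp only [hf p]; ring⟩

/-- Truncating at a level keeps divisors effective. -/
lemma ratDiv_max_ge (F : RationalFunction Γ) (c : ℝ) (p : Γ.Pt) :
    ratDiv F p ≤ ratDiv (maxF F c) p ∨ 0 ≤ ratDiv (maxF F c) p := by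
  rcases p with v | ⟨e, t, h0, h1⟩
  · have hR : ∀ e, Γ.src e = v → slopeR ((maxF F c).eFun e) 0 =
        if c < F.vVal v then slopeR (F.eFun e) 0 else
        if F.vVal v < c then 0 else max (slopeR (F.eFun e) 0) 0 := by
      intro e he
      have h1 : slopeR ((maxF F c).eFun e) 0 = _ :=
        slopeR_eq (hasR_max c (rf_hasR F e le_rfl (Γ.len_pos e)))
      rw [h1, F.srcVal, he]
    have hL : ∀ e, Γ.tgt e = v → slopeL ((maxF F c).eFun e) (Γ.len e) =
        if c < F.vVal v then slopeL (F.eFun e) (Γ.len e) else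
        if F.vVal v < c then 0 else max (slopeL (F.eFun e) (Γ.len e)) 0 := by
      intro e he
      have h1 : slopeL ((maxF F c).eFun e) (Γ.len e) = _ :=
        slopeL_eq (hasL_max c (rf_hasL F e (Γ.len_pos e) le_rfl))
      rw [h1, F.tgtVal, he]
    simp only [ratDiv_inl]
    by_cases hc : c < F.vVal v
    · left
      refine Finset.sum_le_sum fun e _ => ?_
      refine add_le_add ?_ ?_
      · split_ifs with h
        · rw [hR e h, if_pos hc]
        · exact le_rfl
      · split_ifs with h
        · rw [hL e h, if_pos hc]
        · exact le_rfl
    · right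
      refine Finset.sum_nonneg fun e _ => ?_
      refine add_nonneg ?_ ?_
      · split_ifs with h
        · rw [hR e h, if_neg hc]
          split_ifs
          · exact le_rfl
          · exact le_max_right _ _
        · exact le_rfl
      · split_ifs with h
        · rw [hL e h, if_neg hc]
          split_ifs
          · exact le_rfl
          · exact le_max_right _ _
        · exact le_rfl
  · simp only [ratDiv_inr]
    have e1 : slopeR ((maxF F c).eFun e) t = _ := slopeR_eq (hasR_max c (rf_hasR F e h0.le h1))
    have e2 : slopeL ((maxF F c).eFun e) t = _ := slopeL_eq (hasL_max c (rf_hasL F e h0 h1.le))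
    rw [e1, e2]
    split_ifs
    · left; exact le_rfl
    · right; simp
    · right; positivity

/-- A chip at an interior point where the function is truncated. -/
lemma ratDiv_max_pos (F : RationalFunction Γ) (e : Γ.E) (t : ℝ) (h : 0 < t ∧ t < Γ.len e)
    (hs : slopeR (F.eFun e) t + slopeL (F.eFun e) t = 0) (hn : slopeR (F.eFun e) t ≠ 0) :
    1 ≤ ratDiv (maxF F (F.eFun e t)) (Sum.inr ⟨e, t, h⟩) := by
  simp only [ratDiv_inr]
  have e1 : slopeR ((maxF F (F.eFun e t)).eFun e) t = _ :=
    slopeR_eq (hasR_max _ (rf_hasR F e h.1.le h.2))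
  have e2 : slopeL ((maxF F (F.eFun e t)).eFun e) t = _ :=
    slopeL_eq (hasL_max _ (rf_hasL F e h.1 h.2.le))
  rw [e1, e2]
  simp only [lt_irrefl, if_false]
  omega

/-! ### Edgewise linear functions -/

/-- The discrete divisor of a system of edge slopes. -/
noncomputable def ddiv (Γ : MetricGraphModel) (σ : Γ.E → ℤ) (v : Γ.V) : ℤ :=
  ∑ e : Γ.E, ((if Γ.src e = v then σ e else 0) + (if Γ.tgt e = v then -σ e else 0))

/-- The rational function which is linear on each edge. -/
def linF (g : Γ.V → ℝ) (σ : Γ.E → ℤ)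
    (h : ∀ e, g (Γ.tgt e) - g (Γ.src e) = (σ e : ℝ) * Γ.len e) : RationalFunction Γ where
  vVal := g
  eFun e s := g (Γ.src e) + (σ e : ℝ) * s
  pl e := plInt_of_local (Γ.len_pos e)
    (fun _ _ _ => ⟨_, hasR_linear _ _ _⟩) (fun _ _ _ => ⟨_, hasL_linear _ _ _⟩)
  srcVal e := by simp
  tgtVal e := by rw [← h e]; ring

lemma ratDiv_linF_inl (g : Γ.V → ℝ) (σ : Γ.E → ℤ)
    (h : ∀ e, g (Γ.tgt e) - g (Γ.src e) = (σ e : ℝ) * Γ.len e) (v : Γ.V) :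
    ratDiv (linF g σ h) (Sum.inl v) = ddiv Γ σ v := by
  rw [ratDiv_inl, ddiv]
  refine Finset.sum_congr rfl fun e _ => ?_
  have h1 : slopeR ((linF g σ h).eFun e) 0 = σ e := slopeR_eq (hasR_linear _ _ _)
  have h2 : slopeL ((linF g σ h).eFun e) (Γ.len e) = - σ e := slopeL_eq (hasL_linear _ _ _)
  rw [h1, h2]

lemma slopeR_linF (g : Γ.V → ℝ) (σ : Γ.E → ℤ)
    (h : ∀ e, g (Γ.tgt e) - g (Γ.src e) = (σ e : ℝ) * Γ.len e) (e : Γ.E) (t : ℝ) :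
    slopeR ((linF g σ h).eFun e) t = σ e := slopeR_eq (hasR_linear _ _ _)

lemma slopeL_linF (g : Γ.V → ℝ) (σ : Γ.E → ℤ)
    (h : ∀ e, g (Γ.tgt e) - g (Γ.src e) = (σ e : ℝ) * Γ.len e) (e : Γ.E) (t : ℝ) :
    slopeL ((linF g σ h).eFun e) t = - σ e := slopeL_eq (hasL_linear _ _ _)

lemma ratDiv_linF_inr (g : Γ.V → ℝ) (σ : Γ.E → ℤ)
    (h : ∀ e, g (Γ.tgt e) - g (Γ.src e) = (σ e : ℝ) * Γ.len e)
    (q : Σ e : Γ.E, {t : ℝ // 0 < t ∧ t < Γ.len e}) :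
    ratDiv (linF g σ h) (Sum.inr q) = 0 := by
  rw [ratDiv_inr, slopeR_linF, slopeL_linF]; ring

/-! ### Moving two chips symmetrically along one edge -/

/-- The point of the edge `e` at parameter `s` (clamped to the edge). -/
noncomputable def ptOn (Γ : MetricGraphModel) (e : Γ.E) (s : ℝ) : Γ.Pt :=
  if h : 0 < s ∧ s < Γ.len e then Sum.inr ⟨e, s, h⟩
  else if s ≤ 0 then Sum.inl (Γ.src e) else Sum.inl (Γ.tgt e)

lemma ptOn_zero (e : Γ.E) : ptOn Γ e 0 = Sum.inl (Γ.src e) := by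
  simp [ptOn]

lemma ptOn_len (e : Γ.E) : ptOn Γ e (Γ.len e) = Sum.inl (Γ.tgt e) := by
  simp [ptOn, not_le.mpr (Γ.len_pos e)]

lemma ptOn_mid (e : Γ.E) (s : ℝ) (h : 0 < s ∧ s < Γ.len e) :
    ptOn Γ e s = Sum.inr ⟨e, s, h⟩ := by
  simp [ptOn, h]

lemma unit_ptOn_inl (e : Γ.E) (s : ℝ) (v : Γ.V) :
    unitDiv Γ (ptOn Γ e s) (Sum.inl v) =
      (if Γ.src e = v then (if s ≤ 0 then 1 else 0) else 0) +
      (if Γ.tgt e = v then (if s < Γ.len e then 0 else 1) else 0) := by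
  have hl := Γ.len_pos e
  unfold unitDiv ptOn
  by_cases h0 : s ≤ 0
  · have h1 : s < Γ.len e := by linarith
    simp [h0, h1, not_lt.mpr h0, eq_comm]
  · by_cases h1 : s < Γ.len e
    · simp [h0, h1, not_le.mp h0]
    · simp [h0, h1, not_le.mp h0, eq_comm]

lemma unit_ptOn_inr (e : Γ.E) (s : ℝ) (e' : Γ.E) (t : ℝ) (h : 0 < t ∧ t < Γ.len e') :
    unitDiv Γ (ptOn Γ e s) (Sum.inr ⟨e', t, h⟩) = if e' = e ∧ t = s then 1 else 0 := by
  unfold unitDiv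
  by_cases h0 : 0 < s ∧ s < Γ.len e
  · rw [ptOn_mid e s h0]
    by_cases he : e' = e
    · subst he
      by_cases hts : t = s
      · subst hts; simp
      · simp [hts]
    · have : ¬ ((Sum.inr ⟨e', t, h⟩ : Γ.Pt) = Sum.inr ⟨e, s, h0⟩) := by
        intro h1
        simp only [Sum.inr.injEq, Sigma.mk.injEq] at h1
        exact he h1.1
      simp [he]
  · have h1 : ¬ (e' = e ∧ t = s) := by
      rintro ⟨rfl, rfl⟩; exact h0 h
    rw [if_neg h1, ptOn, dif_neg h0]
    split_ifs <;> simp_all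

/-- The bump function on an edge. -/
noncomputable def bumpFun (a s t b x : ℝ) : ℝ :=
  max (x - a) 0 + (-max (x - s) 0) + (-max (x - t) 0) + max (x - b) 0

lemma bump_hasR (a s t b x : ℝ) : HasR (bumpFun a s t b) x
    ((if a ≤ x then 1 else 0) + (-(if s ≤ x then 1 else 0)) + (-(if t ≤ x then 1 else 0)) +
      (if b ≤ x then 1 else 0)) :=
  (((hasR_ramp a x).add (hasR_ramp s x).neg).add (hasR_ramp t x).neg).add (hasR_ramp b x)

lemma bump_hasL (a s t b x : ℝ) : HasL (bumpFun a s t b) x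
    ((if a < x then -1 else 0) + (-(if s < x then -1 else 0)) + (-(if t < x then -1 else 0)) +
      (if b < x then -1 else 0)) :=
  (((hasL_ramp a x).add (hasL_ramp s x).neg).add (hasL_ramp t x).neg).add (hasL_ramp b x)

/-- The bump function as a rational function. -/
noncomputable def bumpF (e : Γ.E) (a s t b : ℝ) (h0 : 0 ≤ a) (h1 : a ≤ s) (h2 : s ≤ t) (h3 : t ≤ b)
    (h4 : b ≤ Γ.len e) (h5 : s - a = b - t) : RationalFunction Γ where
  vVal _ := 0
  eFun e' := if e' = e then bumpFun a s t b else fun _ => 0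
  pl e' := by
    by_cases he : e' = e
    · subst he
      simp only [if_true]
      exact plInt_of_local (Γ.len_pos e') (fun x _ _ => ⟨_, bump_hasR a s t b x⟩)
        (fun x _ _ => ⟨_, bump_hasL a s t b x⟩)
    · simp only [he, if_false]
      exact plInt_of_local (Γ.len_pos e') (fun x _ _ => ⟨_, hasR_const 0 x⟩)
        (fun x _ _ => ⟨_, hasL_const 0 x⟩)
  srcVal e' := by
    by_cases he : e' = e
    · simp only [he, if_true, bumpFun]
      rw [max_eq_right, max_eq_right, max_eq_right, max_eq_right] <;> linarith
    · simp [he]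
  tgtVal e' := by
    by_cases he : e' = e
    · subst he
      simp only [if_true, bumpFun]
      rw [max_eq_left, max_eq_left, max_eq_left, max_eq_left] <;> linarith
    · simp [he]

/-- Two chips on an edge may be moved symmetrically. -/
lemma bump_equiv (e : Γ.E) (a s t b : ℝ) (h0 : 0 ≤ a) (h1 : a ≤ s) (h2 : s ≤ t) (h3 : t ≤ b)
    (h4 : b ≤ Γ.len e) (h5 : s - a = b - t) :
    LinEquiv Γ (fun p => unitDiv Γ (ptOn Γ e a) p + unitDiv Γ (ptOn Γ e b) p)
      (fun p => unitDiv Γ (ptOn Γ e s) p + unitDiv Γ (ptOn Γ e t) p) := by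
  refine ⟨bumpF e a s t b h0 h1 h2 h3 h4 h5, fun p => ?_⟩
  set F : RationalFunction Γ := bumpF e a s t b h0 h1 h2 h3 h4 h5 with hF
  have hE : F.eFun e = bumpFun a s t b := by simp [hF, bumpF]
  have hE' : ∀ e', e' ≠ e → F.eFun e' = fun _ => 0 := by
    intro e' he'
    simp [hF, bumpF, he']
  rcases p with v | ⟨e', x, hx⟩
  · have hd : ratDiv F (Sum.inl v) = (if Γ.src e = v then slopeR (F.eFun e) 0 else 0) +
       (if Γ.tgt e = v then slopeL (F.eFun e) (Γ.len e) else 0) := by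
      rw [ratDiv_inl]
      refine Finset.sum_eq_single e (fun e' _ he' => ?_) (by simp)
      rw [hE' e' he', slopeR_eq (hasR_const 0 _), slopeL_eq (hasL_const 0 _)]
      simp
    simp only [unit_ptOn_inl]
    rw [hd, hE, slopeR_eq (bump_hasR a s t b 0), slopeL_eq (bump_hasL a s t b (Γ.len e))]
    split_ifs <;> simp
  · simp only [unit_ptOn_inr]
    rw [ratDiv_inr]
    by_cases he : e' = e
    · subst he
      simp only
      rw [hE, slopeR_eq (bump_hasR a s t b x), slopeL_eq (bump_hasL a s t b x)]
      have key : ∀ c : ℝ, (if x = c then (1 : ℤ) else 0) =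
          (if c ≤ x then 1 else 0) + (if c < x then -1 else 0) := by
        intro c
        rcases lt_trichotomy c x with h | h | h
        · simp [h, h.le, h.ne']
        · simp [h]
        · simp [not_le.mpr h, h.le, h.ne]
      simp only [true_and, key]
      ring
    · simp only
      rw [hE' e' he, slopeR_eq (hasR_const 0 _), slopeL_eq (hasL_const 0 _)]
      simp [he]

end Trig
/-! ## Part 3: subdividing an edge -/

namespace Trig

/-- Insert a vertex in the interior of an edge. -/
noncomputable abbrev subdiv (Γ : MetricGraphModel) (e₀ : Γ.E) (t : ℝ) (ht : 0 < t ∧ t < Γ.len e₀) :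
    MetricGraphModel where
  V := Option Γ.V
  E := Option Γ.E
  fV := inferInstance
  fE := inferInstance
  dV := inferInstance
  dE := inferInstance
  src := fun x => match x with
    | none => none
    | some e => some (Γ.src e)
  tgt := fun x => match x with
    | none => some (Γ.tgt e₀)
    | some e => if e = e₀ then none else some (Γ.tgt e)
  len := fun x => match x with
    | none => Γ.len e₀ - t
    | some e => if e = e₀ then t else Γ.len e
  len_pos := by
    rintro (_ | e)
    · show 0 < Γ.len e₀ - t
      linarith [ht.2]
    · show 0 < if e = e₀ then t else Γ.len e
      split_ifs
      · exact ht.1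
      · exact Γ.len_pos e

section

variable {Γ : MetricGraphModel} {e₀ : Γ.E} {t : ℝ} {ht : 0 < t ∧ t < Γ.len e₀}

lemma sd_src_none : (subdiv Γ e₀ t ht).src none = none := rfl
lemma sd_src_some (e : Γ.E) : (subdiv Γ e₀ t ht).src (some e) = some (Γ.src e) := rfl
lemma sd_tgt_none : (subdiv Γ e₀ t ht).tgt none = some (Γ.tgt e₀) := rfl
lemma sd_tgt_some (e : Γ.E) : (subdiv Γ e₀ t ht).tgt (some e) =
    if e = e₀ then none else some (Γ.tgt e) := rfl
lemma sd_tgt_self : (subdiv Γ e₀ t ht).tgt (some e₀) = none := if_pos rfl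
lemma sd_tgt_ne {e : Γ.E} (h : e ≠ e₀) :
    (subdiv Γ e₀ t ht).tgt (some e) = some (Γ.tgt e) := if_neg h
lemma sd_len_none : (subdiv Γ e₀ t ht).len none = Γ.len e₀ - t := rfl
lemma sd_len_some (e : Γ.E) : (subdiv Γ e₀ t ht).len (some e) =
    if e = e₀ then t else Γ.len e := rfl
lemma sd_len_self : (subdiv Γ e₀ t ht).len (some e₀) = t := if_pos rfl
lemma sd_len_ne {e : Γ.E} (h : e ≠ e₀) :
    (subdiv Γ e₀ t ht).len (some e) = Γ.len e := if_neg h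

lemma sd_len_le (e : Γ.E) : (subdiv Γ e₀ t ht).len (some e) ≤ Γ.len e := by
  rw [sd_len_some]
  split_ifs with h
  · rw [h]; exact ht.2.le
  · exact le_rfl

/-- The identification of points. -/
noncomputable def sdPt (Γ : MetricGraphModel) (e₀ : Γ.E) (t : ℝ) (ht : 0 < t ∧ t < Γ.len e₀) :
    (subdiv Γ e₀ t ht).Pt → Γ.Pt
  | Sum.inl none => Sum.inr ⟨e₀, t, ht⟩
  | Sum.inl (some v) => Sum.inl v
  | Sum.inr ⟨none, s⟩ => Sum.inr ⟨e₀, t + s.1, by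
      have h1 := s.2.1
      have h2 : s.1 < Γ.len e₀ - t := s.2.2
      have h3 := ht.1
      constructor <;> linarith⟩
  | Sum.inr ⟨some e, s⟩ => Sum.inr ⟨e, s.1, s.2.1, lt_of_lt_of_le s.2.2 (sd_len_le e)⟩

lemma pt_inr_eq {Γ : MetricGraphModel} {e e' : Γ.E} {s s' : ℝ} {h : 0 < s ∧ s < Γ.len e}
    {h' : 0 < s' ∧ s' < Γ.len e'} :
    ((Sum.inr ⟨e, s, h⟩ : Γ.Pt) = Sum.inr ⟨e', s', h'⟩) ↔ e = e' ∧ s = s' := by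
  constructor
  · intro h1
    simp only [Sum.inr.injEq, Sigma.mk.injEq] at h1
    obtain ⟨rfl, h2⟩ := h1
    simpa using h2
  · rintro ⟨rfl, rfl⟩; rfl

lemma sdPt_bij : Function.Bijective (sdPt Γ e₀ t ht) := by
  constructor
  · rintro ((_ | v) | ⟨_ | e, s, hs1, hs2⟩) ((_ | v') | ⟨_ | e', s', hs1', hs2'⟩) h <;>
      simp only [sdPt] at h
    · rfl
    · cases h
    · rw [pt_inr_eq] at h; linarith [h.2]
    · rw [pt_inr_eq] at h
      exfalso
      obtain ⟨rfl, h2⟩ := h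
      rw [sd_len_self] at hs2'
      linarith
    · cases h
    · cases h; rfl
    · cases h
    · cases h
    · rw [pt_inr_eq] at h; linarith [h.2]
    · cases h
    · rw [pt_inr_eq] at h
      obtain rfl : s = s' := by linarith [h.2]
      rfl
    · rw [pt_inr_eq] at h
      exfalso
      obtain ⟨rfl, h2⟩ := h
      rw [sd_len_self] at hs2'
      linarith
    · rw [pt_inr_eq] at h
      exfalso
      obtain ⟨rfl, h2⟩ := h
      rw [sd_len_self] at hs2
      linarith
    · cases h
    · rw [pt_inr_eq] at h
      exfalso
      obtain ⟨rfl, h2⟩ := h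
      rw [sd_len_self] at hs2
      linarith
    · rw [pt_inr_eq] at h
      obtain ⟨rfl, rfl⟩ := h
      rfl
  · rintro (v | ⟨e, s, hs1, hs2⟩)
    · exact ⟨Sum.inl (some v), rfl⟩
    · by_cases he : e = e₀
      · subst he
        rcases lt_trichotomy s t with h | h | h
        · exact ⟨Sum.inr ⟨some e, s, hs1, by rw [sd_len_self]; exact h⟩, rfl⟩
        · subst h
          exact ⟨Sum.inl none, rfl⟩
        · refine ⟨Sum.inr ⟨none, s - t, by linarith, by rw [sd_len_none]; linarith⟩, ?_⟩
          simp only [sdPt]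
          rw [pt_inr_eq]
          exact ⟨rfl, by ring⟩
      · exact ⟨Sum.inr ⟨some e, s, hs1, by rw [sd_len_ne he]; exact hs2⟩, rfl⟩

/-- Compatibility of functions before and after subdivision. -/
def SdCompat (F : RationalFunction Γ) (G : RationalFunction (subdiv Γ e₀ t ht)) : Prop :=
  (∀ e s, 0 ≤ s → s ≤ (subdiv Γ e₀ t ht).len (some e) → G.eFun (some e) s = F.eFun e s) ∧
  ∀ s, 0 ≤ s → s ≤ Γ.len e₀ - t → G.eFun none s = F.eFun e₀ (t + s)

lemma SdCompat.div_eq {F : RationalFunction Γ} {G : RationalFunction (subdiv Γ e₀ t ht)}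
    (h : SdCompat F G) (p : (subdiv Γ e₀ t ht).Pt) :
    ratDiv G p = ratDiv F (sdPt Γ e₀ t ht p) := by
  obtain ⟨h1, h2⟩ := h
  have ht' := ht
  obtain ⟨ht1, ht2⟩ := ht'
  have hR : ∀ e s, 0 ≤ s → s < (subdiv Γ e₀ t ht).len (some e) →
      slopeR (G.eFun (some e)) s = slopeR (F.eFun e) s := by
    intro e s hs1 hs2
    exact slopeR_eq ((rf_hasR F e hs1 (lt_of_lt_of_le hs2 (sd_len_le e))).congr hs2
      (fun x hx1 hx2 => h1 e x (hs1.trans hx1) hx2))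
  have hL : ∀ e s, 0 < s → s ≤ (subdiv Γ e₀ t ht).len (some e) →
      slopeL (G.eFun (some e)) s = slopeL (F.eFun e) s := by
    intro e s hs1 hs2
    exact slopeL_eq ((rf_hasL F e hs1 (hs2.trans (sd_len_le e))).congr hs1
      (fun x hx1 hx2 => h1 e x hx1 (hx2.trans hs2)))
  have hR' : ∀ s, 0 ≤ s → s < Γ.len e₀ - t → slopeR (G.eFun none) s = slopeR (F.eFun e₀) (t + s) := by
    intro s hs1 hs2
    have h3 := rf_hasR F e₀ (t := t + s) (by linarith) (by linarith)
    exact slopeR_eq ((HasR.shift.mpr h3).congr hs2 (fun x hx1 hx2 => h2 x (by linarith) hx2))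
  have hL' : ∀ s, 0 < s → s ≤ Γ.len e₀ - t → slopeL (G.eFun none) s = slopeL (F.eFun e₀) (t + s) := by
    intro s hs1 hs2
    have h3 := rf_hasL F e₀ (t := t + s) (by linarith) (by linarith)
    exact slopeL_eq ((HasL.shift.mpr h3).congr hs1 (fun x hx1 hx2 => h2 x hx1 (by linarith)))
  have hlen0 : ∀ e, 0 < (subdiv Γ e₀ t ht).len (some e) := fun e => (subdiv Γ e₀ t ht).len_pos _
  rcases p with (_ | v) | ⟨_ | e, s, hs1, hs2⟩
  · show ratDiv G (Sum.inl none) = ratDiv F (Sum.inr ⟨e₀, t, ht⟩)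
    rw [ratDiv_inl, ratDiv_inr]
    change ∑ e : Option Γ.E, _ = _
    rw [Fintype.sum_option, Finset.sum_eq_single e₀]
    · simp only [sd_src_none, sd_tgt_none, sd_src_some, sd_tgt_self, sd_len_self, if_true,
        reduceCtorEq, if_false, zero_add, add_zero]
      rw [hR' 0 le_rfl (by linarith), hL e₀ t ht1 (by rw [sd_len_self]), add_zero]
    · intro e _ he
      rw [sd_src_some, sd_tgt_ne he]
      simp
    · simp
  · show ratDiv G (Sum.inl (some v)) = ratDiv F (Sum.inl v)
    rw [ratDiv_inl, ratDiv_inl]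
    change ∑ e : Option Γ.E, _ = _
    rw [Fintype.sum_option]
    have key : ∀ e : Γ.E, ((if Γ.src e = v then slopeR (F.eFun e) 0 else 0) +
        (if Γ.tgt e = v then slopeL (F.eFun e) (Γ.len e) else 0)) =
        (if e = e₀ then (if Γ.tgt e₀ = v then slopeL (F.eFun e₀) (Γ.len e₀) else 0) else 0) +
        ((if (subdiv Γ e₀ t ht).src (some e) = some v then slopeR (G.eFun (some e)) 0 else 0) +
        (if (subdiv Γ e₀ t ht).tgt (some e) = some v then
          slopeL (G.eFun (some e)) ((subdiv Γ e₀ t ht).len (some e)) else 0)) := by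
      intro e
      rw [hR e 0 le_rfl (hlen0 e), hL e _ (hlen0 e) le_rfl, sd_src_some]
      by_cases he : e = e₀
      · subst he
        rw [sd_tgt_self]
        simp only [Option.some.injEq, reduceCtorEq, if_false, if_true]
        ring
      · rw [sd_tgt_ne he, sd_len_ne he]
        simp [he]
    rw [Finset.sum_congr rfl fun e _ => key e]
    refine Eq.trans ?_ Finset.sum_add_distrib.symm
    congr 1
    rw [Finset.sum_ite_eq' Finset.univ e₀]
    simp only [sd_src_none, sd_tgt_none, sd_len_none, reduceCtorEq, if_false, zero_add,
      Finset.mem_univ, if_true, Option.some.injEq]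
    rw [hL' (Γ.len e₀ - t) (by linarith) le_rfl]
    simp
  · show slopeR (G.eFun none) s + slopeL (G.eFun none) s = slopeR (F.eFun e₀) (t + s) +
      slopeL (F.eFun e₀) (t + s)
    rw [sd_len_none] at hs2
    rw [hR' s hs1.le hs2, hL' s hs1 hs2.le]
  · show slopeR (G.eFun (some e)) s + slopeL (G.eFun (some e)) s = slopeR (F.eFun e) s +
      slopeL (F.eFun e) s
    rw [hR e s hs1.le hs2, hL e s hs1 hs2.le]

lemma exists_sd_down (F : RationalFunction Γ) :
    ∃ G : RationalFunction (subdiv Γ e₀ t ht), SdCompat F G := by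
  have ht' := ht
  obtain ⟨ht1, ht2⟩ := ht'
  refine ⟨{ vVal := fun v => match v with
              | none => F.eFun e₀ t
              | some v => F.vVal v
            eFun := fun e => match e with
              | none => fun s => F.eFun e₀ (t + s)
              | some e => F.eFun e
            pl := ?_, srcVal := ?_, tgtVal := ?_ }, ?_⟩
  · rintro (_ | e)
    · refine plInt_of_local ((subdiv Γ e₀ t ht).len_pos none) ?_ ?_
      · intro x h0 h1
        rw [sd_len_none] at h1
        exact ⟨_, HasR.shift.mpr (rf_hasR F e₀ (t := t + x) (by linarith) (by linarith))⟩
      · intro x h0 h1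
        rw [sd_len_none] at h1
        exact ⟨_, HasL.shift.mpr (rf_hasL F e₀ (t := t + x) (by linarith) (by linarith))⟩
    · refine plInt_of_local ((subdiv Γ e₀ t ht).len_pos (some e)) ?_ ?_
      · intro x h0 h1
        exact ⟨_, rf_hasR F e h0 (lt_of_lt_of_le h1 (sd_len_le e))⟩
      · intro x h0 h1
        exact ⟨_, rf_hasL F e h0 (h1.trans (sd_len_le e))⟩
  · rintro (_ | e)
    · show F.eFun e₀ (t + 0) = F.eFun e₀ t
      rw [add_zero]
    · exact F.srcVal e
  · rintro (_ | e)
    · show F.eFun e₀ (t + (Γ.len e₀ - t)) = F.vVal (Γ.tgt e₀)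
      rw [add_sub_cancel, F.tgtVal]
    · by_cases he : e = e₀
      · subst he
        rw [sd_tgt_self, sd_len_self]
      · rw [sd_tgt_ne he, sd_len_ne he]
        exact F.tgtVal e
  · exact ⟨fun e s _ _ => rfl, fun s _ _ => rfl⟩

lemma exists_sd_up (G : RationalFunction (subdiv Γ e₀ t ht)) :
    ∃ F : RationalFunction Γ, SdCompat F G := by
  have ht' := ht
  obtain ⟨ht1, ht2⟩ := ht'
  have hjoin : G.eFun (some e₀) t = G.eFun none 0 := by
    have h1 := G.tgtVal (some e₀)
    rw [sd_len_self, sd_tgt_self] at h1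
    rw [h1, G.srcVal, sd_src_none]
  set g : ℝ → ℝ := fun s => if s ≤ t then G.eFun (some e₀) s else G.eFun none (-t + s) with hg
  have hg1 : ∀ s, s ≤ t → g s = G.eFun (some e₀) s := fun s hs => by simp [hg, hs]
  have hg2 : ∀ s, t ≤ s → g s = G.eFun none (-t + s) := by
    intro s hs
    rcases hs.eq_or_lt with h | h
    · subst h
      rw [hg1 _ le_rfl, hjoin]; simp
    · simp [hg, not_le.mpr h]
  refine ⟨{ vVal := fun v => G.vVal (some v)
            eFun := fun e => if e = e₀ then g else G.eFun (some e)
            pl := ?_, srcVal := ?_, tgtVal := ?_ }, ?_, ?_⟩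
  · intro e
    by_cases he : e = e₀
    · subst he
      simp only [if_true]
      refine plInt_of_local (Γ.len_pos e) ?_ ?_
      · intro x h0 h1
        rcases lt_or_ge x t with h | h
        · exact ⟨_, (rf_hasR G (some e) h0 (by rw [sd_len_self]; exact h)).congr h
            (fun s hs1 hs2 => hg1 s hs2)⟩
        · have h3 := rf_hasR G none (t := -t + x) (by linarith) (by rw [sd_len_none]; linarith)
          exact ⟨_, (HasR.shift.mpr h3).congr h1 (fun s hs1 hs2 => hg2 s (by linarith))⟩
      · intro x h0 h1
        rcases le_or_gt x t with h | h
        · exact ⟨_, (rf_hasL G (some e) h0 (by rw [sd_len_self]; exact h)).congr h0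
            (fun s hs1 hs2 => hg1 s (by linarith))⟩
        · have h3 := rf_hasL G none (t := -t + x) (by linarith) (by rw [sd_len_none]; linarith)
          exact ⟨_, (HasL.shift.mpr h3).congr h (fun s hs1 hs2 => hg2 s (by linarith))⟩
    · simp only [he, if_false]
      have := G.pl (some e)
      rwa [sd_len_ne he] at this
  · intro e
    by_cases he : e = e₀
    · subst he
      simp only [if_true]
      rw [hg1 0 ht1.le, G.srcVal, sd_src_some]
    · simp only [he, if_false]
      rw [G.srcVal, sd_src_some]
  · intro e
    by_cases he : e = e₀
    · subst he
      simp only [if_true]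
      have h1 := G.tgtVal none
      rw [sd_len_none, sd_tgt_none] at h1
      rw [hg2 _ ht2.le, ← h1]
      congr 1; ring
    · simp only [he, if_false]
      have h1 := G.tgtVal (some e)
      rwa [sd_len_ne he, sd_tgt_ne he] at h1
  · intro e s hs1 hs2
    by_cases he : e = e₀
    · subst he
      rw [sd_len_self] at hs2
      simp only [if_true]
      rw [hg1 s hs2]
    · simp [he]
  · intro s hs1 hs2
    simp only [if_true]
    rw [hg2 _ (by linarith)]
    congr 1; ring

lemma sd_linEquiv_down {D D' : Divisor Γ} (h : LinEquiv Γ D D') :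
    LinEquiv (subdiv Γ e₀ t ht) (fun p => D (sdPt Γ e₀ t ht p)) (fun p => D' (sdPt Γ e₀ t ht p)) := by
  obtain ⟨F, hF⟩ := h
  obtain ⟨G, hG⟩ := exists_sd_down (ht := ht) F
  exact ⟨G, fun p => by rw [hG.div_eq p]; exact hF _⟩

/-- Subdividing is inverse to a series reduction. -/
lemma sd_seriesReduction : SeriesReduction (subdiv Γ e₀ t ht) Γ := by
  refine ⟨none, some e₀, none, some (Γ.src e₀), some (Γ.tgt e₀), Option.some_ne_none _, ?_,
    Option.some_ne_none _, Option.some_ne_none _, ?_, ?_,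
    ⟨fun v => ⟨some v, Option.some_ne_none _⟩, fun v => v.1.get (Option.isSome_iff_ne_none.mpr v.2),
      fun v => rfl, fun v => by simp⟩, e₀,
    ⟨fun e => ⟨some e.1, ⟨fun h => e.2 (Option.some.inj h), Option.some_ne_none _⟩⟩,
     fun e => ⟨e.1.get (Option.isSome_iff_ne_none.mpr e.2.2), fun h => e.2.1 ((Option.some_get _).symm.trans (congrArg some h))⟩,
     fun e => rfl, fun e => by simp⟩, ?_, rfl, ?_, ?_⟩
  · unfold valence
    change ∑ e : Option Γ.E, _ = _
    rw [Fintype.sum_option, Finset.sum_eq_single e₀]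
    · simp [incid, sd_src_none, sd_tgt_none, sd_src_some, sd_tgt_self]
    · intro e _ he
      simp [incid, sd_src_some, sd_tgt_ne he]; exact he
    · simp
  · rw [sd_src_some, sd_tgt_self, Set.pair_comm]
  · rw [sd_src_none, sd_tgt_none]
  · rw [sd_len_self, sd_len_none]; ring
  · intro e
    left
    exact ⟨rfl, (sd_tgt_ne e.2).symm⟩
  · intro e
    exact sd_len_ne e.2

end

/-! ### Principal divisors have degree zero -/

lemma finsum_pt_of_vertex {Γ : MetricGraphModel} (D : Divisor Γ) (h : ∀ q, D (Sum.inr q) = 0) :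
    finsum D = ∑ v : Γ.V, D (Sum.inl v) := by
  rw [finsum_eq_finset_sum_of_support_subset D (s := Finset.univ.map Function.Embedding.inl)]
  · rw [Finset.sum_map]; rfl
  · rintro (v | q) hp
    · simp
    · exact absurd (h q) hp

lemma sum_ddiv {Γ : MetricGraphModel} (σ : Γ.E → ℤ) : ∑ v, ddiv Γ σ v = 0 := by
  unfold ddiv
  rw [Finset.sum_comm]
  refine Finset.sum_eq_zero fun e _ => ?_
  rw [Finset.sum_add_distrib]
  simp

/-- A function without interior bends: slopes on edges. -/
lemma linear_data {Γ : MetricGraphModel} (F : RationalFunction Γ)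
    (h : ∀ q, ratDiv F (Sum.inr q) = 0) :
    ∃ σ : Γ.E → ℤ, (∀ e, F.vVal (Γ.tgt e) - F.vVal (Γ.src e) = (σ e : ℝ) * Γ.len e) ∧
      ∀ v, ratDiv F (Sum.inl v) = ddiv Γ σ v := by
  have hl : ∀ e s, 0 ≤ s → s ≤ Γ.len e → F.eFun e s = F.eFun e 0 + (slopeR (F.eFun e) 0 : ℝ) * s := by
    intro e
    exact linear_of_no_bend (Γ.len_pos e) (F.pl e) (fun x h0 h1 => h ⟨e, x, h0, h1⟩)
  refine ⟨fun e => slopeR (F.eFun e) 0, fun e => ?_, fun v => ?_⟩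
  · rw [← F.tgtVal, ← F.srcVal, hl e _ (Γ.len_pos e).le le_rfl]; ring
  · rw [ratDiv_inl, ddiv]
    refine Finset.sum_congr rfl fun e _ => ?_
    have h1 : slopeL (F.eFun e) (Γ.len e) = - slopeR (F.eFun e) 0 :=
      slopeL_eq ((hasL_linear (F.eFun e 0) _ _).congr (Γ.len_pos e) (fun s h0 h1 => hl e s h0 h1))
    rw [h1]

lemma inr_finite {Γ : MetricGraphModel} {D : Divisor Γ} (h : (Function.support D).Finite) :
    {q | D (Sum.inr q) ≠ 0}.Finite :=
  Set.Finite.preimage (f := Sum.inr) (Sum.inr_injective.injOn) h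

/-- Subdividing at a point of a finite set of interior points makes the set smaller. -/
lemma sd_ncard_lt {Γ : MetricGraphModel} (S : Set Γ.Pt)
    (hfin : {q : Σ e : Γ.E, {t : ℝ // 0 < t ∧ t < Γ.len e} | Sum.inr q ∈ S}.Finite)
    (e₀ : Γ.E) (t : ℝ) (ht : 0 < t ∧ t < Γ.len e₀) (hS : Sum.inr ⟨e₀, t, ht⟩ ∈ S) :
    {q | sdPt Γ e₀ t ht (Sum.inr q) ∈ S}.Finite ∧ {q | sdPt Γ e₀ t ht (Sum.inr q) ∈ S}.ncard <
      {q : Σ e : Γ.E, {t : ℝ // 0 < t ∧ t < Γ.len e} | Sum.inr q ∈ S}.ncard := by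
  set A := {q : Σ e : Γ.E, {t : ℝ // 0 < t ∧ t < Γ.len e} | Sum.inr q ∈ S} with hA
  set B := {q | sdPt Γ e₀ t ht (Sum.inr q) ∈ S} with hB
  have hAfin : (Sum.inr '' A : Set Γ.Pt).Finite := hfin.image _
  set φ : _ → Γ.Pt := fun q => sdPt Γ e₀ t ht (Sum.inr q) with hφ
  have hinj : Function.Injective φ := sdPt_bij.1.comp Sum.inr_injective
  have hsub : φ '' B ⊂ (Sum.inr '' A : Set Γ.Pt) := by
    refine ⟨?_, ?_⟩
    · rintro _ ⟨⟨_ | e, s, hs⟩, hq, rfl⟩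
      · exact ⟨_, hq, rfl⟩
      · exact ⟨_, hq, rfl⟩
    · intro hcon
      obtain ⟨q, hq, hq'⟩ := hcon ⟨⟨e₀, t, ht⟩, hS, rfl⟩
      have : (Sum.inr q : (subdiv Γ e₀ t ht).Pt) = Sum.inl none := sdPt_bij.1 hq'
      cases this
  refine ⟨Set.Finite.of_finite_image (hAfin.subset hsub.1) hinj.injOn, ?_⟩
  have := Set.ncard_lt_ncard hsub hAfin
  rwa [Set.ncard_image_of_injective _ hinj, Set.ncard_image_of_injective _ Sum.inr_injective] at this

lemma ratDiv_degree_aux : ∀ (n : ℕ) (Γ : MetricGraphModel) (F : RationalFunction Γ),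
    {q | ratDiv F (Sum.inr q) ≠ 0}.Finite → {q | ratDiv F (Sum.inr q) ≠ 0}.ncard = n →
    finsum (ratDiv F) = 0 := by
  intro n
  induction n using Nat.strong_induction_on with
  | _ n ih =>
    intro Γ F hfin hn
    by_cases hex : ∃ q, ratDiv F (Sum.inr q) ≠ 0
    · obtain ⟨⟨e₀, t, ht⟩, hq⟩ := hex
      obtain ⟨G, hG⟩ := exists_sd_down (ht := ht) F
      have h1 : finsum (ratDiv G) = finsum (ratDiv F) :=
        finsum_eq_of_bijective _ sdPt_bij hG.div_eq
      have h2 := sd_ncard_lt {p | ratDiv F p ≠ 0} hfin e₀ t ht hq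
      have h3 : {q | sdPt Γ e₀ t ht (Sum.inr q) ∈ {p | ratDiv F p ≠ 0}} =
          {q | ratDiv G (Sum.inr q) ≠ 0} := by
        ext q; simp only [Set.mem_setOf_eq, hG.div_eq]
      rw [h3] at h2
      rw [← h1]
      exact ih _ (by rw [← hn]; exact h2.2) _ G h2.1 rfl
    · push Not at hex
      obtain ⟨σ, -, hσ⟩ := linear_data F hex
      rw [finsum_pt_of_vertex _ hex, Finset.sum_congr rfl fun v _ => hσ v, sum_ddiv]

lemma ratDiv_degree {Γ : MetricGraphModel} (F : RationalFunction Γ)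
    (h : (Function.support (ratDiv F)).Finite) : finsum (ratDiv F) = 0 :=
  ratDiv_degree_aux _ Γ F (inr_finite h) rfl

lemma LinEquiv.support_finite {Γ : MetricGraphModel} {D D' : Divisor Γ} (hD : DivFinSupp D)
    (hD' : DivFinSupp D') {F : RationalFunction Γ} (hF : ∀ p, D p = D' p + ratDiv F p) :
    (Function.support (ratDiv F)).Finite := by
  refine (Set.Finite.union hD hD').subset fun p hp => ?_
  by_contra hcon
  simp only [Set.mem_union, Function.mem_support, not_or, not_not] at hcon
  have := hF p
  rw [hcon.1, hcon.2] at this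
  exact hp (by linarith)

lemma LinEquiv.degree {Γ : MetricGraphModel} {D D' : Divisor Γ} (hD : DivFinSupp D)
    (hD' : DivFinSupp D') (h : LinEquiv Γ D D') : finsum D = finsum D' := by
  obtain ⟨F, hF⟩ := h
  have h1 := LinEquiv.support_finite hD hD' hF
  have h2 : D = fun p => D' p + ratDiv F p := funext hF
  rw [h2, finsum_add_distrib hD' h1, ratDiv_degree F h1, add_zero]

end Trig
/-! ## Part 4: rank at least one, and small vertex sets -/

namespace Trig

variable {Γ : MetricGraphModel}

/-- A convenient reformulation of being divisorially trigonal. -/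
def Rk (Γ : MetricGraphModel) : Prop :=
  ∃ D : Divisor Γ, DivFinSupp D ∧ finsum D = 3 ∧ ∀ p, ∃ B : Divisor Γ,
    DivEffective B ∧ DivFinSupp B ∧ 1 ≤ B p ∧ LinEquiv Γ D B

lemma unit_self (p : Γ.Pt) : unitDiv Γ p p = 1 := if_pos rfl

lemma unit_ne {p q : Γ.Pt} (h : q ≠ p) : unitDiv Γ p q = 0 := if_neg h

lemma unit_nonneg (p q : Γ.Pt) : 0 ≤ unitDiv Γ p q := by
  unfold unitDiv; split_ifs <;> norm_num

lemma unit_finsupp (p : Γ.Pt) : DivFinSupp (unitDiv Γ p) := by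
  refine (Set.finite_singleton p).subset fun q hq => ?_
  by_contra h
  exact hq (unit_ne h)

lemma unit_finsum (p : Γ.Pt) : finsum (unitDiv Γ p) = 1 := by
  rw [finsum_eq_single (unitDiv Γ p) p (fun q hq => unit_ne hq), unit_self]

lemma finsupp_add {D D' : Divisor Γ} (h : DivFinSupp D) (h' : DivFinSupp D') :
    DivFinSupp (fun p => D p + D' p) :=
  (Set.Finite.union h h').subset (Function.support_add D D')

lemma finsupp_sub {D D' : Divisor Γ} (h : DivFinSupp D) (h' : DivFinSupp D') :
    DivFinSupp (fun p => D p - D' p) :=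
  (Set.Finite.union h h').subset (Function.support_sub D D')

lemma finsum_add' {D D' : Divisor Γ} (h : DivFinSupp D) (h' : DivFinSupp D') :
    finsum (fun p => D p + D' p) = finsum D + finsum D' := finsum_add_distrib h h'

lemma finsum_sub' {D D' : Divisor Γ} (h : DivFinSupp D) (h' : DivFinSupp D') :
    finsum (fun p => D p - D' p) = finsum D - finsum D' := finsum_sub_distrib h h'

lemma le_finsum {D : Divisor Γ} (he : DivEffective D) (hf : DivFinSupp D) (p : Γ.Pt) :
    D p ≤ finsum D := by
  have := single_le_finsum p hf he
  exact this

lemma eff_zero {D : Divisor Γ} (he : DivEffective D) (hf : DivFinSupp D) (h : finsum D = 0) :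
    D = fun _ => 0 := by
  funext p
  have := le_finsum he hf p
  have := he p
  omega

lemma eff_decomp {D : Divisor Γ} (he : DivEffective D) (hf : DivFinSupp D) {n : ℕ}
    (h : finsum D = n + 1) : ∃ (p : Γ.Pt) (D' : Divisor Γ), DivEffective D' ∧ DivFinSupp D' ∧
      finsum D' = n ∧ 1 ≤ D p ∧ D = fun q => D' q + unitDiv Γ p q := by
  obtain ⟨p, hp⟩ : ∃ p, D p ≠ 0 := by
    by_contra hcon
    push Not at hcon
    have : finsum D = 0 := by
      have : D = fun _ => 0 := funext hcon
      rw [this]; exact finsum_zero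
    omega
  have hp1 : 1 ≤ D p := by have := he p; omega
  refine ⟨p, fun q => D q - unitDiv Γ p q, fun q => ?_, finsupp_sub hf (unit_finsupp p), ?_, hp1, ?_⟩
  · by_cases hq : q = p
    · subst hq
      simp only [unit_self]; omega
    · simp only [unit_ne hq]; have := he q; omega
  · rw [finsum_sub' hf (unit_finsupp p), unit_finsum]; omega
  · funext q; ring

lemma rk_iff : DivisoriallyTrigonal Γ ↔ Rk Γ := by
  constructor
  · rintro ⟨D, hD, h3, hr⟩
    refine ⟨D, hD, h3, fun p => ?_⟩
    obtain ⟨B, hB1, hB2, hB3⟩ := hr (unitDiv Γ p) (unit_nonneg p) (unit_finsupp p)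
      (by unfold divDegree; rw [unit_finsum]; rfl)
    refine ⟨fun q => B q + unitDiv Γ p q, fun q => add_nonneg (hB1 q) (unit_nonneg p q),
      finsupp_add hB2 (unit_finsupp p), ?_, ?_⟩
    · simp only [unit_self]; have := hB1 p; omega
    · have := Trig.LinEquiv.add_right hB3 (unitDiv Γ p)
      simpa using this
  · rintro ⟨D, hD, h3, hr⟩
    refine ⟨D, hD, h3, fun A hA1 hA2 hA3 => ?_⟩
    obtain ⟨p, A', h1, h2, h3', h4, h5⟩ := eff_decomp hA1 hA2 (n := 0) (by
      unfold divDegree at hA3; rw [hA3]; rfl)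
    have hA' := eff_zero h1 h2 h3'
    have hA : A = unitDiv Γ p := by rw [h5, hA']; simp
    obtain ⟨B, hB1, hB2, hB3, hB4⟩ := hr p
    refine ⟨fun q => B q - unitDiv Γ p q, fun q => ?_, finsupp_sub hB2 (unit_finsupp p), ?_⟩
    · by_cases hq : q = p
      · subst hq
        simp only [unit_self]; omega
      · simp only [unit_ne hq]; have := hB1 q; omega
    · have := Trig.LinEquiv.add_right hB4 (fun q => - unitDiv Γ p q)
      rw [hA]
      simpa [sub_eq_add_neg] using this

/-- Chips at both ends of an edge can be moved to any point of the edge. -/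
lemma move_to_interior {B : Divisor Γ} (he : DivEffective B) (hf : DivFinSupp B) (e : Γ.E)
    (hne : Γ.src e ≠ Γ.tgt e) (h1 : 1 ≤ B (Sum.inl (Γ.src e))) (h2 : 1 ≤ B (Sum.inl (Γ.tgt e)))
    (x : ℝ) (hx : 0 < x ∧ x < Γ.len e) :
    ∃ B' : Divisor Γ, DivEffective B' ∧ DivFinSupp B' ∧ 1 ≤ B' (Sum.inr ⟨e, x, hx⟩) ∧
      LinEquiv Γ B B' := by
  have key : ∀ s t, 0 ≤ s → s ≤ t → t ≤ Γ.len e → s - 0 = Γ.len e - t → (s = x ∨ t = x) →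
      ∃ B' : Divisor Γ, DivEffective B' ∧ DivFinSupp B' ∧ 1 ≤ B' (Sum.inr ⟨e, x, hx⟩) ∧
      LinEquiv Γ B B' := by
    intro s t hs hst ht h hor
    have hb := bump_equiv e 0 s t (Γ.len e) le_rfl hs hst ht le_rfl h
    rw [ptOn_zero, ptOn_len] at hb
    have heff : DivEffective (fun q => B q - unitDiv Γ (Sum.inl (Γ.src e)) q -
        unitDiv Γ (Sum.inl (Γ.tgt e)) q) := by
      intro q
      have hne' : (Sum.inl (Γ.src e) : Γ.Pt) ≠ Sum.inl (Γ.tgt e) := fun h => hne (Sum.inl.inj h)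
      by_cases hq : q = Sum.inl (Γ.src e)
      · subst hq
        simp only [unit_self, unit_ne hne']; omega
      · by_cases hq' : q = Sum.inl (Γ.tgt e)
        · subst hq'
          simp only [unit_self, unit_ne hne'.symm]; omega
        · simp only [unit_ne hq, unit_ne hq']; have := he q; omega
    have hb' := Trig.LinEquiv.add_right hb (fun q => B q - unitDiv Γ (Sum.inl (Γ.src e)) q -
        unitDiv Γ (Sum.inl (Γ.tgt e)) q)
    refine ⟨fun q => unitDiv Γ (ptOn Γ e s) q + unitDiv Γ (ptOn Γ e t) q +
      (B q - unitDiv Γ (Sum.inl (Γ.src e)) q - unitDiv Γ (Sum.inl (Γ.tgt e)) q),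
      fun q => add_nonneg (add_nonneg (unit_nonneg _ q) (unit_nonneg _ q)) (heff q),
      finsupp_add (finsupp_add (unit_finsupp _) (unit_finsupp _))
        (finsupp_sub (finsupp_sub hf (unit_finsupp _)) (unit_finsupp _)), ?_, ?_⟩
    · have h3 := heff (Sum.inr ⟨e, x, hx⟩)
      have h4 := unit_nonneg (ptOn Γ e s) (Sum.inr ⟨e, x, hx⟩)
      have h5 := unit_nonneg (ptOn Γ e t) (Sum.inr ⟨e, x, hx⟩)
      have h6 : 1 ≤ unitDiv Γ (ptOn Γ e s) (Sum.inr ⟨e, x, hx⟩) ∨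
          1 ≤ unitDiv Γ (ptOn Γ e t) (Sum.inr ⟨e, x, hx⟩) := by
        rcases hor with h | h
        · left; rw [unit_ptOn_inr, if_pos ⟨rfl, h.symm⟩]
        · right; rw [unit_ptOn_inr, if_pos ⟨rfl, h.symm⟩]
      simp only at h3 ⊢
      omega
    · have h7 : (fun p => unitDiv Γ (Sum.inl (Γ.src e)) p + unitDiv Γ (Sum.inl (Γ.tgt e)) p +
          (B p - unitDiv Γ (Sum.inl (Γ.src e)) p - unitDiv Γ (Sum.inl (Γ.tgt e)) p)) = B := by
        funext p; ring
      rw [h7] at hb'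
      exact hb'
  rcases le_total x (Γ.len e - x) with h | h
  · exact key x (Γ.len e - x) hx.1.le h (by linarith [hx.1]) (by ring) (Or.inl rfl)
  · exact key (Γ.len e - x) x (by linarith [hx.2]) h hx.2.le (by ring) (Or.inr rfl)

/-- Divisors supported on vertices. -/
def vDiv (β : Γ.V → ℤ) : Divisor Γ := fun p => match p with
  | Sum.inl v => β v
  | Sum.inr _ => 0

lemma vDiv_eff {β : Γ.V → ℤ} (h : ∀ v, 0 ≤ β v) : DivEffective (vDiv β) := by
  rintro (v | q)
  · exact h v
  · exact le_rfl

lemma vDiv_finsupp (β : Γ.V → ℤ) : DivFinSupp (vDiv β) := by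
  refine (Set.finite_range (Sum.inl : Γ.V → Γ.Pt)).subset ?_
  rintro (v | q) hp
  · exact ⟨v, rfl⟩
  · exact absurd rfl hp

lemma vDiv_finsum (β : Γ.V → ℤ) : finsum (vDiv β) = ∑ v, β v :=
  finsum_pt_of_vertex _ fun _ => rfl

lemma rk_of_card (hl : Γ.Loopless) (h : Fintype.card Γ.V = 2 ∨ Fintype.card Γ.V = 3) : Rk Γ := by
  obtain ⟨β, hβ1, hβ3⟩ : ∃ β : Γ.V → ℤ, (∀ v, 1 ≤ β v) ∧ ∑ v, β v = 3 := by
    rcases h with h | h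
    · have : Nonempty Γ.V := Fintype.card_pos_iff.mp (by omega)
      obtain ⟨w⟩ := this
      refine ⟨fun v => 1 + if v = w then 1 else 0, fun v => by dsimp only; split_ifs <;> norm_num, ?_⟩
      rw [Finset.sum_add_distrib]
      simp [h]
    · exact ⟨fun _ => 1, fun _ => le_rfl, by simp [h]⟩
  refine ⟨vDiv β, vDiv_finsupp β, by rw [vDiv_finsum, hβ3], ?_⟩
  have he : DivEffective (vDiv β) := vDiv_eff fun v => zero_le_one.trans (hβ1 v)
  rintro (v | ⟨e, x, hx⟩)
  · exact ⟨vDiv β, he, vDiv_finsupp β, hβ1 v, Trig.LinEquiv.refl _⟩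
  · exact move_to_interior he (vDiv_finsupp β) e (hl e) (hβ1 _) (hβ1 _) x hx

end Trig
/-! ## Part 5: from morphisms to divisors -/

namespace Trig

variable {Γ : MetricGraphModel}

lemma walk_rel (P : Γ.E → Prop) (R : Γ.V → Γ.V → Prop) (hr : ∀ u, R u u)
    (ht : ∀ u v w, R u v → R v w → R u w) (h1 : ∀ e, P e → R (Γ.src e) (Γ.tgt e))
    (h2 : ∀ e, P e → R (Γ.tgt e) (Γ.src e)) :
    ∀ (L : List (Γ.E × Bool)) (u v : Γ.V), IsWalk Γ L u v → (∀ x ∈ L, P x.1) → R u v := by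
  intro L
  induction L with
  | nil => intro u v h _; cases h; exact hr u
  | cons x xs ih =>
    intro u v h hP
    obtain ⟨h3, h4⟩ := h
    refine ht _ _ _ ?_ (ih _ _ h4 fun y hy => hP y (List.mem_cons_of_mem _ hy))
    have hx := hP x List.mem_cons_self
    rw [← h3]
    unfold dSrc dTgt
    split_ifs
    · exact h1 _ hx
    · exact h2 _ hx

lemma pl_finite {f : ℝ → ℝ} {L : ℝ} (h : PLInt f L) :
    {x | 0 < x ∧ x < L ∧ slopeR f x + slopeL f x ≠ 0}.Finite := by
  obtain ⟨n, t, ht0, htL, hmono, hlin⟩ := h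
  refine (Set.finite_range t).subset ?_
  rintro x ⟨h0, h1, h2⟩
  by_contra hcon
  apply h2
  obtain ⟨i, hi1, hi2⟩ := partition_find n t x (by rw [ht0]; exact h0.le) (by rwa [htL])
  have hi1' : t i.castSucc < x := lt_of_le_of_ne hi1 fun h => hcon ⟨_, h⟩
  obtain ⟨m, hm⟩ := hlin i
  have hR : HasR f x m := by
    refine ⟨t i.succ - x, by linarith, fun s hs => ?_⟩
    rw [hm s ⟨by linarith [hs.1], by linarith [hs.2]⟩, hm x ⟨hi1, hi2.le⟩]
    ring
  have hL : HasL f x (-m) := by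
    refine ⟨x - t i.castSucc, by linarith, fun s hs => ?_⟩
    rw [hm s ⟨by linarith [hs.1], by linarith [hs.2]⟩, hm x ⟨hi1, hi2.le⟩]
    push_cast
    ring
  rw [slopeR_eq hR, slopeL_eq hL]; ring

lemma ratDiv_finsupp (F : RationalFunction Γ) : DivFinSupp (ratDiv F) := by
  have h2 : (⋃ e : Γ.E, (fun x => ptOn Γ e x) ''
      {x | 0 < x ∧ x < Γ.len e ∧ slopeR (F.eFun e) x + slopeL (F.eFun e) x ≠ 0}).Finite :=
    Set.finite_iUnion fun e => (pl_finite (F.pl e)).image _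
  refine ((Set.finite_range (Sum.inl : Γ.V → Γ.Pt)).union h2).subset ?_
  rintro (v | ⟨e, x, hx⟩) hp
  · exact Or.inl ⟨v, rfl⟩
  · refine Or.inr (Set.mem_iUnion.mpr ⟨e, x, ⟨hx.1, hx.2, hp⟩, ptOn_mid e x hx⟩)

lemma finsum_ratDiv (F : RationalFunction Γ) : finsum (ratDiv F) = 0 :=
  ratDiv_degree F (ratDiv_finsupp F)

lemma tree_cut {T : MetricGraphModel} (hT : T.IsTreeModel) (e' : T.E) :
    ∃ S : Set T.V, T.src e' ∈ S ∧ T.tgt e' ∉ S ∧ ∀ e, e ≠ e' → (T.src e ∈ S ↔ T.tgt e ∈ S) := by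
  let G : SimpleGraph T.V := SimpleGraph.fromRel
    (fun u v => ∃ e, e ≠ e' ∧ T.src e = u ∧ T.tgt e = v)
  have hG : ∀ e, e ≠ e' → G.Reachable (T.src e) (T.tgt e) := by
    intro e he
    by_cases h : T.src e = T.tgt e
    · rw [h]
    · exact SimpleGraph.Adj.reachable
        ((SimpleGraph.fromRel_adj _ _ _).mpr ⟨h, Or.inl ⟨e, he, rfl, rfl⟩⟩)
  refine ⟨{v | G.Reachable (T.src e') v}, SimpleGraph.Reachable.refl _, ?_, ?_⟩
  · intro hcon
    have hconn : G.Connected := by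
      have hne := hT.1.1
      refine ⟨fun u v => ?_⟩
      obtain ⟨L, hL⟩ := hT.1.2 u v
      have hall : ∀ e, G.Reachable (T.src e) (T.tgt e) := by
        intro e
        by_cases he : e = e'
        · subst he; exact hcon
        · exact hG e he
      exact walk_rel (fun _ => True) G.Reachable (fun u => SimpleGraph.Reachable.refl u)
        (fun _ _ _ h h' => h.trans h') (fun e _ => hall e) (fun e _ => (hall e).symm) L u v hL
        (fun _ _ => trivial)
    have h1 := hconn.card_vert_le_card_edgeSet_add_one
    have h2 : Nat.card G.edgeSet ≤ Nat.card {e : T.E // e ≠ e'} := by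
      have hsub : G.edgeSet ⊆ Set.range
          (fun e : {e : T.E // e ≠ e'} => s(T.src e.1, T.tgt e.1)) := by
        intro z
        induction z using Sym2.ind with
        | _ u v =>
          intro hz
          rw [SimpleGraph.mem_edgeSet] at hz
          rcases ((SimpleGraph.fromRel_adj _ _ _).mp hz).2 with ⟨e, he, h1, h2⟩ | ⟨e, he, h1, h2⟩
          · exact ⟨⟨e, he⟩, by simp only [h1, h2]⟩
          · exact ⟨⟨e, he⟩, by simp only [h1, h2]; exact Sym2.eq_swap⟩
      refine (Nat.card_mono (Set.finite_range _) hsub).trans ?_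
      exact Finite.card_range_le _
    have h3 : Nat.card {e : T.E // e ≠ e'} = Fintype.card T.E - 1 := by
      rw [Nat.card_eq_fintype_card, Fintype.card_subtype_compl]; simp
    have h4 := hT.2
    rw [Nat.card_eq_fintype_card] at h1
    have h5 : 0 < Fintype.card T.E := Fintype.card_pos_iff.mpr ⟨e'⟩
    omega
  · intro e he
    exact ⟨fun h => h.trans (hG e he), fun h => h.trans (hG e he).symm⟩

section

variable {Δ T : MetricGraphModel} (φ : MGMorphism Δ T)

lemma locDeg_zero (v : Δ.V) (e' : T.E) (h : ¬ T.Incident e' (φ.vMap v)) : φ.locDeg v e' = 0 := by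
  unfold MGMorphism.locDeg
  refine Finset.sum_eq_zero fun e _ => ?_
  split_ifs with he
  · have h1 : Δ.incid e v = 0 := by
      unfold incid
      have := φ.edge_ok e e' he
      rw [if_neg, if_neg]
      · rintro rfl
        exact h (this.elim (fun h => Or.inr h.2.symm) (fun h => Or.inl h.2.symm))
      · rintro rfl
        exact h (this.elim (fun h => Or.inl h.1.symm) (fun h => Or.inr h.1.symm))
    rw [h1, mul_zero]
  · rfl

/-- The fibre divisor over a vertex. -/
noncomputable def fib (m : Δ.V → ℕ) (t : T.V) : Divisor Δ :=
  vDiv fun v => if φ.vMap v = t then (m v : ℤ) else 0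

lemma fib_eff (m : Δ.V → ℕ) (t : T.V) : DivEffective (fib φ m t) :=
  vDiv_eff fun v => by split_ifs <;> simp

/-- The basic pulled back function. -/
lemma pull_fun (hT : T.IsTreeModel) (m : Δ.V → ℕ)
    (hm : ∀ v e', T.Incident e' (φ.vMap v) → φ.locDeg v e' = m v) (e' : T.E) :
    ∃ (g : Δ.V → ℝ) (σ : Δ.E → ℤ) (h : ∀ e, g (Δ.tgt e) - g (Δ.src e) = (σ e : ℝ) * Δ.len e),
      (∀ p, fib φ m (T.src e') p = fib φ m (T.tgt e') p + ratDiv (linF g σ h) p) ∧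
      ∀ e, φ.eMap e = Sum.inl e' → σ e ≠ 0 := by
  obtain ⟨S, hS1, hS2, hS3⟩ := tree_cut hT e'
  have hends : ∀ e, φ.eMap e = Sum.inl e' →
      (φ.vMap (Δ.src e) ∈ S ∧ φ.vMap (Δ.tgt e) ∉ S) ∨ (φ.vMap (Δ.src e) ∉ S ∧ φ.vMap (Δ.tgt e) ∈ S) := by
    intro e he
    rcases φ.edge_ok e e' he with ⟨h1, h2⟩ | ⟨h1, h2⟩
    · left; rw [h1, h2]; exact ⟨hS1, hS2⟩
    · right; rw [h1, h2]; exact ⟨hS2, hS1⟩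
  have hends' : ∀ e, φ.eMap e ≠ Sum.inl e' → (φ.vMap (Δ.src e) ∈ S ↔ φ.vMap (Δ.tgt e) ∈ S) := by
    intro e he
    rcases h : φ.eMap e with e'' | v'
    · have hne : e'' ≠ e' := by rintro rfl; exact he h
      rcases φ.edge_ok e e'' h with ⟨h1, h2⟩ | ⟨h1, h2⟩
      · rw [h1, h2]; exact hS3 e'' hne
      · rw [h1, h2]; exact (hS3 e'' hne).symm
    · obtain ⟨h1, h2⟩ := φ.contract_ok e v' h
      rw [h1, h2]
  set g : Δ.V → ℝ := fun v => if φ.vMap v ∈ S then 0 else T.len e' with hg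
  set σ : Δ.E → ℤ := fun e => if φ.eMap e = Sum.inl e' then
    (if φ.vMap (Δ.src e) ∈ S then (φ.mu e : ℤ) else -(φ.mu e : ℤ)) else 0 with hσ
  have hgs : ∀ e, g (Δ.tgt e) - g (Δ.src e) = (σ e : ℝ) * Δ.len e := by
    intro e
    by_cases he : φ.eMap e = Sum.inl e'
    · have hl := φ.len_ok e e' he
      rcases hends e he with ⟨h1, h2⟩ | ⟨h1, h2⟩
      · simp only [hg, hσ, he, h1, h2, if_true, if_false]
        push_cast
        linarith
      · simp only [hg, hσ, he, h1, h2, if_true, if_false]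
        push_cast
        linarith
    · have := hends' e he
      simp only [hg, hσ, he, if_false, this]
      simp
  refine ⟨g, σ, hgs, ?_, ?_⟩
  · have hd : ∀ v, ddiv Δ σ v = if φ.vMap v ∈ S then (φ.locDeg v e' : ℤ) else -(φ.locDeg v e' : ℤ) := by
      intro v
      unfold ddiv MGMorphism.locDeg
      push_cast
      by_cases hv : φ.vMap v ∈ S
      · rw [if_pos hv]
        refine Finset.sum_congr rfl fun e _ => ?_
        by_cases he : φ.eMap e = Sum.inl e'
        · simp only [hσ, he, if_true, incid]
          rcases hends e he with ⟨h1, h2⟩ | ⟨h1, h2⟩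
          · have h3 : Δ.tgt e ≠ v := by rintro rfl; exact h2 hv
            simp [h1, h3]
          · have h3 : Δ.src e ≠ v := by rintro rfl; exact h1 hv
            simp [h1, h3]
        · simp [hσ, he]
      · rw [if_neg hv, ← Finset.sum_neg_distrib]
        refine Finset.sum_congr rfl fun e _ => ?_
        by_cases he : φ.eMap e = Sum.inl e'
        · simp only [hσ, he, if_true, incid]
          rcases hends e he with ⟨h1, h2⟩ | ⟨h1, h2⟩
          · have h3 : Δ.src e ≠ v := by rintro rfl; exact hv h1
            by_cases h4 : Δ.tgt e = v <;> simp [h1, h3, h4]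
          · have h3 : Δ.tgt e ≠ v := by rintro rfl; exact hv h2
            by_cases h4 : Δ.src e = v <;> simp [h1, h3, h4, hv]
        · simp [hσ, he]
    rintro (v | q)
    · rw [ratDiv_linF_inl, hd v]
      show (if φ.vMap v = T.src e' then (m v : ℤ) else 0) =
        (if φ.vMap v = T.tgt e' then (m v : ℤ) else 0) + _
      by_cases h1 : φ.vMap v = T.src e'
      · have h2 : φ.vMap v ∈ S := by rw [h1]; exact hS1
        have h3 : φ.vMap v ≠ T.tgt e' := by intro h; rw [h] at h2; exact hS2 h2
        rw [if_pos h1, if_neg h3, if_pos h2, hm v e' (Or.inl h1.symm)]; ring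
      · by_cases h2 : φ.vMap v = T.tgt e'
        · have h3 : φ.vMap v ∉ S := by rw [h2]; exact hS2
          rw [if_neg h1, if_pos h2, if_neg h3, hm v e' (Or.inr h2.symm)]; ring
        · rw [if_neg h1, if_neg h2, locDeg_zero φ v e' (fun h => h.elim (fun h => h1 h.symm) (fun h => h2 h.symm))]
          simp
    · rw [ratDiv_linF_inr]
      rfl
  · intro e he
    have hmu : (φ.mu e : ℤ) ≠ 0 := by
      intro h
      obtain ⟨v', hv'⟩ := (φ.mu_zero e).mp (by exact_mod_cast h)
      rw [he] at hv'
      cases hv'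
    simp only [hσ, he, if_true]
    split_ifs
    · exact hmu
    · simpa using hmu

lemma rk_of_morphism (hl : Δ.Loopless) (hne : Nonempty Δ.V) (hT : T.IsTreeModel)
    (hh : φ.Harmonic) (hn : φ.Nondegenerate) (hd : φ.HasDegree 3) : Rk Δ := by
  choose ε hε1 hε2 using hn
  set m : Δ.V → ℕ := fun v => φ.locDeg v (ε v) with hm0
  have hm : ∀ v e', T.Incident e' (φ.vMap v) → φ.locDeg v e' = m v :=
    fun v e' h => hh v e' (ε v) h (hε1 v)
  obtain ⟨v₀⟩ := hne
  have hstep : ∀ e', LinEquiv Δ (fib φ m (T.src e')) (fib φ m (T.tgt e')) := by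
    intro e'
    obtain ⟨g, σ, h, h1, -⟩ := pull_fun φ hT m hm e'
    exact ⟨_, h1⟩
  have hall : ∀ s t, LinEquiv Δ (fib φ m s) (fib φ m t) := by
    intro s t
    obtain ⟨L, hL⟩ := hT.1.2 s t
    exact walk_rel (fun _ => True) (fun s t => LinEquiv Δ (fib φ m s) (fib φ m t))
      (fun _ => Trig.LinEquiv.refl _) (fun _ _ _ h h' => Trig.LinEquiv.trans h h')
      (fun e _ => hstep e) (fun e _ => Trig.LinEquiv.symm (hstep e)) L s t hL (fun _ _ => trivial)
  set e₀ := ε v₀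
  refine ⟨fib φ m (T.src e₀), vDiv_finsupp _, ?_, ?_⟩
  · unfold fib
    rw [vDiv_finsum]
    have hd0 := hd e₀
    obtain ⟨S, hS1, hS2, -⟩ := tree_cut hT e₀
    have hne : T.src e₀ ≠ T.tgt e₀ := by intro h; rw [h] at hS1; exact hS2 hS1
    have h1 : ∀ v, (if φ.vMap v = T.src e₀ then (m v : ℤ) else 0) =
        ∑ e : Δ.E, if φ.eMap e = Sum.inl e₀ then
          (if φ.vMap v = T.src e₀ then (φ.mu e * Δ.incid e v : ℤ) else 0) else 0 := by
      intro v
      by_cases hv : φ.vMap v = T.src e₀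
      · simp only [hv, if_true]
        rw [← hm v e₀ (Or.inl hv.symm)]
        unfold MGMorphism.locDeg
        push_cast
        rfl
      · simp [hv]
    rw [Finset.sum_congr rfl fun v _ => h1 v, Finset.sum_comm]
    have h2 : ((∑ e : Δ.E, if φ.eMap e = Sum.inl e₀ then φ.mu e else 0 : ℕ) : ℤ) = (3 : ℕ) :=
      congrArg _ hd0
    push_cast at h2
    rw [← h2]
    refine Finset.sum_congr rfl fun e _ => ?_
    by_cases he : φ.eMap e = Sum.inl e₀
    · simp only [he, if_true]
      have h3 : ∀ v, (if φ.vMap v = T.src e₀ then (φ.mu e * Δ.incid e v : ℤ) else 0) =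
        (if Δ.src e = v then (if φ.vMap v = T.src e₀ then (φ.mu e : ℤ) else 0) else 0) +
        (if Δ.tgt e = v then (if φ.vMap v = T.src e₀ then (φ.mu e : ℤ) else 0) else 0) := by
        intro v
        unfold incid
        by_cases h1 : φ.vMap v = T.src e₀ <;> by_cases h2 : Δ.src e = v <;>
          by_cases h3 : Δ.tgt e = v <;> simp [h1, h2, h3]
        ring
      rw [Finset.sum_congr rfl fun v _ => h3 v, Finset.sum_add_distrib]
      simp only [Finset.sum_ite_eq, Finset.mem_univ, if_true]
      rcases φ.edge_ok e e₀ he with ⟨h4, h5⟩ | ⟨h4, h5⟩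
      · rw [h4, h5, if_pos rfl, if_neg hne.symm, add_zero]
      · rw [h4, h5, if_pos rfl, if_neg hne.symm, zero_add]
    · simp [he]
  · have hvert : ∀ v, 1 ≤ fib φ m (φ.vMap v) (Sum.inl v) := by
      intro v
      show (1 : ℤ) ≤ if φ.vMap v = φ.vMap v then (m v : ℤ) else 0
      rw [if_pos rfl]
      exact_mod_cast hε2 v
    rintro (v | ⟨e, x, hx⟩)
    · exact ⟨fib φ m (φ.vMap v), fib_eff φ m _, vDiv_finsupp _, hvert v, hall _ _⟩
    · rcases he : φ.eMap e with e' | v'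
      · obtain ⟨g, σ, h, h1, h2⟩ := pull_fun φ hT m hm e'
        set F := linF g σ h with hF
        refine ⟨fun p => fib φ m (T.tgt e') p + ratDiv (maxF F (F.eFun e x)) p, ?_,
          finsupp_add (vDiv_finsupp _) (ratDiv_finsupp _), ?_, ?_⟩
        · intro p
          have h3 := fib_eff φ m (T.tgt e') p
          have h4 := fib_eff φ m (T.src e') p
          have h5 := h1 p
          rcases ratDiv_max_ge F (F.eFun e x) p with h6 | h6
          · dsimp only; omega
          · dsimp only; omega
        · have h3 := fib_eff φ m (T.tgt e') (Sum.inr ⟨e, x, hx⟩)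
          have h4 := ratDiv_max_pos F e x hx (by rw [hF, slopeR_linF, slopeL_linF]; ring)
            (by rw [hF, slopeR_linF]; exact h2 e he)
          dsimp only
          omega
        · refine Trig.LinEquiv.trans (hall _ (T.tgt e')) (Trig.LinEquiv.symm ?_)
          exact ⟨maxF F (F.eFun e x), fun p => rfl⟩
      · obtain ⟨h1, h2⟩ := φ.contract_ok e v' he
        have h3 := hvert (Δ.src e)
        have h4 := hvert (Δ.tgt e)
        rw [h1] at h3
        rw [h2] at h4
        obtain ⟨B, hB1, hB2, hB3, hB4⟩ := move_to_interior (fib_eff φ m v') (vDiv_finsupp _) e (hl e)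
          h3 h4 x hx
        exact ⟨B, hB1, hB2, hB3, Trig.LinEquiv.trans (hall _ _) hB4⟩

end

end Trig
/-! ## Part 6: transfer along reduction steps -/

namespace Trig

section

variable {Δ Δ' : MetricGraphModel} (fv : Δ'.V → Δ.V) (fe : Δ'.E → Δ.E)

/-- The orientations agree. -/
def Straight (e : Δ'.E) : Prop :=
  fv (Δ'.src e) = Δ.src (fe e) ∧ fv (Δ'.tgt e) = Δ.tgt (fe e)

variable (hlen : ∀ e, Δ.len (fe e) = Δ'.len e)

/-- The parameter change on an edge. -/
noncomputable def par (e : Δ'.E) (s : ℝ) : ℝ :=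
  if Straight fv fe e then s else Δ.len (fe e) - s

lemma par_mem (hlen : ∀ e, Δ.len (fe e) = Δ'.len e) (e : Δ'.E) (s : ℝ) (h : 0 < s ∧ s < Δ'.len e) :
    0 < par fv fe e s ∧ par fv fe e s < Δ.len (fe e) := by
  unfold par
  rw [hlen]
  split_ifs
  · exact h
  · constructor <;> linarith [h.1, h.2]

/-- The induced embedding of points. -/
noncomputable def emb : Δ'.Pt → Δ.Pt
  | Sum.inl v => Sum.inl (fv v)
  | Sum.inr ⟨e, s⟩ => Sum.inr ⟨fe e, par fv fe e s.1, par_mem fv fe hlen e s.1 s.2⟩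

lemma emb_inj (hfv : Function.Injective fv) (hfe : Function.Injective fe) :
    Function.Injective (emb fv fe hlen) := by
  rintro (v | ⟨e, s, hs⟩) (v' | ⟨e', s', hs'⟩) h
  · exact congrArg Sum.inl (hfv (Sum.inl.inj h))
  · cases h
  · cases h
  · have h2 := pt_inr_eq.mp h
    have h1 := hfe h2.1
    subst h1
    have h3 : s = s' := by
      have := h2.2
      unfold par at this
      split_ifs at this
      · exact this
      · linarith
    subst h3
    rfl

lemma emb_fun (hfv : Function.Injective fv) (hfe : Function.Injective fe)
    (hends : ∀ e, sameEndsMap Δ' Δ fv e (fe e)) (F : RationalFunction Δ) :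
    ∃ F' : RationalFunction Δ', (∀ q, ratDiv F' (Sum.inr q) = ratDiv F (emb fv fe hlen (Sum.inr q))) ∧
      ∀ v, (∀ e, Δ.Incident e (fv v) → ∃ e', fe e' = e) →
        ratDiv F' (Sum.inl v) = ratDiv F (Sum.inl (fv v)) := by
  have hflip : ∀ e, ¬ Straight fv fe e → fv (Δ'.src e) = Δ.tgt (fe e) ∧ fv (Δ'.tgt e) = Δ.src (fe e) :=
    fun e he => (hends e).resolve_left he
  have hR : ∀ e s, 0 ≤ s → s < Δ'.len e → HasR (fun s => F.eFun (fe e) (par fv fe e s)) s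
      (if Straight fv fe e then slopeR (F.eFun (fe e)) s else
        slopeL (F.eFun (fe e)) (Δ.len (fe e) - s)) := by
    intro e s h0 h1
    unfold par
    split_ifs with he
    · exact rf_hasR F (fe e) h0 (by rw [hlen]; exact h1)
    · exact HasL.flip (rf_hasL F (fe e) (by rw [hlen]; linarith) (by linarith))
  have hL : ∀ e s, 0 < s → s ≤ Δ'.len e → HasL (fun s => F.eFun (fe e) (par fv fe e s)) s
      (if Straight fv fe e then slopeL (F.eFun (fe e)) s else
        slopeR (F.eFun (fe e)) (Δ.len (fe e) - s)) := by
    intro e s h0 h1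
    unfold par
    split_ifs with he
    · exact rf_hasL F (fe e) h0 (by rw [hlen]; exact h1)
    · exact HasR.flip (rf_hasR F (fe e) (by rw [hlen]; linarith) (by linarith))
  refine ⟨{ vVal := fun v => F.vVal (fv v)
            eFun := fun e s => F.eFun (fe e) (par fv fe e s)
            pl := ?_, srcVal := ?_, tgtVal := ?_ }, ?_, ?_⟩
  · intro e
    exact plInt_of_local (Δ'.len_pos e) (fun s h0 h1 => ⟨_, hR e s h0 h1⟩)
      (fun s h0 h1 => ⟨_, hL e s h0 h1⟩)
  · intro e
    by_cases he : Straight fv fe e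
    · simp only [par, he, if_true]
      rw [F.srcVal, he.1]
    · simp only [par, he, if_false, sub_zero]
      rw [F.tgtVal, (hflip e he).1]
  · intro e
    by_cases he : Straight fv fe e
    · simp only [par, he, if_true]
      rw [← hlen, F.tgtVal, he.2]
    · simp only [par, he, if_false]
      rw [← hlen, sub_self, F.srcVal, (hflip e he).2]
  · rintro ⟨e, s, h0, h1⟩
    rw [ratDiv_inr]
    show slopeR (fun s => F.eFun (fe e) (par fv fe e s)) s +
      slopeL (fun s => F.eFun (fe e) (par fv fe e s)) s =
      slopeR (F.eFun (fe e)) (par fv fe e s) + slopeL (F.eFun (fe e)) (par fv fe e s)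
    rw [slopeR_eq (hR e s h0.le h1), slopeL_eq (hL e s h0 h1.le)]
    unfold par
    split_ifs
    · rfl
    · ring
  · intro v hv
    rw [ratDiv_inl, ratDiv_inl]
    refine Fintype.sum_of_injective fe hfe _ _ ?_ ?_
    · intro e he
      have h1 : Δ.src e ≠ fv v := fun h => he (hv e (Or.inl h))
      have h2 : Δ.tgt e ≠ fv v := fun h => he (hv e (Or.inr h))
      rw [if_neg h1, if_neg h2, add_zero]
    · intro e
      dsimp only
      rw [slopeR_eq (hR e 0 le_rfl (Δ'.len_pos e)), slopeL_eq (hL e _ (Δ'.len_pos e) le_rfl)]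
      by_cases he : Straight fv fe e
      · simp only [he, if_true]
        rw [← he.1, ← he.2, hlen]
        simp only [hfv.eq_iff]
      · simp only [he, if_false]
        rw [← (hflip e he).1, ← (hflip e he).2, hlen]
        simp only [hfv.eq_iff, sub_zero, sub_self]
        rw [add_comm]

lemma finsum_comp_le {D : Divisor Δ} (he : DivEffective D) (hf : DivFinSupp D) {ι : Δ'.Pt → Δ.Pt}
    (hι : Function.Injective ι) : finsum (fun q => D (ι q)) ≤ finsum D := by
  rw [← finsum_mem_range (f := D) hι, finsum_mem_def]
  have hfi : DivFinSupp (Γ := Δ) (fun p => Set.indicator (Set.range ι) D p) := by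
    refine hf.subset ?_
    intro p hp
    simp only [Function.mem_support] at hp ⊢
    intro h0
    apply hp
    rw [Set.indicator_apply, h0, ite_self]
  have h1 := finsum_sub' hf hfi
  have h2 : 0 ≤ finsum (fun p => D p - Set.indicator (Set.range ι) D p) := by
    refine finsum_nonneg fun p => ?_
    have := he p
    rw [Set.indicator_apply]
    split_ifs <;> linarith
  have h3 : finsum (fun p => Set.indicator (Set.range ι) D p) ≤ finsum D := by linarith
  simpa only [Set.indicator_apply] using h3

lemma rk_embed (hfv : Function.Injective fv) (hfe : Function.Injective fe)
    (hends : ∀ e, sameEndsMap Δ' Δ fv e (fe e)) (hlen : ∀ e, Δ.len (fe e) = Δ'.len e) (a : Δ'.V)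
    (ha : ∀ v, v ≠ a → ∀ e, Δ.Incident e (fv v) → ∃ e', fe e' = e) (h : Rk Δ) : Rk Δ' := by
  have hι := emb_inj fv fe hlen hfv hfe
  set ι := emb fv fe hlen with hιdef
  set push : Divisor Δ → Divisor Δ' := fun D q =>
    D (ι q) + (finsum D - finsum (fun q => D (ι q))) * unitDiv Δ' (Sum.inl a) q with hpush
  have hcf : ∀ D : Divisor Δ, DivFinSupp D → DivFinSupp (fun q => D (ι q)) :=
    fun D hD => Set.Finite.preimage hι.injOn hD
  have huf : ∀ c : ℤ, DivFinSupp (fun q => c * unitDiv Δ' (Sum.inl a) q) := fun c =>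
    (unit_finsupp (Sum.inl a)).subset (Function.support_mul_subset_right _ _)
  have hpf : ∀ D, DivFinSupp D → DivFinSupp (push D) := fun D hD => finsupp_add (hcf D hD) (huf _)
  have hpd : ∀ D, DivFinSupp D → finsum (push D) = finsum D := by
    intro D hD
    rw [hpush]
    simp only
    rw [finsum_add' (hcf D hD) (huf _), ← mul_finsum _ _, unit_finsum]
    ring
  have hpe : ∀ D, DivEffective D → DivFinSupp D → ∀ q, D (ι q) ≤ push D q := by
    intro D hD1 hD2 q
    have h1 := finsum_comp_le hD1 hD2 hι
    have h2 := unit_nonneg (Sum.inl a) q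
    simp only [hpush]
    nlinarith [mul_nonneg (sub_nonneg.mpr h1) h2]
  have hpl : ∀ D B, DivFinSupp D → DivFinSupp B → LinEquiv Δ D B → LinEquiv Δ' (push D) (push B) := by
    rintro D B hD hB hDB
    have hdeg := Trig.LinEquiv.degree hD hB hDB
    obtain ⟨F, hF⟩ := hDB
    obtain ⟨F', h1, h2⟩ := emb_fun fv fe hlen hfv hfe hends F
    refine ⟨F', ?_⟩
    have hoff : ∀ q, q ≠ Sum.inl a → push D q = push B q + ratDiv F' q := by
      intro q hq
      simp only [hpush, unit_ne hq, mul_zero, add_zero]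
      rw [hF (ι q)]
      congr 1
      rcases q with v | q
      · exact (h2 v (ha v fun h => hq (congrArg _ h))).symm
      · exact (h1 q).symm
    intro q
    by_cases hq : q = Sum.inl a
    · subst hq
      have h3 : finsum (fun q => push D q - (push B q + ratDiv F' q)) = 0 := by
        rw [finsum_sub' (hpf D hD) (finsupp_add (hpf B hB) (ratDiv_finsupp _)),
          finsum_add' (hpf B hB) (ratDiv_finsupp _), hpd D hD, hpd B hB, finsum_ratDiv, hdeg]
        ring
      rw [finsum_eq_single _ (Sum.inl a) (fun q hq => by rw [hoff q hq, sub_self])] at h3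
      linarith
    · exact hoff q hq
  obtain ⟨D, hD1, hD2, hD3⟩ := h
  refine ⟨push D, hpf D hD1, by rw [hpd D hD1, hD2], fun q => ?_⟩
  obtain ⟨B, hB1, hB2, hB3, hB4⟩ := hD3 (ι q)
  exact ⟨push B, fun q => (hB1 (ι q)).trans (hpe B hB1 hB2 q), hpf B hB2,
    hB3.trans (hpe B hB1 hB2 q), hpl D B hD1 hB2 hB4⟩

end

lemma Rk.nonempty {Γ : MetricGraphModel} (h : Rk Γ) : Nonempty Γ.V := by
  obtain ⟨D, -, h3, -⟩ := h
  by_contra hcon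
  have : IsEmpty Γ.Pt := by
    refine ⟨?_⟩
    rintro (v | ⟨e, -⟩)
    · exact hcon ⟨v⟩
    · exact hcon ⟨Γ.src e⟩
  rw [finsum_of_isEmpty] at h3
  omega

lemma rk_sd {Γ : MetricGraphModel} {e₀ : Γ.E} {t : ℝ} {ht : 0 < t ∧ t < Γ.len e₀}
    (h : Rk (subdiv Γ e₀ t ht)) : Rk Γ := by
  obtain ⟨D, hD1, hD2, hD3⟩ := h
  set ψ := Equiv.ofBijective (sdPt Γ e₀ t ht) sdPt_bij with hψ
  have hf : ∀ D : Divisor (subdiv Γ e₀ t ht), DivFinSupp D → DivFinSupp (fun p => D (ψ.symm p)) :=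
    fun D hD => Set.Finite.preimage ψ.symm.injective.injOn hD
  refine ⟨fun p => D (ψ.symm p), hf D hD1, ?_, fun p => ?_⟩
  · rw [← hD2]
    exact finsum_eq_of_bijective ψ.symm ψ.symm.bijective fun p => rfl
  · obtain ⟨B, hB1, hB2, hB3, G, hG⟩ := hD3 (ψ.symm p)
    refine ⟨fun p => B (ψ.symm p), fun p => hB1 _, hf B hB2, hB3, ?_⟩
    obtain ⟨F, hF⟩ := exists_sd_up G
    refine ⟨F, fun p => ?_⟩
    show D (ψ.symm p) = B (ψ.symm p) + ratDiv F p
    rw [hG (ψ.symm p), hF.div_eq]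
    congr 2
    exact ψ.apply_symm_apply p

lemma rk_iso {Δ Δ' : MetricGraphModel} (ι : MGMIso Δ Δ') (h : Rk Δ) : Rk Δ' := by
  obtain ⟨a⟩ := h.nonempty
  refine rk_embed (fun v => ι.vEquiv.symm v) (fun e => ι.eEquiv.symm e) ι.vEquiv.symm.injective
    ι.eEquiv.symm.injective ?_ ?_ (ι.vEquiv a) (fun v _ e _ => ⟨ι.eEquiv e, by simp⟩) h
  · intro e
    have := ι.ends (ι.eEquiv.symm e)
    unfold sameEndsMap at this ⊢
    simp only [Equiv.apply_symm_apply] at this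
    rcases this with ⟨h1, h2⟩ | ⟨h1, h2⟩
    · left
      rw [← h1, ← h2]; simp
    · right
      rw [← h1, ← h2]; simp
  · intro e
    have := ι.len_eq (ι.eEquiv.symm e)
    simp only [Equiv.apply_symm_apply] at this
    exact this.symm

/-- The basic consequence of having valence one. -/
lemma leaf_ends {Δ : MetricGraphModel} {v₀ : Δ.V} {e₀ : Δ.E} (h : Δ.valence v₀ = 1)
    (he : Δ.Incident e₀ v₀) : Δ.src e₀ ≠ Δ.tgt e₀ := by
  intro hcon
  have h1 : Δ.incid e₀ v₀ ≤ Δ.valence v₀ :=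
    Finset.single_le_sum (f := fun e => Δ.incid e v₀) (fun _ _ => Nat.zero_le _) (Finset.mem_univ e₀)
  have h2 : Δ.src e₀ = v₀ := he.elim id (fun h => hcon.trans h)
  have h3 : Δ.tgt e₀ = v₀ := hcon ▸ h2
  unfold incid at h1
  rw [if_pos h2, if_pos h3, h] at h1
  omega

lemma rk_leaf {Δ Δ' : MetricGraphModel} (hl : LeafDeletion Δ Δ') (h : Rk Δ) : Rk Δ' := by
  obtain ⟨v₀, e₀, hval, hinc, fv, fe, hends, hlen⟩ := hl
  have hne := leaf_ends hval hinc
  obtain ⟨w, hw, hw2⟩ : ∃ w, w ≠ v₀ ∧ ∀ v, Δ.Incident e₀ v → v = v₀ ∨ v = w := by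
    rcases hinc with h1 | h1
    · refine ⟨Δ.tgt e₀, fun h => hne (h1.trans h.symm), ?_⟩
      rintro v (h2 | h2)
      · exact Or.inl (h2.symm.trans h1)
      · exact Or.inr h2.symm
    · refine ⟨Δ.src e₀, fun h => hne (h.trans h1.symm), ?_⟩
      rintro v (h2 | h2)
      · exact Or.inr h2.symm
      · exact Or.inl (h2.symm.trans h1)
  refine rk_embed (fun v => (fv v).1) (fun e => (fe e).1) (Subtype.val_injective.comp fv.injective)
    (Subtype.val_injective.comp fe.injective) hends hlen (fv.symm ⟨w, hw⟩) ?_ h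
  intro v hv e he
  have hee : e ≠ e₀ := by
    rintro rfl
    rcases hw2 _ he with h1 | h1
    · exact (fv v).2 h1
    · apply hv
      rw [Equiv.eq_symm_apply]
      exact Subtype.ext h1
  exact ⟨fe.symm ⟨e, hee⟩, by simp⟩

lemma rk_series_aux {Δ Δ' : MetricGraphModel} (v₀ : Δ.V) (e₁ e₂ : Δ.E) (u₁ u₂ : Δ.V)
    (hne : e₁ ≠ e₂) (h1 : ({Δ.src e₁, Δ.tgt e₁} : Set Δ.V) = {v₀, u₁})
    (h2 : ({Δ.src e₂, Δ.tgt e₂} : Set Δ.V) = {v₀, u₂})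
    (fv : Δ'.V ≃ {v : Δ.V // v ≠ v₀}) (ebar : Δ'.E)
    (fe : {e : Δ'.E // e ≠ ebar} ≃ {e : Δ.E // e ≠ e₁ ∧ e ≠ e₂})
    (hlen : Δ'.len ebar = Δ.len e₁ + Δ.len e₂)
    (hs : (fv (Δ'.src ebar)).1 = u₁) (ht : (fv (Δ'.tgt ebar)).1 = u₂)
    (hends : ∀ e : {e : Δ'.E // e ≠ ebar}, sameEndsMap Δ' Δ (fun v => (fv v).1) e.1 (fe e).1)
    (hl : ∀ e : {e : Δ'.E // e ≠ ebar}, Δ.len (fe e).1 = Δ'.len e.1) (h : Rk Δ) : Rk Δ' := by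
  have hx : 0 < Δ.len e₁ ∧ Δ.len e₁ < Δ'.len ebar := by
    have := Δ.len_pos e₁
    have := Δ.len_pos e₂
    constructor <;> linarith
  refine rk_sd (e₀ := ebar) (t := Δ.len e₁) (ht := hx) ?_
  set gv : Option Δ'.V → Δ.V := fun v => match v with
    | none => v₀
    | some v => (fv v).1 with hgv
  set ge : Option Δ'.E → Δ.E := fun e => match e with
    | none => e₂
    | some e => if he : e = ebar then e₁ else (fe ⟨e, he⟩).1 with hge
  have hge0 : ge none = e₂ := rfl
  have hge1 : ge (some ebar) = e₁ := dif_pos rfl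
  have hge2 : ∀ e (he : e ≠ ebar), ge (some e) = (fe ⟨e, he⟩).1 := fun e he => dif_neg he
  refine rk_embed (Δ := Δ) (Δ' := subdiv Δ' ebar (Δ.len e₁) hx) gv ge ?_ ?_ ?_ ?_ none ?_ h
  · rintro (_ | v) (_ | v') hv
    · rfl
    · exact absurd hv.symm (fv v').2
    · exact absurd hv (fv v).2
    · exact congrArg some (fv.injective (Subtype.ext hv))
  · rintro (_ | e) (_ | e') he
    · rfl
    · by_cases h' : e' = ebar
      · subst h'
        rw [hge0, hge1] at he
        exact absurd he.symm hne
      · rw [hge0, hge2 e' h'] at he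
        exact absurd he.symm (fe ⟨e', h'⟩).2.2
    · by_cases h' : e = ebar
      · subst h'
        rw [hge0, hge1] at he
        exact absurd he hne
      · rw [hge0, hge2 e h'] at he
        exact absurd he (fe ⟨e, h'⟩).2.2
    · by_cases h' : e = ebar
      · subst h'
        by_cases h'' : e' = e
        · rw [h'']
        · rw [hge1, hge2 e' h''] at he
          exact absurd he.symm (fe ⟨e', h''⟩).2.1
      · by_cases h'' : e' = ebar
        · subst h''
          rw [hge1, hge2 e h'] at he
          exact absurd he (fe ⟨e, h'⟩).2.1
        · rw [hge2 e h', hge2 e' h''] at he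
          have := fe.injective (Subtype.ext he)
          exact congrArg some (Subtype.mk.inj this)
  · rintro (_ | e)
    · show (v₀ = Δ.src e₂ ∧ (fv (Δ'.tgt ebar)).1 = Δ.tgt e₂) ∨
        (v₀ = Δ.tgt e₂ ∧ (fv (Δ'.tgt ebar)).1 = Δ.src e₂)
      rw [ht]
      rcases Set.pair_eq_pair_iff.mp h2 with ⟨h3, h4⟩ | ⟨h3, h4⟩
      · exact Or.inl ⟨h3.symm, h4.symm⟩
      · exact Or.inr ⟨h4.symm, h3.symm⟩
    · by_cases he : e = ebar
      · subst he
        unfold sameEndsMap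
        rw [hge1, sd_src_some, sd_tgt_self]
        show ((fv (Δ'.src e)).1 = Δ.src e₁ ∧ v₀ = Δ.tgt e₁) ∨ ((fv (Δ'.src e)).1 = Δ.tgt e₁ ∧ v₀ = Δ.src e₁)
        rw [hs]
        rcases Set.pair_eq_pair_iff.mp h1 with ⟨h3, h4⟩ | ⟨h3, h4⟩
        · exact Or.inr ⟨h4.symm, h3.symm⟩
        · exact Or.inl ⟨h3.symm, h4.symm⟩
      · unfold sameEndsMap
        rw [hge2 e he, sd_src_some, sd_tgt_ne he]
        exact hends ⟨e, he⟩
  · rintro (_ | e)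
    · rw [sd_len_none, hge0]; linarith
    · by_cases he : e = ebar
      · subst he
        rw [sd_len_self, hge1]
      · rw [sd_len_ne he, hge2 e he]
        exact hl ⟨e, he⟩
  · intro v hv e he
    by_cases h3 : e = e₁
    · exact ⟨some ebar, hge1.trans h3.symm⟩
    · by_cases h4 : e = e₂
      · exact ⟨none, h4.symm⟩
      · refine ⟨some (fe.symm ⟨e, h3, h4⟩).1, ?_⟩
        rw [hge2 _ (fe.symm ⟨e, h3, h4⟩).2]
        simp

lemma rk_series {Δ Δ' : MetricGraphModel} (hl : SeriesReduction Δ Δ') (h : Rk Δ) : Rk Δ' := by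
  obtain ⟨v₀, e₁, e₂, u₁, u₂, hne, hval, hu₁, hu₂, h1, h2, fv, ebar, fe, hlen, hb, hends, hl⟩ := hl
  rcases Set.pair_eq_pair_iff.mp hb with ⟨h3, h4⟩ | ⟨h3, h4⟩
  · exact rk_series_aux v₀ e₁ e₂ u₁ u₂ hne h1 h2 fv ebar fe hlen h3 h4 hends hl h
  · refine rk_series_aux v₀ e₂ e₁ u₂ u₁ hne.symm h2 h1 fv ebar
      (fe.trans (Equiv.subtypeEquivRight fun e => and_comm)) (by rw [hlen, add_comm]) h3 h4 ?_ ?_ h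
    · intro e; exact hends e
    · intro e; exact hl e

lemma rk_step {Δ Δ' : MetricGraphModel} (hs : ReductionStep Δ Δ') (h : Rk Δ) : Rk Δ' := by
  rcases hs with hs | hs | ⟨⟨ι⟩⟩
  · exact rk_leaf hs h
  · exact rk_series hs h
  · exact rk_iso ι h

lemma loopless_of_sameEnds {Δ Δ' : MetricGraphModel} {f : Δ'.V → Δ.V} {e : Δ'.E} {e' : Δ.E}
    (hf : Function.Injective f) (h : sameEndsMap Δ' Δ f e e') (hl : Δ'.src e ≠ Δ'.tgt e) :
    Δ.src e' ≠ Δ.tgt e' := by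
  intro hcon
  apply hl
  apply hf
  rcases h with ⟨h1, h2⟩ | ⟨h1, h2⟩
  · rw [h1, h2, hcon]
  · rw [h1, h2, hcon]

lemma loopless_step {Δ Δ' : MetricGraphModel} (hs : ReductionStep Δ Δ')
    (h : Δ'.Loopless ∧ Nonempty Δ'.V) : Δ.Loopless ∧ Nonempty Δ.V := by
  obtain ⟨h, ⟨a⟩⟩ := h
  rcases hs with hs | hs | ⟨⟨ι⟩⟩
  · obtain ⟨v₀, e₀, hval, hinc, fv, fe, hends, hlen⟩ := hs
    refine ⟨fun e => ?_, ⟨v₀⟩⟩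
    by_cases he : e = e₀
    · subst he
      exact leaf_ends hval hinc
    · have h1 := hends (fe.symm ⟨e, he⟩)
      rw [Equiv.apply_symm_apply] at h1
      exact loopless_of_sameEnds (Subtype.val_injective.comp fv.injective) h1 (h _)
  · obtain ⟨v₀, e₁, e₂, u₁, u₂, hne, hval, hu₁, hu₂, h1, h2, fv, ebar, fe, hlen, hb, hends, hl⟩ := hs
    refine ⟨fun e => ?_, ⟨v₀⟩⟩
    have hp : ∀ a b u : Δ.V, ({a, b} : Set Δ.V) = {v₀, u} → u ≠ v₀ → a ≠ b := by
      rintro a b u h3 h4 rfl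
      rcases Set.pair_eq_pair_iff.mp h3 with ⟨h5, h6⟩ | ⟨h5, h6⟩
      · exact h4 (h6.symm.trans h5)
      · exact h4 (h5.symm.trans h6)
    by_cases h3 : e = e₁
    · subst h3; exact hp _ _ _ h1 hu₁
    · by_cases h4 : e = e₂
      · subst h4; exact hp _ _ _ h2 hu₂
      · have h5 := hends (fe.symm ⟨e, h3, h4⟩)
        rw [Equiv.apply_symm_apply] at h5
        exact loopless_of_sameEnds (Subtype.val_injective.comp fv.injective) h5 (h _)
  · refine ⟨fun e hcon => ?_, ⟨ι.vEquiv.symm a⟩⟩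
    rcases ι.ends e with ⟨h1, h2⟩ | ⟨h1, h2⟩
    · apply h (ι.eEquiv e)
      rw [← h1, ← h2, hcon]
    · apply h (ι.eEquiv e)
      rw [← h1, ← h2, hcon]

lemma rk_of_trigonal {Γ : MetricGraphModel} (hl : Γ.Loopless) (hne : Nonempty Γ.V)
    (h : Trigonal Γ) : Rk Γ := by
  obtain ⟨Δ, T, hred, hT, φ, h1, h2, h3⟩ := h
  have hΔ : Δ.Loopless ∧ Nonempty Δ.V := by
    refine Relation.ReflTransGen.head_induction_on hred ⟨hl, hne⟩ ?_
    intro a c hac _ hc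
    exact loopless_step hac hc
  have hrk : Rk Δ := rk_of_morphism φ hΔ.1 hΔ.2 hT h1 h2 h3
  unfold IsTropicalModificationOf Reduces at hred
  induction hred with
  | refl => exact hrk
  | tail _ hstep ih => exact rk_step hstep (ih (loopless_step hstep ⟨hl, hne⟩).1 (loopless_step hstep ⟨hl, hne⟩).2)

end Trig
/-! ## Part 7: cuts and the combinatorial core -/

namespace Trig

section Cuts

variable {Δ : MetricGraphModel}

/-- The edges leaving a set of vertices. -/
noncomputable def cut (Δ : MetricGraphModel) (U : Finset Δ.V) : Finset Δ.E :=
  Finset.univ.filter fun e => ¬ (Δ.src e ∈ U ↔ Δ.tgt e ∈ U)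

lemma mem_cut {U : Finset Δ.V} {e : Δ.E} : e ∈ cut Δ U ↔ ¬ (Δ.src e ∈ U ↔ Δ.tgt e ∈ U) := by
  simp [cut]

/-- The contribution of an edge to the degree of a principal divisor on a set. -/
noncomputable def term (U : Finset Δ.V) (σ : Δ.E → ℤ) (e : Δ.E) : ℤ :=
  (if Δ.src e ∈ U then σ e else 0) + (if Δ.tgt e ∈ U then -σ e else 0)

lemma sum_ddiv_on (U : Finset Δ.V) (σ : Δ.E → ℤ) : ∑ v ∈ U, ddiv Δ σ v = ∑ e ∈ cut Δ U, term U σ e := by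
  have h1 : ∑ v ∈ U, ddiv Δ σ v = ∑ e, term U σ e := by
    unfold ddiv
    rw [Finset.sum_comm]
    refine Finset.sum_congr rfl fun e _ => ?_
    rw [Finset.sum_add_distrib, Finset.sum_ite_eq, Finset.sum_ite_eq]
    rfl
  rw [h1]
  symm
  refine Finset.sum_subset (Finset.subset_univ _) fun e _ he => ?_
  rw [mem_cut, not_not] at he
  unfold term
  by_cases h : Δ.src e ∈ U
  · rw [if_pos h, if_pos (he.mp h)]; ring
  · rw [if_neg h, if_neg (fun h' => h (he.mpr h'))]; ring

lemma term_abs {U : Finset Δ.V} {σ : Δ.E → ℤ} {e : Δ.E} (he : e ∈ cut Δ U) :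
    |term U σ e| = |σ e| := by
  rw [mem_cut] at he
  unfold term
  by_cases h : Δ.src e ∈ U <;> by_cases h' : Δ.tgt e ∈ U <;> simp_all

lemma sum_bound {U : Finset Δ.V} {σ : Δ.E → ℤ} (h : ∀ e, |σ e| ≤ 1) {e₁ : Δ.E} (he : e₁ ∈ cut Δ U)
    (h1 : σ e₁ = 0) : |∑ v ∈ U, ddiv Δ σ v| ≤ ((cut Δ U).card : ℤ) - 1 := by
  rw [sum_ddiv_on, ← Finset.add_sum_erase _ _ he]
  have h2 : term U σ e₁ = 0 := by
    rw [← abs_eq_zero, term_abs he, h1, abs_zero]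
  rw [h2, zero_add]
  refine (Finset.abs_sum_le_sum_abs _ _).trans ?_
  have h3 : ∑ e ∈ (cut Δ U).erase e₁, |term U σ e| ≤ ∑ e ∈ (cut Δ U).erase e₁, 1 :=
    Finset.sum_le_sum fun e he => by
      rw [term_abs (Finset.mem_of_mem_erase he)]; exact h e
  refine h3.trans ?_
  rw [Finset.sum_const, nsmul_eq_mul, mul_one]
  have := Finset.card_erase_add_one he
  omega

/-- The edges leaving `U` go strictly down. -/
def Down (U : Finset Δ.V) (g : Δ.V → ℝ) : Prop :=
  ∀ e, (Δ.src e ∈ U → Δ.tgt e ∉ U → g (Δ.tgt e) < g (Δ.src e)) ∧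
    (Δ.tgt e ∈ U → Δ.src e ∉ U → g (Δ.src e) < g (Δ.tgt e))

variable {g : Δ.V → ℝ} {σ : Δ.E → ℤ}
  (hg : ∀ e, g (Δ.tgt e) - g (Δ.src e) = (σ e : ℝ) * Δ.len e)

lemma slope_pos (hg : ∀ e, g (Δ.tgt e) - g (Δ.src e) = (σ e : ℝ) * Δ.len e) (e : Δ.E) :
    0 < σ e ↔ g (Δ.src e) < g (Δ.tgt e) := by
  have h1 := hg e
  have h2 := Δ.len_pos e
  constructor
  · intro h
    have : (0:ℝ) < σ e := by exact_mod_cast h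
    nlinarith [mul_pos this h2]
  · intro h
    by_contra hcon
    have : (σ e : ℝ) ≤ 0 := by exact_mod_cast not_lt.mp hcon
    nlinarith [mul_nonneg (neg_nonneg.mpr this) h2.le]

lemma slope_neg (hg : ∀ e, g (Δ.tgt e) - g (Δ.src e) = (σ e : ℝ) * Δ.len e) (e : Δ.E) :
    σ e < 0 ↔ g (Δ.tgt e) < g (Δ.src e) := by
  have h1 := hg e
  have h2 := Δ.len_pos e
  constructor
  · intro h
    have : (σ e : ℝ) < 0 := by exact_mod_cast h
    nlinarith [mul_pos (neg_pos.mpr this) h2]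
  · intro h
    by_contra hcon
    have : (0 : ℝ) ≤ σ e := by exact_mod_cast not_lt.mp hcon
    nlinarith [mul_nonneg this h2.le]

lemma slope_zero (hg : ∀ e, g (Δ.tgt e) - g (Δ.src e) = (σ e : ℝ) * Δ.len e) (e : Δ.E) :
    σ e = 0 ↔ g (Δ.tgt e) = g (Δ.src e) := by
  have h1 := hg e
  have h2 := Δ.len_pos e
  constructor
  · intro h
    rw [h] at h1
    push_cast at h1
    linarith
  · intro h
    rw [h, sub_self] at h1
    have := mul_eq_zero.mp h1.symm
    rcases this with h3 | h3
    · exact_mod_cast h3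
    · linarith

lemma term_down (hg : ∀ e, g (Δ.tgt e) - g (Δ.src e) = (σ e : ℝ) * Δ.len e) {U : Finset Δ.V}
    (hd : Down U g) {e : Δ.E} (he : e ∈ cut Δ U) : term U σ e ≤ -1 := by
  rw [mem_cut] at he
  unfold term
  by_cases h : Δ.src e ∈ U <;> by_cases h' : Δ.tgt e ∈ U
  · simp_all
  · have := (slope_neg hg e).mpr ((hd e).1 h h')
    rw [if_pos h, if_neg h']; omega
  · have := (slope_pos hg e).mpr ((hd e).2 h' h)
    rw [if_neg h, if_pos h']; omega
  · simp_all

lemma sum_down (hg : ∀ e, g (Δ.tgt e) - g (Δ.src e) = (σ e : ℝ) * Δ.len e) {U : Finset Δ.V}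
    (hd : Down U g) : ∑ v ∈ U, ddiv Δ σ v ≤ -((cut Δ U).card : ℤ) := by
  rw [sum_ddiv_on]
  have : ∑ e ∈ cut Δ U, term U σ e ≤ ∑ e ∈ cut Δ U, (-1 : ℤ) :=
    Finset.sum_le_sum fun e he => term_down hg hd he
  simpa using this

lemma sum_down_strict (hg : ∀ e, g (Δ.tgt e) - g (Δ.src e) = (σ e : ℝ) * Δ.len e) {U : Finset Δ.V}
    (hd : Down U g) {e₁ : Δ.E} (he : e₁ ∈ cut Δ U) (h2 : 1 < |σ e₁|) :
    ∑ v ∈ U, ddiv Δ σ v < -((cut Δ U).card : ℤ) := by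
  rw [sum_ddiv_on]
  have : ∑ e ∈ cut Δ U, term U σ e < ∑ e ∈ cut Δ U, (-1 : ℤ) := by
    refine Finset.sum_lt_sum (fun e he => term_down hg hd he) ⟨e₁, he, ?_⟩
    have h3 := term_down hg hd he
    rw [← term_abs he, abs_of_nonpos (by omega)] at h2
    omega
  simpa using this

lemma ddiv_neg (σ : Δ.E → ℤ) (v : Δ.V) : ddiv Δ (fun e => -σ e) v = - ddiv Δ σ v := by
  unfold ddiv
  rw [← Finset.sum_neg_distrib]
  refine Finset.sum_congr rfl fun e _ => ?_
  split_ifs <;> ring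

lemma ddiv_sub (σ τ : Δ.E → ℤ) (v : Δ.V) :
    ddiv Δ (fun e => σ e - τ e) v = ddiv Δ σ v - ddiv Δ τ v := by
  unfold ddiv
  rw [← Finset.sum_sub_distrib]
  refine Finset.sum_congr rfl fun e _ => ?_
  split_ifs <;> ring

end Cuts

/-- The combinatorial data about cuts of a subdivision of a three edge connected graph. -/
structure Shape (Δ : MetricGraphModel) (E₀ : Type) where
  κV : Δ.V → Option E₀
  κE : Δ.E → E₀
  compat : ∀ e v, Δ.Incident e v → κV v = none ∨ κV v = some (κE e)
  marked : ∃ v, κV v = none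
  cut2 : ∀ U : Finset Δ.V, U.Nonempty → U ≠ Finset.univ → 2 ≤ (cut Δ U).card
  cut3 : ∀ U : Finset Δ.V, (∃ v ∈ U, κV v = none) → (∃ v, v ∉ U ∧ κV v = none) →
    3 ≤ (cut Δ U).card

section LemmaA

variable {Δ : MetricGraphModel} {E₀ : Type} (S : Shape Δ E₀)

/-- Effective of degree three with at most one chip inside each original edge. -/
structure Good (P : Δ.V → ℤ) : Prop where
  nonneg : ∀ v, 0 ≤ P v
  sum : ∑ v, P v = 3
  adm : ∀ e₀, ∑ v ∈ Finset.univ.filter (fun v => S.κV v = some e₀), P v ≤ 1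

lemma sum_le_three {S : Shape Δ E₀} {P : Δ.V → ℤ} (hP : Good S P) (U : Finset Δ.V) :
    ∑ v ∈ U, P v ≤ 3 := by
  rw [← hP.sum]
  exact Finset.sum_le_sum_of_subset_of_nonneg (Finset.subset_univ _) fun v _ _ => hP.nonneg v

lemma mem_of_sum_three {S : Shape Δ E₀} {P : Δ.V → ℤ} (hP : Good S P) {U : Finset Δ.V}
    (h : ∑ v ∈ U, P v = 3) {v : Δ.V} (hv : 0 < P v) : v ∈ U := by
  by_contra hcon
  have := sum_le_three hP (insert v U)
  rw [Finset.sum_insert hcon, h] at this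
  omega

lemma notMem_of_sum_zero {S : Shape Δ E₀} {P : Δ.V → ℤ} (hP : Good S P) {U : Finset Δ.V}
    (h : ∑ v ∈ U, P v = 0) {v : Δ.V} (hv : 0 < P v) : v ∉ U := by
  intro hcon
  have := (Finset.sum_eq_zero_iff_of_nonneg fun v _ => hP.nonneg v).mp h v hcon
  omega

variable {S}
variable {P Q : Δ.V → ℤ} {g : Δ.V → ℝ} {σ : Δ.E → ℤ}

lemma marked_max (hP : Good S P) (hQ : Good S Q)
    (hg : ∀ e, g (Δ.tgt e) - g (Δ.src e) = (σ e : ℝ) * Δ.len e)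
    (hd : ∀ v, Q v = P v + ddiv Δ σ v) : ∃ x, S.κV x = none ∧ ∀ v, g v ≤ g x := by
  obtain ⟨m, hm⟩ := S.marked
  obtain ⟨x, -, hx⟩ := Finset.exists_max_image Finset.univ g ⟨m, Finset.mem_univ m⟩
  have hx : ∀ v, g v ≤ g x := fun v => hx v (Finset.mem_univ v)
  by_contra hcon
  push Not at hcon
  have hun : ∀ v, g v = g x → S.κV v ≠ none := by
    intro v hv h
    obtain ⟨w, hw⟩ := hcon v h
    linarith [hx w]
  obtain ⟨e₀, he₀⟩ := Option.ne_none_iff_exists'.mp (hun x rfl)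
  set U := Finset.univ.filter (fun v => g v = g x ∧ S.κV v = some e₀) with hU
  have hmem : ∀ v, v ∈ U ↔ g v = g x ∧ S.κV v = some e₀ := fun v => by simp [hU]
  have key : ∀ e v w, Δ.Incident e v → Δ.Incident e w → v ∈ U → w ∉ U → g w < g v := by
    intro e v w hv hw h1 h2
    rw [hmem] at h1 h2
    have h3 := (S.compat e v hv).resolve_left (hun v h1.1)
    rw [h1.1]
    refine lt_of_le_of_ne (hx w) fun h4 => h2 ⟨h4, ?_⟩
    rw [(S.compat e w hw).resolve_left (hun w h4), ← h3, h1.2]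
  have hdown : Down U g := fun e =>
    ⟨fun h1 h2 => key e _ _ (Or.inl rfl) (Or.inr rfl) h1 h2,
      fun h1 h2 => key e _ _ (Or.inr rfl) (Or.inl rfl) h1 h2⟩
  have h1 := sum_down hg hdown
  have h2 := S.cut2 U ⟨x, (hmem x).mpr ⟨rfl, he₀⟩⟩ (by
    intro h
    have : m ∈ U := by rw [h]; exact Finset.mem_univ m
    rw [hmem, hm] at this
    exact absurd this.2 (by simp))
  have h3 : ∑ v ∈ U, P v ≤ 1 := by
    refine le_trans (Finset.sum_le_sum_of_subset_of_nonneg ?_ fun v _ _ => hP.nonneg v) (hP.adm e₀)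
    intro v hv
    simpa using ((hmem v).mp hv).2
  have h4 : 0 ≤ ∑ v ∈ U, Q v := Finset.sum_nonneg fun v _ => hQ.nonneg v
  rw [Finset.sum_congr rfl fun v _ => hd v, Finset.sum_add_distrib] at h4
  omega

lemma marked_min (hP : Good S P) (hQ : Good S Q)
    (hg : ∀ e, g (Δ.tgt e) - g (Δ.src e) = (σ e : ℝ) * Δ.len e)
    (hd : ∀ v, Q v = P v + ddiv Δ σ v) : ∃ x, S.κV x = none ∧ ∀ v, g x ≤ g v := by
  obtain ⟨x, h1, h2⟩ := marked_max (g := fun v => - g v) (σ := fun e => - σ e) hQ hP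
    (fun e => by push_cast; linarith [hg e]) (fun v => by rw [ddiv_neg, hd v]; ring)
  exact ⟨x, h1, fun v => by linarith [h2 v]⟩

/-- An upper set for `g`. -/
def Upper (U : Finset Δ.V) (g : Δ.V → ℝ) : Prop := ∀ x ∈ U, ∀ y, y ∉ U → g y < g x

lemma upper_facts (hP : Good S P) (hQ : Good S Q)
    (hg : ∀ e, g (Δ.tgt e) - g (Δ.src e) = (σ e : ℝ) * Δ.len e)
    (hd : ∀ v, Q v = P v + ddiv Δ σ v) {U : Finset Δ.V} (hU : Upper U g) {x y : Δ.V} (hx : x ∈ U)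
    (hy : y ∉ U) : ∑ v ∈ U, P v = 3 ∧ ∑ v ∈ U, Q v = 0 ∧ (cut Δ U).card = 3 ∧
      ∀ e ∈ cut Δ U, |σ e| ≤ 1 := by
  obtain ⟨x₀, hx₀, hx₁⟩ := marked_max hP hQ hg hd
  obtain ⟨y₀, hy₀, hy₁⟩ := marked_min hP hQ hg hd
  have h1 : x₀ ∈ U := by
    by_contra h
    linarith [hU x hx x₀ h, hx₁ x]
  have h2 : y₀ ∉ U := by
    intro h
    linarith [hU y₀ h y hy, hy₁ y]
  have h3 := S.cut3 U ⟨x₀, h1, hx₀⟩ ⟨y₀, h2, hy₀⟩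
  have hdown : Down U g := fun e => ⟨fun h1 h2 => hU _ h1 _ h2, fun h1 h2 => hU _ h1 _ h2⟩
  have h4 := sum_down hg hdown
  have h5 : ∑ v ∈ U, Q v = ∑ v ∈ U, P v + ∑ v ∈ U, ddiv Δ σ v := by
    rw [Finset.sum_congr rfl fun v _ => hd v, Finset.sum_add_distrib]
  have h6 := sum_le_three hP U
  have h7 : 0 ≤ ∑ v ∈ U, Q v := Finset.sum_nonneg fun v _ => hQ.nonneg v
  refine ⟨by omega, by omega, by omega, fun e he => ?_⟩
  by_contra hcon
  have := sum_down_strict hg hdown he (not_le.mp hcon)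
  omega

lemma A_max (hP : Good S P) (hQ : Good S Q)
    (hg : ∀ e, g (Δ.tgt e) - g (Δ.src e) = (σ e : ℝ) * Δ.len e)
    (hd : ∀ v, Q v = P v + ddiv Δ σ v) {v : Δ.V} (hv : 0 < P v) (w : Δ.V) : g w ≤ g v := by
  by_contra hcon
  push Not at hcon
  set U := Finset.univ.filter (fun z => g v < g z) with hU
  have hmem : ∀ z, z ∈ U ↔ g v < g z := fun z => by simp [hU]
  have hup : Upper U g := by
    intro a ha b hb
    rw [hmem] at ha hb
    linarith
  have hvU : v ∉ U := by rw [hmem]; exact lt_irrefl _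
  have h := upper_facts hP hQ hg hd hup ((hmem w).mpr hcon) hvU
  exact hvU (mem_of_sum_three hP h.1 hv)

lemma A_min (hP : Good S P) (hQ : Good S Q)
    (hg : ∀ e, g (Δ.tgt e) - g (Δ.src e) = (σ e : ℝ) * Δ.len e)
    (hd : ∀ v, Q v = P v + ddiv Δ σ v) {v : Δ.V} (hv : 0 < Q v) (w : Δ.V) : g v ≤ g w := by
  have := A_max (g := fun v => - g v) (σ := fun e => - σ e) hQ hP
    (fun e => by push_cast; linarith [hg e]) (fun v => by rw [ddiv_neg, hd v]; ring) hv w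
  linarith

lemma A_slope (hP : Good S P) (hQ : Good S Q)
    (hg : ∀ e, g (Δ.tgt e) - g (Δ.src e) = (σ e : ℝ) * Δ.len e)
    (hd : ∀ v, Q v = P v + ddiv Δ σ v) (e : Δ.E) : |σ e| ≤ 1 := by
  by_cases h0 : σ e = 0
  · rw [h0]; norm_num
  have key : ∀ x y, g y < g x → (Δ.src e = x ∧ Δ.tgt e = y ∨ Δ.src e = y ∧ Δ.tgt e = x) →
      |σ e| ≤ 1 := by
    intro x y hxy hE
    set U := Finset.univ.filter (fun z => g y < g z) with hU
    have hmem : ∀ z, z ∈ U ↔ g y < g z := fun z => by simp [hU]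
    have hup : Upper U g := by
      intro a ha b hb
      rw [hmem] at ha hb
      linarith
    have hy : y ∉ U := by rw [hmem]; exact lt_irrefl _
    have hx : x ∈ U := (hmem x).mpr hxy
    refine (upper_facts hP hQ hg hd hup hx hy).2.2.2 e ?_
    rw [mem_cut]
    rcases hE with ⟨h1, h2⟩ | ⟨h1, h2⟩
    · rw [h1, h2]; tauto
    · rw [h1, h2]; tauto
  rcases lt_or_gt_of_ne h0 with h | h
  · exact key _ _ ((slope_neg hg e).mp h) (Or.inl ⟨rfl, rfl⟩)
  · exact key _ _ ((slope_pos hg e).mp h) (Or.inr ⟨rfl, rfl⟩)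

lemma exists_pos {P : Δ.V → ℤ} (hP : Good S P) : ∃ v, 0 < P v := by
  by_contra hcon
  push Not at hcon
  have := Finset.sum_nonpos fun v (_ : v ∈ Finset.univ) => hcon v
  rw [hP.sum] at this
  omega

lemma A_lt (hP : Good S P) (hQ : Good S Q)
    (hg : ∀ e, g (Δ.tgt e) - g (Δ.src e) = (σ e : ℝ) * Δ.len e)
    (hd : ∀ v, Q v = P v + ddiv Δ σ v) (hne : P ≠ Q) {v w : Δ.V} (hv : 0 < P v) (hw : 0 < Q w) :
    g w < g v := by
  refine lt_of_le_of_ne (A_max hP hQ hg hd hv w) fun h => hne ?_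
  have hc : ∀ z, g z = g v := fun z =>
    le_antisymm (A_max hP hQ hg hd hv z) (h ▸ A_min hP hQ hg hd hw z)
  have h0 : ∀ e, σ e = 0 := fun e => (slope_zero hg e).mpr ((hc _).trans (hc _).symm)
  funext z
  rw [hd z]
  simp [ddiv, h0]

end LemmaA

end Trig
/-! ## Part 8: the tree of divisors -/

namespace Trig

/-- All the data needed to construct the morphism. -/
structure Core (Δ : MetricGraphModel) (E₀ ι : Type) where
  S : Shape Δ E₀
  D : ι → Δ.V → ℤ
  f : ι → Δ.V → ℝ
  s : ι → Δ.E → ℤ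
  base : Δ.V → ℤ
  good : ∀ i, Good S (D i)
  slope : ∀ i e, f i (Δ.tgt e) - f i (Δ.src e) = (s i e : ℝ) * Δ.len e
  div : ∀ i v, D i v = base v + ddiv Δ (s i) v
  cover : ∀ v, ∃ i, 0 < D i v
  conn : Δ.Connected
  loopless : Δ.Loopless
  nontriv : ∃ i j, D i ≠ D j

namespace Core

variable {Δ : MetricGraphModel} {E₀ ι : Type} (C : Core Δ E₀ ι)

/-- The function relating two of the divisors. -/
noncomputable def g (i j : ι) (v : Δ.V) : ℝ := C.f j v - C.f i v

/-- Its slopes. -/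
def t (i j : ι) (e : Δ.E) : ℤ := C.s j e - C.s i e

lemma hg (i j : ι) (e : Δ.E) :
    C.g i j (Δ.tgt e) - C.g i j (Δ.src e) = (C.t i j e : ℝ) * Δ.len e := by
  unfold g t
  push_cast
  linarith [C.slope i e, C.slope j e]

lemma hd (i j : ι) (v : Δ.V) : C.D j v = C.D i v + ddiv Δ (C.t i j) v := by
  have : ddiv Δ (C.t i j) v = ddiv Δ (C.s j) v - ddiv Δ (C.s i) v := ddiv_sub _ _ _
  rw [this, C.div i, C.div j]
  ring

variable {C}

lemma gmax {i : ι} (j : ι) {v : Δ.V} (hv : 0 < C.D i v) (w : Δ.V) : C.g i j w ≤ C.g i j v :=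
  A_max (C.good i) (C.good j) (C.hg i j) (C.hd i j) hv w

lemma gmin (i : ι) {j : ι} {v : Δ.V} (hv : 0 < C.D j v) (w : Δ.V) : C.g i j v ≤ C.g i j w :=
  A_min (C.good i) (C.good j) (C.hg i j) (C.hd i j) hv w

lemma glt {i j : ι} (hne : C.D i ≠ C.D j) {v w : Δ.V} (hv : 0 < C.D i v) (hw : 0 < C.D j w) :
    C.g i j w < C.g i j v :=
  A_lt (C.good i) (C.good j) (C.hg i j) (C.hd i j) hne hv hw

lemma tabs (i j : ι) (e : Δ.E) : |C.t i j e| ≤ 1 :=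
  A_slope (C.good i) (C.good j) (C.hg i j) (C.hd i j) e

lemma gadd (i j k : ι) (v : Δ.V) : C.g i j v = C.g i k v + C.g k j v := by
  unfold g; ring

lemma gconst (i j : ι) {k : ι} {v w : Δ.V} (hv : 0 < C.D k v) (hw : 0 < C.D k w) :
    C.g i j v = C.g i j w := by
  rw [gadd i j k, gadd i j k w, le_antisymm (gmin i hv w) (gmin i hw v),
    le_antisymm (gmax j hw v) (gmax j hv w)]

lemma disj {i j : ι} {v : Δ.V} (hv : 0 < C.D i v) (hw : 0 < C.D j v) : C.D i = C.D j := by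
  by_contra hne
  exact lt_irrefl _ (glt hne hv hw)

end Core

/-- The ends of an edge. -/
def Ends (Δ : MetricGraphModel) (e : Δ.E) (p q : Δ.V) : Prop :=
  (Δ.src e = p ∧ Δ.tgt e = q) ∨ (Δ.src e = q ∧ Δ.tgt e = p)

lemma Ends.symm {Δ : MetricGraphModel} {e : Δ.E} {p q : Δ.V} (h : Ends Δ e p q) : Ends Δ e q p :=
  Or.symm h

namespace Core

variable {Δ : MetricGraphModel} {E₀ ι : Type} {C : Core Δ E₀ ι}

lemma t_zero (i j : ι) {e : Δ.E} {p q : Δ.V} (h : Ends Δ e p q) :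
    C.t i j e = 0 ↔ C.g i j p = C.g i j q := by
  rw [slope_zero (C.hg i j) e]
  rcases h with ⟨h1, h2⟩ | ⟨h1, h2⟩
  · rw [h1, h2]; exact eq_comm
  · rw [h1, h2]

/-- A strictly decreasing edge has slope one. -/
lemma drop (i j : ι) {e : Δ.E} {p q : Δ.V} (h : Ends Δ e p q) (hlt : C.g i j q < C.g i j p) :
    C.g i j p - C.g i j q = Δ.len e := by
  have h1 := C.hg i j e
  have h2 := abs_le.mp (tabs (C := C) i j e)
  have h3 := slope_pos (C.hg i j) e
  have h4 := slope_neg (C.hg i j) e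
  rcases h with ⟨h5, h6⟩ | ⟨h5, h6⟩
  · rw [h5, h6] at h1 h4
    have : C.t i j e = -1 := by have := h4.mpr hlt; omega
    rw [this] at h1
    push_cast at h1
    linarith
  · rw [h5, h6] at h1 h3
    have : C.t i j e = 1 := by have := h3.mpr hlt; omega
    rw [this] at h1
    push_cast at h1
    linarith

lemma sum_supp {i : ι} {U : Finset Δ.V} (h : ∀ v, 0 < C.D i v → v ∈ U) : ∑ v ∈ U, C.D i v = 3 := by
  rw [← (C.good i).sum]
  refine Finset.sum_subset (Finset.subset_univ _) fun v _ hv => ?_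
  by_contra h0
  exact hv (h v (lt_of_le_of_ne ((C.good i).nonneg v) (Ne.symm h0)))

lemma sum_nosupp {i : ι} {U : Finset Δ.V} (h : ∀ v, 0 < C.D i v → v ∉ U) :
    ∑ v ∈ U, C.D i v = 0 := by
  refine Finset.sum_eq_zero fun v hv => ?_
  by_contra h0
  exact h v (lt_of_le_of_ne ((C.good i).nonneg v) (Ne.symm h0)) hv

/-- The key lemma. -/
lemma key {i j : ι} (hne : C.D i ≠ C.D j) {e e₁ : Δ.E} {p q p₁ q₁ : Δ.V} (he : Ends Δ e p q)
    (hp : 0 < C.D i p) (hq : 0 < C.D j q) (he₁ : Ends Δ e₁ p₁ q₁) (hp₁ : 0 < C.D i p₁)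
    (ht : C.t i j e₁ ≠ 0) : 0 < C.D j q₁ := by
  obtain ⟨k, hk⟩ := C.cover q₁
  by_contra hcon
  have hkj : C.D k ≠ C.D j := by
    intro h
    rw [h] at hk
    exact hcon hk
  have hki : C.D i ≠ C.D k := by
    intro h
    apply ht
    rw [t_zero i j he₁]
    rw [← h] at hk
    exact gconst i j hp₁ hk
  have h1 := drop i k he₁ (glt hki hp₁ hk)
  have h2 := drop i j he₁ (lt_of_le_of_ne (gmax j hp₁ q₁)
    fun h => ht ((t_zero i j he₁).mpr h.symm))
  have h3 : C.g k j p₁ = C.g k j q₁ := by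
    have := gadd (C := C) i j k p₁
    have := gadd (C := C) i j k q₁
    linarith
  have h4 : C.t k j e₁ = 0 := (t_zero k j he₁).mpr h3
  rcases (gmin (C := C) i hk q).lt_or_eq with h5 | h5
  · set U := Finset.univ.filter (fun z => C.g i k q₁ < C.g i k z) with hU
    have hmem : ∀ z, z ∈ U ↔ C.g i k q₁ < C.g i k z := fun z => by simp [hU]
    have hup : Upper U (C.g i k) := by
      intro a ha b hb
      rw [hmem] at ha hb
      linarith
    have hq₁ : q₁ ∉ U := by rw [hmem]; exact lt_irrefl _
    have hp₁U : p₁ ∈ U := (hmem _).mpr (glt hki hp₁ hk)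
    have h6 := (upper_facts (C.good i) (C.good k) (C.hg i k) (C.hd i k) hup
      ((hmem q).mpr h5) hq₁).2.2.1
    have h7 : e₁ ∈ cut Δ U := by
      rw [mem_cut]
      rcases he₁ with ⟨h1, h2⟩ | ⟨h1, h2⟩
      · rw [h1, h2]; tauto
      · rw [h1, h2]; tauto
    have h8 := sum_bound (tabs (C := C) k j) h7 h4
    have h9 : ∑ v ∈ U, C.D j v = 3 := sum_supp fun v hv => by
      rw [hmem, gconst i k hv hq]; exact h5
    have h10 : ∑ v ∈ U, C.D k v = 0 := sum_nosupp fun v hv => by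
      rw [hmem, gconst i k hv hk]; exact lt_irrefl _
    rw [Finset.sum_congr rfl fun v _ => C.hd k j v, Finset.sum_add_distrib, h10] at h9
    have h11 := (abs_le.mp h8).2
    omega
  · have h6 := drop i j he (glt hne hp hq)
    have h7 : C.g i k q < C.g i k p := by
      rw [← h5, gconst i k hp hp₁]
      exact glt hki hp₁ hk
    have h8 := drop i k he h7
    have h9 := gadd (C := C) i j k p
    have h10 := gadd (C := C) i j k q
    have h11 := gconst (C := C) k j hp hp₁
    have h12 := glt hkj hk hq
    linarith

end Core

end Trig
/-! ## Part 9: the morphism to the tree -/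

namespace Trig

namespace Core

variable {Δ : MetricGraphModel} {E₀ ι : Type} (C : Core Δ E₀ ι)

/-- The vertices of the tree. -/
abbrev TV : Type := Set.range C.D

/-- The class of a vertex. -/
noncomputable def cl (v : Δ.V) : C.TV := ⟨C.D (C.cover v).choose, Set.mem_range_self _⟩

/-- An edge joining two classes. -/
def Joins (e : Δ.E) (d d' : C.TV) : Prop := ∃ p q, Ends Δ e p q ∧ 0 < d.1 p ∧ 0 < d'.1 q

variable {C}

lemma cl_iff (v : Δ.V) (d : C.TV) : C.cl v = d ↔ 0 < d.1 v := by
  have h := (C.cover v).choose_spec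
  constructor
  · rintro rfl
    exact h
  · obtain ⟨_, i, rfl⟩ := d
    intro h'
    exact Subtype.ext (disj h h')

lemma Joins.symm {e : Δ.E} {d d' : C.TV} (h : C.Joins e d d') : C.Joins e d' d := by
  obtain ⟨p, q, h1, h2, h3⟩ := h
  exact ⟨q, p, h1.symm, h3, h2⟩

lemma joins_self (e : Δ.E) : C.Joins e (C.cl (Δ.src e)) (C.cl (Δ.tgt e)) :=
  ⟨_, _, Or.inl ⟨rfl, rfl⟩, (cl_iff _ _).mp rfl, (cl_iff _ _).mp rfl⟩

lemma joins_iff (e : Δ.E) (d d' : C.TV) :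
    C.Joins e d d' ↔ s(C.cl (Δ.src e), C.cl (Δ.tgt e)) = s(d, d') := by
  rw [Sym2.eq_iff]
  constructor
  · rintro ⟨p, q, ⟨rfl, rfl⟩ | ⟨rfl, rfl⟩, h2, h3⟩
    · exact Or.inl ⟨(cl_iff _ _).mpr h2, (cl_iff _ _).mpr h3⟩
    · exact Or.inr ⟨(cl_iff _ _).mpr h3, (cl_iff _ _).mpr h2⟩
  · rintro (⟨rfl, rfl⟩ | ⟨rfl, rfl⟩)
    · exact joins_self e
    · exact (joins_self e).symm

lemma joins_len {e e' : Δ.E} {d d' : C.TV} (hne : d ≠ d') (h : C.Joins e d d')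
    (h' : C.Joins e' d d') : Δ.len e = Δ.len e' := by
  obtain ⟨_, i, rfl⟩ := d
  obtain ⟨_, j, rfl⟩ := d'
  have hne : C.D i ≠ C.D j := fun h => hne (Subtype.ext h)
  obtain ⟨p, q, h1, h2, h3⟩ := h
  obtain ⟨p', q', h1', h2', h3'⟩ := h'
  have h4 := drop i j h1 (glt hne h2 h3)
  have h5 := drop i j h1' (glt hne h2' h3')
  have h6 := gconst (C := C) i j h2 h2'
  have h7 := gconst (C := C) i j h3 h3'
  linarith

/-- Adjacency of classes. -/
def H (C : Core Δ E₀ ι) : SimpleGraph C.TV where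
  Adj d d' := d ≠ d' ∧ ∃ e, C.Joins e d d'
  symm := ⟨fun d d' h => ⟨h.1.symm, h.2.imp fun _ he => he.symm⟩⟩
  loopless := ⟨fun d h => h.1 rfl⟩

lemma ex_pos (d : C.TV) : ∃ v, 0 < d.1 v := by
  obtain ⟨_, i, rfl⟩ := d
  exact exists_pos (C.good i)

lemma H_pre : C.H.Preconnected := by
  intro d d'
  obtain ⟨v, hv⟩ := ex_pos d
  obtain ⟨w, hw⟩ := ex_pos d'
  obtain ⟨L, hL⟩ := C.conn.2 v w
  have hstep : ∀ e, C.H.Reachable (C.cl (Δ.src e)) (C.cl (Δ.tgt e)) := by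
    intro e
    by_cases h : C.cl (Δ.src e) = C.cl (Δ.tgt e)
    · rw [h]
    · exact SimpleGraph.Adj.reachable ⟨h, e, joins_self e⟩
  have := walk_rel (fun _ => True) (fun u v => C.H.Reachable (C.cl u) (C.cl v))
    (fun u => SimpleGraph.Reachable.refl _) (fun u v w h h' => h.trans h') (fun e _ => hstep e)
    (fun e _ => (hstep e).symm) L v w hL (fun _ _ => trivial)
  rwa [(cl_iff v d).mpr hv, (cl_iff w d').mpr hw] at this

/-- Local analysis at a vertex. -/
lemma joins_slope {i j : ι} (hne : C.D i ≠ C.D j)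
    (hadj : ∃ e, C.Joins e ⟨C.D i, i, rfl⟩ ⟨C.D j, j, rfl⟩) {v w : Δ.V} {e : Δ.E}
    (he : Ends Δ e v w) (hv : 0 < C.D i v) :
    C.Joins e ⟨C.D i, i, rfl⟩ ⟨C.D j, j, rfl⟩ ↔ C.t i j e ≠ 0 := by
  constructor
  · rintro ⟨p, q, h1, h2, h3⟩ h0
    have := (t_zero i j h1).mp h0
    have := glt hne h2 h3
    linarith
  · intro ht
    obtain ⟨e', p, q, h1, h2, h3⟩ := hadj
    exact ⟨v, w, he, hv, key hne h1 h2 h3 he hv ht⟩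

lemma local_deg {i j : ι} (hne : C.D i ≠ C.D j)
    (hadj : ∃ e, C.Joins e ⟨C.D i, i, rfl⟩ ⟨C.D j, j, rfl⟩) {v : Δ.V} (hv : 0 < C.D i v) :
    C.D i v = ∑ e, if C.Joins e ⟨C.D i, i, rfl⟩ ⟨C.D j, j, rfl⟩ then (Δ.incid e v : ℤ) else 0 := by
  have h0 : C.D j v = 0 := by
    by_contra h
    exact hne (disj hv (lt_of_le_of_ne ((C.good j).nonneg v) (Ne.symm h)))
  have h1 := C.hd i j v
  rw [h0] at h1
  have h2 : C.D i v = - ddiv Δ (C.t i j) v := by linarith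
  rw [h2]
  unfold ddiv
  rw [← Finset.sum_neg_distrib]
  refine Finset.sum_congr rfl fun e _ => ?_
  have hll := C.loopless e
  have habs := abs_le.mp (tabs (C := C) i j e)
  unfold incid
  by_cases hs : Δ.src e = v
  · have ht : Δ.tgt e ≠ v := fun h => hll (hs.trans h.symm)
    have hj := joins_slope hne hadj (Or.inl ⟨hs, rfl⟩ : Ends Δ e v (Δ.tgt e)) hv
    have hle : ¬ 0 < C.t i j e := by
      rw [slope_pos (C.hg i j), hs]
      exact not_lt.mpr (gmax j hv _)
    rw [if_pos hs, if_neg ht, if_pos hs, if_neg ht]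
    by_cases hz : C.t i j e = 0
    · rw [if_neg (fun h => hj.mp h hz), hz]; rfl
    · rw [if_pos (hj.mpr hz)]
      push_cast
      omega
  · by_cases ht : Δ.tgt e = v
    · have hj := joins_slope hne hadj (Or.inr ⟨rfl, ht⟩ : Ends Δ e v (Δ.src e)) hv
      have hle : ¬ C.t i j e < 0 := by
        rw [slope_neg (C.hg i j), ht]
        exact not_lt.mpr (gmax j hv _)
      rw [if_neg hs, if_pos ht, if_neg hs, if_pos ht]
      by_cases hz : C.t i j e = 0
      · rw [if_neg (fun h => hj.mp h hz), hz]; rfl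
      · rw [if_pos (hj.mpr hz)]
        push_cast
        omega
    · rw [if_neg hs, if_neg ht, if_neg hs, if_neg ht]
      simp

/-- If an edge leaves a maximum point, there is a chip there. -/
lemma chip_of_drop {i j : ι} {v w : Δ.V} {e : Δ.E} (he : Ends Δ e v w)
    (hmax : ∀ z, C.g i j z ≤ C.g i j v) (ht : C.t i j e ≠ 0) : 0 < C.D i v := by
  have h1 := C.hd i j v
  have h2 := (C.good j).nonneg v
  have h3 : ddiv Δ (C.t i j) v < 0 := by
    have hsrc : ∀ e, Δ.src e = v → C.t i j e ≤ 0 := by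
      intro e h
      by_contra hc
      have := (slope_pos (C.hg i j) e).mp (not_le.mp hc)
      rw [h] at this
      linarith [hmax (Δ.tgt e)]
    have htgt : ∀ e, Δ.tgt e = v → 0 ≤ C.t i j e := by
      intro e h
      by_contra hc
      have := (slope_neg (C.hg i j) e).mp (not_le.mp hc)
      rw [h] at this
      linarith [hmax (Δ.src e)]
    unfold ddiv
    have hs : ∑ e : Δ.E, ((if Δ.src e = v then C.t i j e else 0) +
        (if Δ.tgt e = v then -C.t i j e else 0)) < ∑ e : Δ.E, (0 : ℤ) := by
      refine Finset.sum_lt_sum ?_ ⟨e, Finset.mem_univ e, ?_⟩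
      · intro e _
        have h4 := hsrc e
        have h5 := htgt e
        split_ifs with ha hb hb <;> simp only [ha, hb, true_implies] at h4 h5 <;> omega
      · have h4 := hsrc e
        have h5 := htgt e
        have hll := C.loopless e
        rcases he with ⟨ha, hb⟩ | ⟨ha, hb⟩
        · have hb' : Δ.tgt e ≠ v := fun h => hll (ha.trans h.symm)
          rw [if_pos ha, if_neg hb']
          have := h4 ha
          omega
        · have ha' : Δ.src e ≠ v := fun h => hll (h.trans hb.symm)
          rw [if_neg ha', if_pos hb]
          have := h5 hb
          omega
    simpa using hs
  omega

lemma H_acyclic : C.H.IsAcyclic := by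
  rw [SimpleGraph.isAcyclic_iff_forall_adj_isBridge]
  rintro d d' hadj
  rw [SimpleGraph.isBridge_iff]
  obtain ⟨_, i, rfl⟩ := d
  obtain ⟨_, j, rfl⟩ := d'
  obtain ⟨hne', e, p, q, he, hp, hq⟩ := hadj
  have hne : C.D i ≠ C.D j := fun h => hne' (Subtype.ext h)
  refine fun hreach => ?_
  have hinv : ∀ x : C.TV, (C.H \ SimpleGraph.fromEdgeSet
      {s((⟨C.D i, i, rfl⟩ : C.TV), (⟨C.D j, j, rfl⟩ : C.TV))}).Reachable ⟨C.D i, i, rfl⟩ x →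
      ∀ v, 0 < x.1 v → C.g i j v = C.g i j p := by
    rintro x ⟨W⟩
    have : ∀ (x y : C.TV), (C.H \ SimpleGraph.fromEdgeSet
      {s((⟨C.D i, i, rfl⟩ : C.TV), (⟨C.D j, j, rfl⟩ : C.TV))}).Walk x y →
      (∀ v, 0 < x.1 v → C.g i j v = C.g i j p) → ∀ v, 0 < y.1 v → C.g i j v = C.g i j p := by
      intro x y W
      induction W with
      | nil => exact fun h => h
      | @cons x y z h _ ih =>
        intro hx
        apply ih
        rw [SimpleGraph.sdiff_adj, SimpleGraph.fromEdgeSet_adj] at h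
        obtain ⟨⟨hxy, e₁, v, w, he₁, hv, hw⟩, hnot⟩ := h
        have hmv := hx v hv
        by_cases ht : C.t i j e₁ = 0
        · have h5 := (t_zero i j he₁).mp ht
          intro u hu
          obtain ⟨_, k, rfl⟩ := y
          rw [gconst i j hu hw, ← h5, hmv]
        · exfalso
          have hiv : 0 < C.D i v := chip_of_drop he₁ (fun z => by
            rw [hmv]; exact gmax j hp z) ht
          have hjw := key hne he hp hq he₁ hiv ht
          apply hnot
          refine ⟨?_, hxy⟩
          have e1 : x = ⟨C.D i, i, rfl⟩ := by
            rw [← (cl_iff v x).mpr hv]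
            exact (cl_iff v _).mpr hiv
          have e2 : y = ⟨C.D j, j, rfl⟩ := by
            rw [← (cl_iff w y).mpr hw]
            exact (cl_iff w _).mpr hjw
          rw [e1, e2]
          rfl
    exact this _ _ W fun v hv => gconst i j hv hp
  have h1 := hinv _ hreach q hq
  have h2 := glt hne hp hq
  linarith

/-- Choice of data for an edge of the tree. -/
lemma ex_edge (a : C.H.edgeSet) : ∃ x : C.TV × C.TV × Δ.E, a.1 = s(x.1, x.2.1) ∧ x.1 ≠ x.2.1 ∧
    C.Joins x.2.2 x.1 x.2.1 := by
  obtain ⟨a, ha⟩ := a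
  induction a using Sym2.ind with
  | _ d d' =>
    obtain ⟨hne, e, he⟩ := ha
    exact ⟨(d, d', e), rfl, hne, he⟩

variable (C) [Finite ι]

/-- The tree. -/
noncomputable def T : MetricGraphModel where
  V := C.TV
  E := C.H.edgeSet
  fV := Fintype.ofFinite _
  fE := Fintype.ofFinite _
  dV := Classical.decEq _
  dE := Classical.decEq _
  src a := (ex_edge a).choose.1
  tgt a := (ex_edge a).choose.2.1
  len a := Δ.len (ex_edge a).choose.2.2
  len_pos _ := Δ.len_pos _

variable {C}

lemma T_sym (a : C.T.E) : a.1 = s(C.T.src a, C.T.tgt a) := (ex_edge a).choose_spec.1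

lemma T_ne (a : C.T.E) : C.T.src a ≠ C.T.tgt a := (ex_edge a).choose_spec.2.1

lemma T_joins (a : C.T.E) : C.Joins (ex_edge a).choose.2.2 (C.T.src a) (C.T.tgt a) :=
  (ex_edge a).choose_spec.2.2

lemma T_len (a : C.T.E) {e : Δ.E} (h : C.Joins e (C.T.src a) (C.T.tgt a)) : C.T.len a = Δ.len e :=
  joins_len (T_ne a) (T_joins a) h

lemma T_connected : C.T.Connected := by
  obtain ⟨i, -, -⟩ := C.nontriv
  refine ⟨⟨(⟨C.D i, i, rfl⟩ : C.TV)⟩, fun u v => ?_⟩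
  obtain ⟨W⟩ := H_pre (C := C) u v
  induction W with
  | nil => exact ⟨[], rfl⟩
  | @cons x y z h _ ih =>
    obtain ⟨L, hL⟩ := ih
    have h1 := T_sym (C := C) ⟨s(x, y), h⟩
    rcases Sym2.eq_iff.mp h1 with ⟨h2, h3⟩ | ⟨h2, h3⟩
    · refine ⟨(⟨s(x, y), h⟩, true) :: L, ?_, ?_⟩
      · exact h2.symm
      · have : C.T.dTgt (⟨s(x, y), h⟩, true) = y := h3.symm
        rw [this]; exact hL
    · refine ⟨(⟨s(x, y), h⟩, false) :: L, ?_, ?_⟩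
      · exact h2.symm
      · have : C.T.dTgt (⟨s(x, y), h⟩, false) = y := h3.symm
        rw [this]; exact hL

lemma T_tree : C.T.IsTreeModel := by
  refine ⟨T_connected, ?_⟩
  obtain ⟨i, -, -⟩ := C.nontriv
  haveI : Nonempty C.TV := ⟨⟨C.D i, i, rfl⟩⟩
  have hT : C.H.IsTree := ⟨⟨H_pre⟩, H_acyclic⟩
  letI : Fintype C.TV := Fintype.ofFinite _
  letI : Fintype C.H.edgeSet := Fintype.ofFinite _
  have := hT.card_edgeFinset
  rw [SimpleGraph.edgeFinset_card] at this
  rw [← Nat.card_eq_fintype_card, ← Nat.card_eq_fintype_card] at this ⊢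
  exact this

variable (C) in
/-- The morphism. -/
noncomputable def φ : MGMorphism Δ C.T where
  vMap := C.cl
  eMap e := if h : C.H.Adj (C.cl (Δ.src e)) (C.cl (Δ.tgt e)) then
    Sum.inl ⟨s(C.cl (Δ.src e), C.cl (Δ.tgt e)), h⟩ else Sum.inr (C.cl (Δ.src e))
  mu e := if C.H.Adj (C.cl (Δ.src e)) (C.cl (Δ.tgt e)) then 1 else 0
  mu_zero e := by
    by_cases h : C.H.Adj (C.cl (Δ.src e)) (C.cl (Δ.tgt e))
    · simp [h]
    · simp only [h, if_false, dite_false, true_iff]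
      exact ⟨_, rfl⟩
  contract_ok e v' := by
    by_cases h : C.H.Adj (C.cl (Δ.src e)) (C.cl (Δ.tgt e))
    · simp [h]
    · rw [dif_neg h]
      intro h1
      have h1 := Sum.inr.inj h1
      refine ⟨h1, ?_⟩
      rw [← h1]
      by_contra hne
      exact h ⟨fun h => hne h.symm, e, joins_self e⟩
  edge_ok e e' := by
    by_cases h : C.H.Adj (C.cl (Δ.src e)) (C.cl (Δ.tgt e))
    · rw [dif_pos h]
      intro h1
      have h1 := Sum.inl.inj h1
      have h2 := T_sym e'
      rw [← h1] at h2
      have h3 := Sym2.eq_iff.mp h2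
      rw [h1] at h3
      exact h3
    · rw [dif_neg h]
      simp
  len_ok e e' := by
    by_cases h : C.H.Adj (C.cl (Δ.src e)) (C.cl (Δ.tgt e))
    · rw [dif_pos h, if_pos h]
      intro h1
      have h1 := Sum.inl.inj h1
      have h2 := T_sym e'
      have h3 : C.Joins e (C.T.src e') (C.T.tgt e') := by
        refine (joins_iff e _ _).mpr (Eq.trans ?_ h2)
        rw [← h1]
      rw [T_len e' h3]
      simp
    · rw [dif_neg h]
      simp

lemma eMap_iff (e : Δ.E) (a : C.T.E) :
    C.φ.eMap e = Sum.inl a ↔ C.Joins e (C.T.src a) (C.T.tgt a) := by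
  have h2 := T_sym a
  refine Iff.trans ?_ (joins_iff e _ _).symm
  refine Iff.trans (b := s(C.cl (Δ.src e), C.cl (Δ.tgt e)) = a.1) ?_ (by rw [h2]; rfl)
  show (if h : C.H.Adj (C.cl (Δ.src e)) (C.cl (Δ.tgt e)) then
    Sum.inl ⟨s(C.cl (Δ.src e), C.cl (Δ.tgt e)), h⟩ else Sum.inr (C.cl (Δ.src e))) = Sum.inl a ↔ _
  by_cases h : C.H.Adj (C.cl (Δ.src e)) (C.cl (Δ.tgt e))
  · rw [dif_pos h]
    constructor
    · intro h1
      exact congrArg Subtype.val (Sum.inl.inj h1)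
    · intro h1
      exact congrArg Sum.inl (Subtype.ext h1)
  · rw [dif_neg h]
    constructor
    · intro h1; cases h1
    · intro h1
      exfalso
      apply h
      have := a.2
      rw [← h1] at this
      exact this

lemma mu_one {e : Δ.E} {a : C.T.E} (h : C.φ.eMap e = Sum.inl a) : C.φ.mu e = 1 := by
  have h1 : C.φ.mu e ≠ 0 := by
    intro h0
    obtain ⟨v, hv⟩ := (C.φ.mu_zero e).mp h0
    rw [h] at hv
    cases hv
  change (if C.H.Adj (C.cl (Δ.src e)) (C.cl (Δ.tgt e)) then 1 else 0) ≠ 0 at h1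
  change (if C.H.Adj (C.cl (Δ.src e)) (C.cl (Δ.tgt e)) then 1 else 0) = 1
  split_ifs at h1 ⊢
  · rfl
  · exact absurd rfl h1

lemma local_deg' {d d' : C.TV} (hne : d ≠ d') (hadj : ∃ e, C.Joins e d d') {v : Δ.V}
    (hv : 0 < d.1 v) : d.1 v = ∑ e, if C.Joins e d d' then (Δ.incid e v : ℤ) else 0 := by
  obtain ⟨_, i, rfl⟩ := d
  obtain ⟨_, j, rfl⟩ := d'
  exact local_deg (fun h => hne (Subtype.ext h)) hadj hv

lemma locDeg_eq (v : Δ.V) (a : C.T.E) (ha : C.T.Incident a (C.φ.vMap v)) :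
    (MGMorphism.locDeg C.φ v a : ℤ) = (C.cl v).1 v := by
  have hv : 0 < (C.cl v).1 v := (cl_iff v _).mp rfl
  have h1 : (MGMorphism.locDeg C.φ v a : ℤ) =
      ∑ e, if C.Joins e (C.T.src a) (C.T.tgt a) then (Δ.incid e v : ℤ) else 0 := by
    unfold MGMorphism.locDeg
    push_cast
    refine Finset.sum_congr rfl fun e _ => ?_
    by_cases h : C.φ.eMap e = Sum.inl a
    · rw [if_pos h, if_pos ((eMap_iff e a).mp h), mu_one h]
      push_cast; ring
    · rw [if_neg h, if_neg (fun h' => h ((eMap_iff e a).mpr h'))]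
  rw [h1]
  rcases ha with ha | ha
  · have ha : C.T.src a = C.cl v := ha
    rw [← ha] at hv ⊢
    exact (local_deg' (T_ne a) ⟨_, T_joins a⟩ hv).symm
  · have ha : C.T.tgt a = C.cl v := ha
    rw [← ha] at hv ⊢
    rw [local_deg' (T_ne a).symm ⟨_, (T_joins a).symm⟩ hv]
    refine Finset.sum_congr rfl fun e _ => ?_
    have : C.Joins e (C.T.src a) (C.T.tgt a) ↔ C.Joins e (C.T.tgt a) (C.T.src a) :=
      ⟨fun h => h.symm, fun h => h.symm⟩
    simp only [this]

lemma φ_harmonic : MGMorphism.Harmonic C.φ := by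
  intro v e₁ e₂ h1 h2
  have h3 := locDeg_eq v e₁ h1
  have h4 := locDeg_eq v e₂ h2
  omega

lemma φ_nondeg : MGMorphism.Nondegenerate C.φ := by
  intro v
  have hnt : Nontrivial C.TV := by
    obtain ⟨i, j, hij⟩ := C.nontriv
    exact ⟨⟨C.D i, i, rfl⟩, ⟨C.D j, j, rfl⟩, fun h => hij (congrArg Subtype.val h)⟩
  obtain ⟨d, hd⟩ := (H_pre (C := C)).exists_adj_of_nontrivial (C.cl v)
  have hinc : C.T.Incident ⟨s(C.cl v, d), hd⟩ (C.φ.vMap v) := by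
    have h1 := T_sym (C := C) ⟨s(C.cl v, d), hd⟩
    rcases Sym2.eq_iff.mp h1 with ⟨h2, h3⟩ | ⟨h2, h3⟩
    · exact Or.inl h2.symm
    · exact Or.inr h2.symm
  refine ⟨_, hinc, ?_⟩
  have h1 := locDeg_eq v _ hinc
  have hv : 0 < (C.cl v).1 v := (cl_iff v _).mp rfl
  omega

lemma φ_degree : MGMorphism.HasDegree C.φ 3 := by
  intro a
  have hsum : ∀ d : C.TV, ∑ v, d.1 v = 3 := by
    rintro ⟨_, i, rfl⟩
    exact (C.good i).sum
  have hnn : ∀ (d : C.TV) v, 0 ≤ d.1 v := by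
    rintro ⟨_, i, rfl⟩
    exact (C.good i).nonneg
  have hdis : ∀ v, 0 < (C.T.src a).1 v → 0 < (C.T.tgt a).1 v → False := fun v h1 h2 =>
    T_ne a (((cl_iff v _).mpr h1).symm.trans ((cl_iff v _).mpr h2))
  have h1 : ((∑ e : Δ.E, if C.φ.eMap e = Sum.inl a then C.φ.mu e else 0 : ℕ) : ℤ) = 3 := by
    rw [← hsum (C.T.src a)]
    have h2 : ∀ v, (C.T.src a).1 v = ∑ e, if 0 < (C.T.src a).1 v ∧ C.Joins e (C.T.src a) (C.T.tgt a)
        then (Δ.incid e v : ℤ) else 0 := by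
      intro v
      by_cases hv : 0 < (C.T.src a).1 v
      · simp only [hv, true_and]
        exact local_deg' (T_ne a) ⟨_, T_joins a⟩ hv
      · simp only [hv, false_and, if_false, Finset.sum_const_zero]
        have := hnn (C.T.src a) v
        omega
    rw [Finset.sum_congr rfl fun v _ => h2 v, Finset.sum_comm]
    push_cast
    refine Finset.sum_congr rfl fun e _ => ?_
    by_cases h : C.φ.eMap e = Sum.inl a
    · rw [if_pos h, mu_one h]
      have hj := (eMap_iff e a).mp h
      simp only [hj, and_true]
      obtain ⟨p, q, he, hp, hq⟩ := hj
      have hqn : ¬ 0 < (C.T.src a).1 q := fun h => hdis q h hq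
      have hpq : p ≠ q := fun h => hqn (h ▸ hp)
      rw [Finset.sum_eq_single p]
      · rw [if_pos hp]
        unfold incid
        rcases he with ⟨ha, hb⟩ | ⟨ha, hb⟩
        · rw [ha, hb, if_pos rfl, if_neg hpq.symm]; try rfl
        · rw [ha, hb, if_pos rfl, if_neg hpq.symm]; try rfl
      · intro v _ hvp
        split_ifs with hv
        · have hvq : v ≠ q := fun h => hqn (h ▸ hv)
          unfold incid
          rcases he with ⟨ha, hb⟩ | ⟨ha, hb⟩
          · rw [ha, hb, if_neg (Ne.symm hvp), if_neg (Ne.symm hvq)]; try rfl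
          · rw [ha, hb, if_neg (Ne.symm hvp), if_neg (Ne.symm hvq)]; try rfl
        · rfl
      · intro h; exact absurd (Finset.mem_univ p) h
    · have hj : ¬ C.Joins e (C.T.src a) (C.T.tgt a) := fun h' => h ((eMap_iff e a).mpr h')
      rw [if_neg h]
      simp [hj]
  exact_mod_cast h1

end Core

lemma strictly_of_core {Δ Γ : MetricGraphModel} {E₀ ι : Type} [Finite ι] (C : Core Δ E₀ ι)
    (h : SameMetricGraph Δ Γ) : StrictlyTrigonal Γ :=
  ⟨Δ, C.T, h, Core.T_tree, C.φ, Core.φ_harmonic, Core.φ_nondeg, Core.φ_degree⟩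

end Trig
/-! ## Part 10: subdividing at the chips -/

namespace Trig

lemma isWalk_append {Δ : MetricGraphModel} (L L' : List (Δ.E × Bool)) (u v w : Δ.V)
    (h : IsWalk Δ L u v) (h' : IsWalk Δ L' v w) : IsWalk Δ (L ++ L') u w := by
  induction L generalizing u with
  | nil => cases h; exact h'
  | cons x xs ih => exact ⟨h.1, ih _ h.2⟩

namespace Shape

variable {Δ : MetricGraphModel} {E₀ : Type}

lemma connected (S : Shape Δ E₀) : Δ.Connected := by
  obtain ⟨m, -⟩ := S.marked
  refine ⟨⟨m⟩, fun u v => ?_⟩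
  set U := Finset.univ.filter (fun w => ∃ L, IsWalk Δ L u w) with hU
  have hmem : ∀ w, w ∈ U ↔ ∃ L, IsWalk Δ L u w := fun w => by simp [hU]
  have hu : u ∈ U := (hmem u).mpr ⟨[], rfl⟩
  by_cases hun : U = Finset.univ
  · rw [← hmem, hun]
    exact Finset.mem_univ v
  · exfalso
    have h2 := S.cut2 U ⟨u, hu⟩ hun
    obtain ⟨e, he⟩ := Finset.card_pos.mp (by omega : 0 < (cut Δ U).card)
    rw [mem_cut] at he
    apply he
    constructor
    · intro h
      obtain ⟨L, hL⟩ := (hmem _).mp h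
      exact (hmem _).mpr ⟨_, isWalk_append L [(e, true)] _ _ _ hL ⟨rfl, rfl⟩⟩
    · intro h
      obtain ⟨L, hL⟩ := (hmem _).mp h
      exact (hmem _).mpr ⟨_, isWalk_append L [(e, false)] _ _ _ hL ⟨rfl, rfl⟩⟩

/-- The original edge containing a point. -/
def κ (S : Shape Δ E₀) : Δ.Pt → Option E₀
  | Sum.inl v => S.κV v
  | Sum.inr q => some (S.κE q.1)

lemma sd_cut_le (e₀ : Δ.E) (t : ℝ) (ht : 0 < t ∧ t < Δ.len e₀)
    (U : Finset (subdiv Δ e₀ t ht).V) (U₀ : Finset Δ.V) (hU₀ : ∀ v, v ∈ U₀ ↔ some v ∈ U) :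
    (cut Δ U₀).card ≤ (cut (subdiv Δ e₀ t ht) U).card := by
  refine Finset.card_le_card_of_injOn
    (fun e => if e = e₀ ∧ some e₀ ∉ cut (subdiv Δ e₀ t ht) U then none else some e) ?_ ?_
  · intro e he
    have he := mem_cut.mp (Finset.mem_coe.mp he)
    rw [hU₀, hU₀] at he
    refine Finset.mem_coe.mpr ?_
    dsimp only
    by_cases h : e = e₀
    · subst h
      split_ifs with h1
      · have h1 := h1.2
        rw [mem_cut, not_not, sd_tgt_self, sd_src_some] at h1
        rw [mem_cut, sd_src_none, sd_tgt_none]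
        tauto
      · tauto
    · rw [if_neg (fun h' => h h'.1), mem_cut, sd_src_some, sd_tgt_ne h]
      exact he
  · intro e _ e' _ h
    dsimp only at h
    split_ifs at h with h1 h2 h2
    · exact h1.1.trans h2.1.symm
    · exact Option.some.inj h

lemma sd_cut_both (e₀ : Δ.E) (t : ℝ) (ht : 0 < t ∧ t < Δ.len e₀)
    (U : Finset (subdiv Δ e₀ t ht).V) (h1 : ¬ (some (Δ.src e₀) ∈ U ↔ none ∈ U))
    (h2 : ¬ (none ∈ U ↔ some (Δ.tgt e₀) ∈ U)) : 2 ≤ (cut (subdiv Δ e₀ t ht) U).card := by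
  have h3 : ({some e₀, none} : Finset (Option Δ.E)) ⊆ cut (subdiv Δ e₀ t ht) U := by
    intro e he
    simp only [Finset.mem_insert, Finset.mem_singleton] at he
    rcases he with rfl | rfl
    · rw [mem_cut, sd_src_some, sd_tgt_self]; exact h1
    · rw [mem_cut, sd_src_none, sd_tgt_none]; exact h2
  have h4 := Finset.card_le_card h3
  rwa [Finset.card_pair (by simp)] at h4

/-- The shape of a subdivision. -/
noncomputable def sd (S : Shape Δ E₀) (e₀ : Δ.E) (t : ℝ) (ht : 0 < t ∧ t < Δ.len e₀) :
    Shape (subdiv Δ e₀ t ht) E₀ where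
  κV v := match v with
    | none => some (S.κE e₀)
    | some v => S.κV v
  κE e := match e with
    | none => S.κE e₀
    | some e => S.κE e
  compat := by
    rintro (_ | e) (_ | v) h
    · exact Or.inr rfl
    · rcases h with h | h
      · rw [sd_src_none] at h; cases h
      · rw [sd_tgt_none] at h
        exact S.compat e₀ v (Or.inr (Option.some.inj h))
    · rcases h with h | h
      · rw [sd_src_some] at h; cases h
      · by_cases he : e = e₀
        · subst he; exact Or.inr rfl
        · rw [sd_tgt_ne he] at h; cases h
    · rcases h with h | h
      · rw [sd_src_some] at h
        exact S.compat e v (Or.inl (Option.some.inj h))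
      · by_cases he : e = e₀
        · subst he
          rw [sd_tgt_self] at h; cases h
        · rw [sd_tgt_ne he] at h
          exact S.compat e v (Or.inr (Option.some.inj h))
  marked := by
    obtain ⟨m, hm⟩ := S.marked
    exact ⟨some m, hm⟩
  cut2 := by
    intro U hne hun
    set U₀ : Finset Δ.V := Finset.univ.filter (fun v => (some v : Option Δ.V) ∈ U) with hU₀
    have hmem : ∀ v, v ∈ U₀ ↔ some v ∈ U := fun v => by simp [hU₀]
    by_cases h1 : U₀.Nonempty
    · by_cases h2 : U₀ = Finset.univ
      · have h3 : ∀ v, some v ∈ U := fun v => (hmem v).mp (h2 ▸ Finset.mem_univ v)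
        have h4 : none ∉ U := by
          intro h
          apply hun
          ext v
          simp only [Finset.mem_univ, iff_true]
          rcases v with _ | v
          · exact h
          · exact h3 v
        refine sd_cut_both e₀ t ht U ?_ ?_
        · have := h3 (Δ.src e₀); tauto
        · have := h3 (Δ.tgt e₀); tauto
      · exact (S.cut2 U₀ h1 h2).trans (sd_cut_le e₀ t ht U U₀ hmem)
    · have h3 : ∀ v, some v ∉ U := fun v hv => h1 ⟨v, (hmem v).mpr hv⟩
      have h4 : none ∈ U := by
        obtain ⟨_ | v, hv⟩ := hne
        · exact hv
        · exact absurd hv (h3 v)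
      refine sd_cut_both e₀ t ht U ?_ ?_
      · have := h3 (Δ.src e₀); tauto
      · have := h3 (Δ.tgt e₀); tauto
  cut3 := by
    intro U h1 h2
    set U₀ : Finset Δ.V := Finset.univ.filter (fun v => (some v : Option Δ.V) ∈ U) with hU₀
    have hmem : ∀ v, v ∈ U₀ ↔ some v ∈ U := fun v => by simp [hU₀]
    refine le_trans (S.cut3 U₀ ?_ ?_) (sd_cut_le e₀ t ht U U₀ hmem)
    · obtain ⟨_ | v, hv, hv'⟩ := h1
      · cases hv'
      · exact ⟨v, (hmem v).mpr hv, hv'⟩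
    · obtain ⟨_ | v, hv, hv'⟩ := h2
      · cases hv'
      · exact ⟨v, fun h => hv ((hmem v).mp h), hv'⟩

lemma sd_κ (S : Shape Δ E₀) (e₀ : Δ.E) (t : ℝ) (ht : 0 < t ∧ t < Δ.len e₀)
    (p : (subdiv Δ e₀ t ht).Pt) : (S.sd e₀ t ht).κ p = S.κ (sdPt Δ e₀ t ht p) := by
  rcases p with (_ | v) | ⟨_ | e, s⟩ <;> rfl

end Shape

/-- Divisor data before subdividing. -/
structure Pack (Δ : MetricGraphModel) (E₀ ι : Type) where
  S : Shape Δ E₀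
  D : ι → Divisor Δ
  eff : ∀ i, DivEffective (D i)
  fin : ∀ i, DivFinSupp (D i)
  deg : ∀ i, finsum (D i) = 3
  equiv : ∀ i j, LinEquiv Δ (D i) (D j)
  adm : ∀ i p q e₀, S.κ p = some e₀ → S.κ q = some e₀ → 1 ≤ D i p → 1 ≤ D i q → p = q ∧ D i p = 1
  cover : ∀ v, ∃ i, 0 < D i (Sum.inl v)
  loopless : Δ.Loopless
  nontriv : ∃ i j, D i ≠ D j

namespace Pack

variable {Δ : MetricGraphModel} {E₀ ι : Type}

/-- Subdividing at a chip. -/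
noncomputable def sd (P : Pack Δ E₀ ι) (e₀ : Δ.E) (t : ℝ) (ht : 0 < t ∧ t < Δ.len e₀) (i : ι)
    (hi : P.D i (Sum.inr ⟨e₀, t, ht⟩) ≠ 0) : Pack (subdiv Δ e₀ t ht) E₀ ι where
  S := P.S.sd e₀ t ht
  D i p := P.D i (sdPt Δ e₀ t ht p)
  eff i p := P.eff i _
  fin i := Set.Finite.preimage sdPt_bij.1.injOn (P.fin i)
  deg i := by
    rw [← P.deg i]
    exact finsum_eq_of_bijective (sdPt Δ e₀ t ht) sdPt_bij fun p => rfl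
  equiv i j := sd_linEquiv_down (P.equiv i j)
  adm i p q e h1 h2 h3 h4 := by
    rw [Shape.sd_κ] at h1 h2
    have := P.adm i _ _ e h1 h2 h3 h4
    exact ⟨sdPt_bij.1 this.1, this.2⟩
  cover := by
    rintro (_ | v)
    · exact ⟨i, lt_of_le_of_ne (P.eff i _) (Ne.symm hi)⟩
    · exact P.cover v
  loopless := by
    rintro (_ | e)
    · rw [sd_src_none, sd_tgt_none]; exact (Option.some_ne_none _).symm
    · rw [sd_src_some]
      by_cases h : e = e₀
      · subst h
        rw [sd_tgt_self]; exact Option.some_ne_none _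
      · rw [sd_tgt_ne h]
        exact fun h' => P.loopless e (Option.some.inj h')
  nontriv := by
    obtain ⟨i, j, hij⟩ := P.nontriv
    refine ⟨i, j, fun h => hij ?_⟩
    funext p
    obtain ⟨p', rfl⟩ := (sdPt_bij (Γ := Δ) (e₀ := e₀) (t := t) (ht := ht)).2 p
    exact congrFun h p'

/-- When all chips are at vertices we have a core. -/
lemma core (P : Pack Δ E₀ ι) (h : ∀ i q, P.D i (Sum.inr q) = 0) : Nonempty (Core Δ E₀ ι) := by
  obtain ⟨i₀, j₀, hij⟩ := P.nontriv
  have hex : ∀ i, ∃ fs : (Δ.V → ℝ) × (Δ.E → ℤ),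
      (∀ e, fs.1 (Δ.tgt e) - fs.1 (Δ.src e) = (fs.2 e : ℝ) * Δ.len e) ∧
      ∀ v, P.D i (Sum.inl v) = P.D i₀ (Sum.inl v) + ddiv Δ fs.2 v := by
    intro i
    obtain ⟨F, hF⟩ := P.equiv i i₀
    obtain ⟨σ, h1, h2⟩ := linear_data F fun q => by
      have := hF (Sum.inr q)
      rw [h, h] at this
      linarith
    exact ⟨(F.vVal, σ), h1, fun v => by rw [hF, h2]⟩
  choose fs hfs1 hfs2 using hex
  refine ⟨{ S := P.S, D := fun i v => P.D i (Sum.inl v), f := fun i => (fs i).1,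
            s := fun i => (fs i).2, base := fun v => P.D i₀ (Sum.inl v), good := ?_,
            slope := hfs1, div := hfs2, cover := P.cover, conn := P.S.connected,
            loopless := P.loopless, nontriv := ?_ }⟩
  · intro i
    refine ⟨fun v => P.eff i _, ?_, fun e₀ => ?_⟩
    · rw [← finsum_pt_of_vertex _ (h i)]
      exact P.deg i
    · by_cases hv : ∃ v, P.S.κV v = some e₀ ∧ 1 ≤ P.D i (Sum.inl v)
      · obtain ⟨v, hv1, hv2⟩ := hv
        rw [Finset.sum_eq_single v]
        · exact (P.adm i (Sum.inl v) (Sum.inl v) e₀ hv1 hv1 hv2 hv2).2.le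
        · intro w hw hwv
          by_contra h0
          have h1 : 1 ≤ P.D i (Sum.inl w) := by
            have := P.eff i (Sum.inl w)
            omega
          exact hwv (Sum.inl.inj (P.adm i (Sum.inl w) (Sum.inl v) e₀
            (show P.S.κV w = some e₀ by simpa using hw) hv1 h1 hv2).1)
        · intro hn
          exact absurd (by simpa using hv1) hn
      · push Not at hv
        refine (Finset.sum_nonpos fun v hv' => ?_).trans zero_le_one
        have := hv v (by simpa using hv')
        omega
  · refine ⟨i₀, j₀, fun h' => hij ?_⟩
    funext p
    rcases p with v | q
    · exact congrFun h' v
    · rw [h, h]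

lemma strictly [Finite ι] {Γ : MetricGraphModel} (n : ℕ) : ∀ (Δ : MetricGraphModel) (P : Pack Δ E₀ ι),
    SameMetricGraph Δ Γ →
    {q : Σ e : Δ.E, {t : ℝ // 0 < t ∧ t < Δ.len e} | Sum.inr q ∈ {p | ∃ i, P.D i p ≠ 0}}.ncard ≤ n →
    StrictlyTrigonal Γ := by
  induction n with
  | zero =>
    intro Δ P hs hn
    have hfin : {q : Σ e : Δ.E, {t : ℝ // 0 < t ∧ t < Δ.len e} |
        Sum.inr q ∈ {p | ∃ i, P.D i p ≠ 0}}.Finite := by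
      have : {q : Σ e : Δ.E, {t : ℝ // 0 < t ∧ t < Δ.len e} |
        Sum.inr q ∈ {p | ∃ i, P.D i p ≠ 0}} = ⋃ i, {q | P.D i (Sum.inr q) ≠ 0} := by
        ext q; simp
      rw [this]
      exact Set.finite_iUnion fun i => inr_finite (P.fin i)
    have h0 := (Set.ncard_eq_zero hfin).mp (Nat.le_zero.mp hn)
    obtain ⟨C⟩ := P.core (by
      intro i q
      by_contra hq
      have : q ∈ (∅ : Set (Σ e : Δ.E, {t : ℝ // 0 < t ∧ t < Δ.len e})) := by
        rw [← h0]; exact ⟨i, hq⟩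
      exact this)
    exact strictly_of_core C hs
  | succ n ih =>
    intro Δ P hs hn
    have hfin : {q : Σ e : Δ.E, {t : ℝ // 0 < t ∧ t < Δ.len e} |
        Sum.inr q ∈ {p | ∃ i, P.D i p ≠ 0}}.Finite := by
      have : {q : Σ e : Δ.E, {t : ℝ // 0 < t ∧ t < Δ.len e} |
        Sum.inr q ∈ {p | ∃ i, P.D i p ≠ 0}} = ⋃ i, {q | P.D i (Sum.inr q) ≠ 0} := by
        ext q; simp
      rw [this]
      exact Set.finite_iUnion fun i => inr_finite (P.fin i)
    by_cases hq : ∃ i q, P.D i (Sum.inr q) ≠ 0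
    · obtain ⟨i, ⟨e₀, t, ht⟩, hq⟩ := hq
      have h1 := sd_ncard_lt {p | ∃ i, P.D i p ≠ 0} hfin e₀ t ht ⟨i, hq⟩
      refine ih _ (P.sd e₀ t ht i hq) (Relation.ReflTransGen.head (Or.inl sd_seriesReduction) hs) ?_
      have h2 := h1.2
      have h3 : {q | sdPt Δ e₀ t ht (Sum.inr q) ∈ {p | ∃ i, P.D i p ≠ 0}}.ncard ≤ n := by omega
      exact h3
    · push Not at hq
      obtain ⟨C⟩ := P.core hq
      exact strictly_of_core C hs

end Pack

lemma cut_three {Γ : MetricGraphModel} (h3 : Γ.ThreeEdgeConnected) (U : Finset Γ.V) {u v : Γ.V}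
    (hu : u ∈ U) (hv : v ∉ U) : 3 ≤ (cut Γ U).card := by
  by_contra hcon
  obtain ⟨L, hL, hav⟩ := h3 (cut Γ U) (by omega) u v
  have := walk_rel (fun e => e ∉ cut Γ U) (fun a b => a ∈ U ↔ b ∈ U) (fun _ => Iff.rfl)
    (fun _ _ _ h h' => h.trans h') (fun e he => by rwa [mem_cut, not_not] at he)
    (fun e he => by rw [mem_cut, not_not] at he; exact he.symm) L u v hL hav
  exact hv (this.mp hu)

/-- The shape of a three edge connected graph. -/
def initShape {Γ : MetricGraphModel} (h3 : Γ.ThreeEdgeConnected) (hne : Nonempty Γ.V) :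
    Shape Γ Γ.E where
  κV _ := none
  κE e := e
  compat _ _ _ := Or.inl rfl
  marked := ⟨hne.some, rfl⟩
  cut2 U h1 h2 := by
    obtain ⟨u, hu⟩ := h1
    obtain ⟨v, hv⟩ : ∃ v, v ∉ U := by
      by_contra hcon
      push Not at hcon
      exact h2 (Finset.eq_univ_iff_forall.mpr hcon)
    have := cut_three h3 U hu hv
    omega
  cut3 U h1 h2 := by
    obtain ⟨u, hu, -⟩ := h1
    obtain ⟨v, hv, -⟩ := h2
    exact cut_three h3 U hu hv

/-- Three points, the last two not inside the same edge. -/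
lemma adm_of {Γ : MetricGraphModel} (v : Γ.V) (p q : Γ.Pt) (h : ¬ SameEdgeInterior Γ p q)
    {x y : Γ.Pt} {e : Γ.E} (hx : interiorOf Γ e x) (hy : interiorOf Γ e y)
    (h1 : 1 ≤ unitDiv Γ (Sum.inl v) x + unitDiv Γ p x + unitDiv Γ q x)
    (h2 : 1 ≤ unitDiv Γ (Sum.inl v) y + unitDiv Γ p y + unitDiv Γ q y) :
    x = y ∧ unitDiv Γ (Sum.inl v) x + unitDiv Γ p x + unitDiv Γ q x = 1 := by
  have hv : ∀ z, interiorOf Γ e z → unitDiv Γ (Sum.inl v) z = 0 := by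
    rintro z ⟨s, rfl⟩
    exact unit_ne (by simp)
  have hcase : ∀ z, interiorOf Γ e z →
      1 ≤ unitDiv Γ (Sum.inl v) z + unitDiv Γ p z + unitDiv Γ q z → z = p ∨ z = q := by
    intro z hz h3
    by_contra hcon
    push Not at hcon
    rw [hv z hz, unit_ne hcon.1, unit_ne hcon.2] at h3
    omega
  have hnot : ¬ (interiorOf Γ e p ∧ interiorOf Γ e q) := fun h' => h ⟨e, h'⟩
  rw [hv x hx]
  rcases hcase x hx h1 with rfl | rfl
  · have hq : ¬ interiorOf Γ e q := fun h' => hnot ⟨hx, h'⟩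
    refine ⟨?_, ?_⟩
    · rcases hcase y hy h2 with rfl | rfl
      · rfl
      · exact absurd hy hq
    · have hne : x ≠ q := fun h' => hq (by rw [← h']; exact hx)
      rw [unit_self, unit_ne hne]; rfl
  · have hp : ¬ interiorOf Γ e p := fun h' => hnot ⟨h', hx⟩
    refine ⟨?_, ?_⟩
    · rcases hcase y hy h2 with rfl | rfl
      · exact absurd hy hp
      · rfl
    · have hne : x ≠ p := fun h' => hp (by rw [← h']; exact hx)
      rw [unit_self, unit_ne hne]; rfl

lemma spread {Γ : MetricGraphModel} (p q : Γ.Pt) : ∃ p' q', ¬ SameEdgeInterior Γ p' q' ∧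
    LinEquiv Γ (fun z => unitDiv Γ p z + unitDiv Γ q z) (fun z => unitDiv Γ p' z + unitDiv Γ q' z) := by
  by_cases h : SameEdgeInterior Γ p q
  · have main : ∀ (e : Γ.E) (s t : ℝ) (hs : 0 < s ∧ s < Γ.len e) (ht : 0 < t ∧ t < Γ.len e), s ≤ t →
        ∃ p' q', ¬ SameEdgeInterior Γ p' q' ∧
        LinEquiv Γ (fun z => unitDiv Γ (Sum.inr ⟨e, s, hs⟩) z + unitDiv Γ (Sum.inr ⟨e, t, ht⟩) z)
          (fun z => unitDiv Γ p' z + unitDiv Γ q' z) := by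
      intro e s t hs ht hst
      set m := min s (Γ.len e - t) with hm
      have hm1 : m ≤ s := min_le_left _ _
      have hm2 : m ≤ Γ.len e - t := min_le_right _ _
      have hm0 : 0 ≤ m := le_min hs.1.le (by linarith [ht.2])
      refine ⟨ptOn Γ e (s - m), ptOn Γ e (t + m), ?_, ?_⟩
      · rintro ⟨e', ⟨x, hx⟩, ⟨y, hy⟩⟩
        rcases min_choice s (Γ.len e - t) with h1 | h1
        · rw [hm, h1, sub_self, ptOn_zero] at hx
          cases hx
        · rw [hm, h1, show t + (Γ.len e - t) = Γ.len e by ring, ptOn_len] at hy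
          cases hy
      · have h1 := bump_equiv e (s - m) s t (t + m) (by linarith) (by linarith) hst (by linarith)
          (by linarith) (by ring)
        rw [ptOn_mid e s hs, ptOn_mid e t ht] at h1
        exact LinEquiv.symm h1
    obtain ⟨e, ⟨⟨s, hs⟩, rfl⟩, ⟨⟨t, ht⟩, rfl⟩⟩ := h
    rcases le_total s t with hst | hst
    · exact main e s t hs ht hst
    · obtain ⟨p', q', h1, h2⟩ := main e t s ht hs hst
      refine ⟨p', q', h1, ?_⟩
      simpa only [add_comm] using h2
  · exact ⟨p, q, h, LinEquiv.refl _⟩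

lemma adm_rep {Γ : MetricGraphModel} {D : Divisor Γ} (hD : DivFinSupp D) (hD3 : finsum D = 3)
    (v : Γ.V) (h : ∃ B : Divisor Γ, DivEffective B ∧ DivFinSupp B ∧ 1 ≤ B (Sum.inl v) ∧ LinEquiv Γ D B) :
    ∃ p q : Γ.Pt, ¬ SameEdgeInterior Γ p q ∧
      LinEquiv Γ D (fun z => unitDiv Γ (Sum.inl v) z + unitDiv Γ p z + unitDiv Γ q z) := by
  obtain ⟨B, hB1, hB2, hB3, hB4⟩ := h
  have hB5 : finsum B = 3 := by rw [← hD3]; exact (Trig.LinEquiv.degree hD hB2 hB4).symm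
  have hu := unit_finsupp (Γ := Γ) (Sum.inl v)
  have h1 : DivEffective (Γ := Γ) (fun z => B z - unitDiv Γ (Sum.inl v) z) := by
    intro z
    by_cases hz : z = Sum.inl v
    · subst hz
      simp only [unit_self]; omega
    · simp only [unit_ne hz, sub_zero]
      exact hB1 z
  have h2 : finsum (fun z => B z - unitDiv Γ (Sum.inl v) z) = ((1 : ℕ) : ℤ) + 1 := by
    rw [finsum_sub' hB2 hu, hB5, unit_finsum]; norm_num
  obtain ⟨q, B', hB'1, hB'2, hB'3, -, hB'4⟩ := eff_decomp h1 (finsupp_sub hB2 hu) h2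
  obtain ⟨p, B'', hB''1, hB''2, hB''3, -, hB''4⟩ := eff_decomp (n := 0) hB'1 hB'2 (by simpa using hB'3)
  have hz := eff_zero hB''1 hB''2 (by simpa using hB''3)
  obtain ⟨p', q', h3, h4⟩ := spread p q
  refine ⟨p', q', h3, LinEquiv.trans hB4 ?_⟩
  have h5 := Trig.LinEquiv.add_right h4 (unitDiv Γ (Sum.inl v))
  have h6 : B = fun z => unitDiv Γ p z + unitDiv Γ q z + unitDiv Γ (Sum.inl v) z := by
    funext z
    have e1 := congrFun hB'4 z
    have e2 := congrFun hB''4 z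
    have e3 := congrFun hz z
    try simp only at e1
    try simp only at e2
    try simp only at e3
    omega
  have h7 : (fun z => unitDiv Γ (Sum.inl v) z + unitDiv Γ p' z + unitDiv Γ q' z) =
      fun z => unitDiv Γ p' z + unitDiv Γ q' z + unitDiv Γ (Sum.inl v) z := by
    funext z; ring
  rw [h6, h7]
  exact h5

lemma strictly_of_rk {Γ : MetricGraphModel} (h3 : Γ.ThreeEdgeConnected) (hl : Γ.Loopless)
    (hc : 3 < Fintype.card Γ.V) (h : Rk Γ) : StrictlyTrigonal Γ := by
  have hne : Nonempty Γ.V := h.nonempty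
  obtain ⟨D, hD1, hD2, hD3⟩ := h
  choose p q hpq hequiv using fun v => adm_rep hD1 hD2 v (hD3 (Sum.inl v))
  set B : Γ.V → Divisor Γ := fun v z => unitDiv Γ (Sum.inl v) z + unitDiv Γ (p v) z + unitDiv Γ (q v) z
    with hB
  have heff : ∀ v, DivEffective (B v) := fun v z =>
    add_nonneg (add_nonneg (unit_nonneg _ _) (unit_nonneg _ _)) (unit_nonneg _ _)
  have hfin : ∀ v, DivFinSupp (B v) := fun v =>
    finsupp_add (finsupp_add (unit_finsupp _) (unit_finsupp _)) (unit_finsupp _)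
  have hself : ∀ v, 1 ≤ B v (Sum.inl v) := by
    intro v
    have h1 := unit_nonneg (p v) (Sum.inl v)
    have h2 := unit_nonneg (q v) (Sum.inl v)
    simp only [hB, unit_self]
    omega
  have hdeg : ∀ v, finsum (B v) = 3 := fun v => by
    rw [← hD2]; exact (Trig.LinEquiv.degree hD1 (hfin v) (hequiv v)).symm
  have hκ : ∀ x e₀, (initShape h3 hne).κ x = some e₀ → interiorOf Γ e₀ x := by
    rintro (v | ⟨e, s⟩) e₀ hx
    · cases hx
    · cases hx
      exact ⟨s, rfl⟩
  have P : Pack Γ Γ.E Γ.V :=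
    { S := initShape h3 hne
      D := B
      eff := heff
      fin := hfin
      deg := hdeg
      equiv := fun i j => LinEquiv.trans (LinEquiv.symm (hequiv i)) (hequiv j)
      adm := fun i x y e₀ h1 h2 h3 h4 => adm_of i (p i) (q i) (hpq i) (hκ x e₀ h1) (hκ y e₀ h2) h3 h4
      cover := fun v => ⟨v, by have := hself v; omega⟩
      loopless := hl
      nontriv := by
        by_contra hcon
        push Not at hcon
        obtain ⟨a⟩ := hne
        have h1 : ∀ v, 1 ≤ B a (Sum.inl v) := fun v => by rw [hcon a v]; exact hself v
        have h2 : 0 ≤ finsum (fun z => B a z - vDiv (Γ := Γ) (fun _ => 1) z) := by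
          refine finsum_nonneg fun z => ?_
          rcases z with v | z
          · have := h1 v
            simp only [vDiv]
            omega
          · have := heff a (Sum.inr z)
            simp only [vDiv]
            omega
        rw [finsum_sub' (hfin a) (vDiv_finsupp _), hdeg, vDiv_finsum] at h2
        simp at h2
        omega }
  exact P.strictly _ _ Relation.ReflTransGen.refl le_rfl

end Trig

namespace Trig

lemma StrictlyTrigonal.trigonal {Γ : MetricGraphModel} (h : StrictlyTrigonal Γ) : Trigonal Γ := by
  obtain ⟨Δ, T, hs, hT, φ, h1, h2, h3⟩ := h
  have hr : Relation.ReflTransGen ReductionStep Δ Γ :=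
    Relation.ReflTransGen.mono (r := ModelStep) (p := ReductionStep) (fun _ _ h => Or.inr h) Δ Γ hs
  exact ⟨Δ, T, hr, hT, φ, h1, h2, h3⟩

lemma two_le_card {Γ : MetricGraphModel} (hcan : Γ.IsCanonical) (hll : Γ.Loopless) :
    2 ≤ Fintype.card Γ.V := by
  have hne : Nonempty Γ.V := hcan.1.1
  by_contra hlt
  have hsub : Subsingleton Γ.V := Fintype.card_le_one_iff_subsingleton.mp (by omega)
  obtain ⟨v⟩ := hne
  have hE : IsEmpty Γ.E := ⟨fun e => hll e (Subsingleton.elim _ _)⟩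
  have h := hcan.2 v
  simp [MetricGraphModel.valence] at h

end Trig

/-- Let `Γ` be a loopless `3`-edge connected metric graph
with canonical model `(G₀, l₀)`.  Then `|V(G₀)| ∈ {2,3}` or `Γ` is trigonal,
if and only if `Γ` is divisorially trigonal; moreover if `|V(G₀)| > 3` the
tropical modification may be taken to be `Γ` itself, i.e. `Γ` is strictly
trigonal. -/
theorem loopless_trigonal_iff_divisoriallyTrigonal
    (Γ : MetricGraphModel) (hcan : Γ.IsCanonical) (h3ec : Γ.ThreeEdgeConnected)
    (hll : Γ.Loopless) :
    ((Fintype.card Γ.V = 2 ∨ Fintype.card Γ.V = 3 ∨ Trigonal Γ) ↔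
        DivisoriallyTrigonal Γ)
    ∧ (3 < Fintype.card Γ.V → Trigonal Γ → StrictlyTrigonal Γ) := by
  have hne : Nonempty Γ.V := hcan.1.1
  refine ⟨⟨?_, fun h => ?_⟩, fun hc h =>
    Trig.strictly_of_rk h3ec hll hc (Trig.rk_of_trigonal hll hne h)⟩
  · rintro (h | h | h)
    · exact Trig.rk_iff.mpr (Trig.rk_of_card hll (Or.inl h))
    · exact Trig.rk_iff.mpr (Trig.rk_of_card hll (Or.inr h))
    · exact Trig.rk_iff.mpr (Trig.rk_of_trigonal hll hne h)
  · have h2 := Trig.two_le_card hcan hll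
    by_cases hc : 3 < Fintype.card Γ.V
    · exact Or.inr (Or.inr (Trig.StrictlyTrigonal.trigonal
        (Trig.strictly_of_rk h3ec hll hc (Trig.rk_iff.mp h))))
    · have : Fintype.card Γ.V = 2 ∨ Fintype.card Γ.V = 3 := by omega
      exact this.imp_right Or.inl
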